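/- Let (A, 𝔪) be a two-dimensional excellent normal local domain over an algebraically closed field and let I, J ⊆ A be 𝔪-primary ideals. Then the multi-Rees algebra 𝓡(I,J) = A[It₁, Jt₂] is a Cohen–Macaulay normal domain if and only if both Rees algebras 𝓡(I) = A[It] and 𝓡(J) = A[Jt] are Cohen–Macaulay normal domains. -/

import Mathlib

/-! Auxiliary definitions.

Mathlib does not yet know about excellent rings; the excellence hypothesis of the paper
is used only to guarantee the existence of resolutions and of the normal Hilbert
polynomial, which we hypothesize directly where needed. -/

/-- The length `ℓ_R(M)` of a module, defined as the Krull dimension of its lattice of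
submodules (for modules of finite length this is the usual Jordan–Hölder length). -/
noncomputable def moduleLength (R M : Type*) [CommRing R] [AddCommGroup M] [Module R M] :
    WithBot ℕ∞ :=
  Order.krullDim (Submodule R M)

/-- `x` is integral over the ideal `I`: it satisfies an equation of integral dependence
`x ^ n + c 1 * x ^ (n-1) + ⋯ + c n = 0` with `c i ∈ I ^ i`. -/
def IsIntegralOverIdeal {A : Type*} [CommRing A] (I : Ideal A) (x : A) : Prop :=
  ∃ n : ℕ, 0 < n ∧ ∃ c : ℕ → A, (∀ i, 1 ≤ i → i ≤ n → c i ∈ I ^ i) ∧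
    x ^ n + ∑ i ∈ Finset.Icc 1 n, c i * x ^ (n - i) = 0

/-- The integral closure `J̄` of an ideal `J`: the set of elements integral over `J`
(this set is an ideal; we take the ideal it generates). -/
noncomputable def idealIntegralClosure {A : Type*} [CommRing A] (I : Ideal A) : Ideal A :=
  Ideal.span {x | IsIntegralOverIdeal I x}

/-- An ideal is integrally closed if it contains every element integral over it. -/
def IdealIsIntegrallyClosed {A : Type*} [CommRing A] (I : Ideal A) : Prop :=
  ∀ x, IsIntegralOverIdeal I x → x ∈ I

/-- A Noetherian local ring is Cohen–Macaulay if some regular sequence contained in the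
maximal ideal has length equal to the Krull dimension of the ring. -/
def IsCohenMacaulayLocalRing (R : Type*) [CommRing R] : Prop :=
  IsNoetherianRing R ∧ ∃ h : IsLocalRing R,
    letI := h
    ∃ rs : List R, (∀ x ∈ rs, x ∈ IsLocalRing.maximalIdeal R) ∧
      RingTheory.Sequence.IsRegular R rs ∧ (rs.length : WithBot ℕ∞) = ringKrullDim R

/-- A Noetherian ring is Cohen–Macaulay if all its localizations at primes are
Cohen–Macaulay local rings. -/
def IsCohenMacaulayRing (R : Type*) [CommRing R] : Prop :=
  IsNoetherianRing R ∧ ∀ (P : Ideal R) (hP : P.IsPrime),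
    letI := hP
    IsCohenMacaulayLocalRing (Localization.AtPrime P)

/-- A Cohen–Macaulay normal domain. -/
def IsCMNormalDomain (R : Type*) [CommRing R] : Prop :=
  IsCohenMacaulayRing R ∧ IsDomain R ∧ IsIntegrallyClosed R

/-- The multi-Rees algebra `A[I₁t₁, …, I_r t_r]`: the `A`-subalgebra of the polynomial
ring `A[t₁, …, t_r]` generated by the elements `a·tᵢ` with `a ∈ Iᵢ`. -/
noncomputable def multiReesAlgebra {A : Type*} [CommRing A] {r : ℕ} (I : Fin r → Ideal A) :
    Subalgebra A (MvPolynomial (Fin r) A) :=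
  Algebra.adjoin A (⋃ i, (fun a => MvPolynomial.C a * MvPolynomial.X i) '' ((I i : Set A)))

/-!
Since `A[It][X] ≅ A[It₁, At₂]`, both sides of the equivalence concern bigraded algebras
`A[It₁, Jt₂]`, and it suffices to show that such an algebra is Cohen–Macaulay and normal if and
only if all powers of `I` and of `J` are integrally closed and `I² = (a, a')I`, `J² = (b, b')J` for
general `a, a' ∈ I` and `b, b' ∈ J`.

Normality of the algebra is integral closedness of all the ideals `IᵐJⁿ`. If the algebra is
Cohen–Macaulay at its graded maximal ideal, then systems of parameters made from `at₁`, `bt₂`,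
`a't₁ + b't₂ - a` and `a'` are regular sequences there, and comparing homogeneous components of the
resulting relations gives `IJ = aJ + bI` and `I² = aI + a'I`.

Conversely, a determinant trick and the normality of `A` put the integral closure of `IJ` inside
`aJ + bI`. Hence all `IᵐJⁿ` are integrally closed and have joint reduction number zero, which
makes a sequence of four elements `at₁, bt₂, γ, a't₁ + b't₂ - β` regular; the graded maximal ideal
has height four. Finally, the Cohen–Macaulay property at the graded maximal ideal spreads to every
prime `P` through the largest homogeneous ideal `P*` contained in `P`.
-/

section Depth

universe u

open RingTheory.Sequence IsLocalRing CategoryTheory Abelian Limits Pointwise IsSMulRegular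

/-- `depth M ≥ n` over a local ring: the maximal ideal contains an `M`-regular sequence of
length `n`. -/
def DepthGE (R : Type u) [CommRing R] [IsLocalRing R] (M : Type u) [AddCommGroup M] [Module R M]
    (n : ℕ) : Prop :=
  ∃ rs : List R, rs.length = n ∧ (∀ r ∈ rs, r ∈ maximalIdeal R) ∧ IsRegular M rs

lemma maximalIdeal_smul_top_lt_top {R : Type*} [CommRing R] [IsLocalRing R] (M : Type*)
    [AddCommGroup M] [Module R M] [Module.Finite R M] [Nontrivial M] :
    maximalIdeal R • (⊤ : Submodule R M) < ⊤ :=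
  (Submodule.top_ne_ideal_smul_of_le_jacobson_annihilator
    (maximalIdeal_le_jacobson _)).symm.lt_top

lemma notMem_of_mem_associatedPrimes {R M : Type*} [CommRing R] [IsNoetherianRing R]
    [AddCommGroup M] [Module R M] {p : Ideal R} (hp : p ∈ associatedPrimes R M) {x : R}
    (hreg : IsSMulRegular M x) : x ∉ p := fun hxp ↦ by
  have hx : x ∈ ⋃ q ∈ associatedPrimes R M, (q : Set R) := Set.mem_biUnion hp hxp
  rw [biUnion_associatedPrimes_eq_compl_regular] at hx
  exact hx hreg

lemma exists_mem_associatedPrimes_of_forall_not_isSMulRegular {R M : Type*} [CommRing R]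
    [IsNoetherianRing R] [AddCommGroup M] [Module R M] [Module.Finite R M] {Q : Ideal R}
    (h : ∀ x ∈ Q, ¬ IsSMulRegular M x) : ∃ p ∈ associatedPrimes R M, Q ≤ p := by
  have hQ : (Q : Set R) ⊆ ⋃ p ∈ associatedPrimes R M, (p : Set R) := by
    rw [biUnion_associatedPrimes_eq_compl_regular]
    exact h
  exact (Ideal.subset_union_prime_finite (associatedPrimes.finite R M) (f := id) ⊤ ⊤
    fun p hp _ _ ↦ hp.isPrime).mp hQ

lemma ringKrullDim_quotient_add_one_le_of_mem_of_notMem {R : Type*} [CommRing R] {p q : Ideal R}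
    [p.IsPrime] (hpq : p ≤ q) {x : R} (hxq : x ∈ q) (hxp : x ∉ p) :
    ringKrullDim (R ⧸ q) + 1 ≤ ringKrullDim (R ⧸ p) := by
  have hx : Ideal.Quotient.mk p x ∈ nonZeroDivisors (R ⧸ p) := by
    rwa [mem_nonZeroDivisors_iff_ne_zero, Ne, Ideal.Quotient.eq_zero_iff_mem]
  refine le_trans ?_ (ringKrullDim_quotient_succ_le_of_nonZeroDivisor hx)
  gcongr
  have hspan : ∀ a ∈ Ideal.span {Ideal.Quotient.mk p x}, Ideal.Quotient.factor hpq a = 0 := by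
    intro a ha
    obtain ⟨c, rfl⟩ := Ideal.mem_span_singleton'.mp ha
    rw [map_mul, Ideal.Quotient.factor_mk, Ideal.Quotient.eq_zero_iff_mem.mpr hxq, mul_zero]
  exact ringKrullDim_le_of_surjective (Ideal.Quotient.lift _ (Ideal.Quotient.factor hpq) hspan)
    (Ideal.Quotient.lift_surjective_of_surjective _ hspan (Ideal.Quotient.factor_surjective hpq))

lemma ringKrullDim_le_length_of_maximalIdeal_le_radical {S : Type*} [CommRing S] [IsLocalRing S]
    [IsNoetherianRing S] (xs : List S) (hxs : ∀ x ∈ xs, x ∈ maximalIdeal S)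
    (hrad : maximalIdeal S ≤ (Ideal.ofList xs).radical) : ringKrullDim S ≤ xs.length := by
  classical
  have hmin : maximalIdeal S ∈ (Ideal.span (xs.toFinset : Set S)).minimalPrimes := by
    have hspan : Ideal.span (xs.toFinset : Set S) = Ideal.ofList xs := by
      simp only [Ideal.ofList, List.coe_toFinset]
    rw [hspan]
    exact ⟨⟨inferInstance, Ideal.span_le.mpr hxs⟩,
      fun q ⟨hq, hle⟩ _ ↦ hrad.trans (hq.radical_le_iff.mpr hle)⟩
  rw [← maximalIdeal_height_eq_ringKrullDim]
  exact_mod_cast (Ideal.height_le_card_of_mem_minimalPrimes_span_finset hmin).trans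
    (by exact_mod_cast xs.toFinset_card_le)

variable {R : Type u} [CommRing R] [IsLocalRing R] [IsNoetherianRing R]
  {M : Type u} [AddCommGroup M] [Module R M] [Module.Finite R M]

-- By Rees' theorem `depth M` is read off the vanishing of `Ext(R/𝔪, M)`, which passes to `M/xM`
-- along the long exact sequence of `0 → M → M → M/xM → 0`.
lemma DepthGE.quotSMulTop {n : ℕ} (h : DepthGE R M (n + 1)) {x : R} (hx : x ∈ maximalIdeal R)
    (hreg : IsSMulRegular M x) : DepthGE R (QuotSMulTop x M) n := by
  obtain ⟨rs, hlen, hmem, hrs⟩ := h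
  have := hrs.nontrivial
  have : Nontrivial (QuotSMulTop x M) := nontrivial_quotSMulTop_of_mem_maximalIdeal M hx
  have hsupp : Module.support R (R ⧸ maximalIdeal R) =
      PrimeSpectrum.zeroLocus (maximalIdeal R) := by
    rw [Module.support_eq_zeroLocus, Ideal.annihilator_quotient]
  have hext := ModuleCat.subsingleton_ext_of_exists_isRegular (maximalIdeal R)
    (ModuleCat.of R (R ⧸ maximalIdeal R)) hsupp.subset (ModuleCat.of R M)
    (maximalIdeal_smul_top_lt_top M) rs hmem hrs
  have hreg' : IsSMulRegular (ModuleCat.of R M) x := hreg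
  refine ModuleCat.exists_isRegular_of_exists_subsingleton_ext (maximalIdeal R) n
    (ModuleCat.of R (QuotSMulTop x M)) (maximalIdeal_smul_top_lt_top _)
    (ModuleCat.of R (R ⧸ maximalIdeal R)) hsupp fun i hi ↦ ?_
  have zero₁ := AddCommGrpCat.isZero_of_iff_subsingleton.mpr (hext i (by omega))
  have zero₂ := AddCommGrpCat.isZero_of_iff_subsingleton.mpr (hext (i + 1) (by omega))
  exact AddCommGrpCat.subsingleton_of_isZero <| ShortComplex.Exact.isZero_of_both_zeros
    (Ext.covariant_sequence_exact₃' _ hreg'.smulShortComplex_shortExact i (i + 1) rfl)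
    (zero₁.eq_zero_of_src _) (zero₂.eq_zero_of_tgt _)

-- Otherwise `N = {m | p m = 0}`, which is nonzero, would lie in `xM`, hence in `xN`.
lemma torsionBySet_not_le_smul_top {p : Ideal R} (hp : p ∈ associatedPrimes R M) {x : R}
    (hx : x ∈ maximalIdeal R) (hreg : IsSMulRegular M x) :
    ¬ Submodule.torsionBySet R M p ≤ x • (⊤ : Submodule R M) := fun hle ↦ by
  set N := Submodule.torsionBySet R M (p : Set R) with hN
  have hNle : N ≤ Ideal.span {x} • N := by
    intro y hy
    obtain ⟨z, -, rfl⟩ := hle hy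
    rw [Submodule.ideal_span_singleton_smul]
    refine Submodule.smul_mem_pointwise_smul z x _ ?_
    rw [hN, Submodule.mem_torsionBySet_iff] at hy ⊢
    intro r
    refine hreg (show x • (r : R) • z = x • 0 from ?_)
    rw [smul_zero, smul_comm]
    exact hy r
  have hbot : N = ⊥ := Submodule.eq_bot_of_le_smul_of_le_jacobson_bot _ N
    (IsNoetherian.noetherian _) hNle
    (by rwa [jacobson_eq_maximalIdeal _ bot_ne_top, Ideal.span_singleton_le_iff_mem])
  obtain ⟨hprime, m, hm⟩ := isAssociatedPrime_iff.mp hp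
  have hmN : m ∈ N := by
    rw [hN, Submodule.mem_torsionBySet_iff]
    rintro ⟨r, hr⟩
    rw [hm] at hr
    simpa [Submodule.mem_colon_singleton] using hr
  rw [hbot, Submodule.mem_bot] at hmN
  exact hprime.ne_top (by simp [hm, hmN])

lemma exists_mem_associatedPrimes_quotSMulTop {p : Ideal R} (hp : p ∈ associatedPrimes R M) {x : R}
    (hx : x ∈ maximalIdeal R) (hreg : IsSMulRegular M x) :
    ∃ q ∈ associatedPrimes R (QuotSMulTop x M), p ≤ q ∧ x ∈ q := by
  obtain ⟨y, hyp, hyx⟩ := Set.not_subset.mp (torsionBySet_not_le_smul_top hp hx hreg)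
  obtain ⟨q, hq, hle⟩ := exists_le_isAssociatedPrime_of_isNoetherianRing R
    (Submodule.Quotient.mk y : QuotSMulTop x M) (by rwa [Ne, Submodule.Quotient.mk_eq_zero])
  have hmem : ∀ r : R, r • y ∈ x • (⊤ : Submodule R M) → r ∈ q := fun r hr ↦ hle <| by
    rwa [Submodule.mem_colon_singleton, Submodule.mem_bot, ← Submodule.Quotient.mk_smul,
      Submodule.Quotient.mk_eq_zero]
  refine ⟨q, hq, fun r hr ↦ hmem r ?_, hmem x (Submodule.smul_mem_pointwise_smul y x _ trivial)⟩
  rw [(Submodule.mem_torsionBySet_iff _ _).mp hyp ⟨r, hr⟩]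
  exact zero_mem _

lemma DepthGE.le_ringKrullDim_quotient {n : ℕ} (h : DepthGE R M n) {p : Ideal R}
    (hp : p ∈ associatedPrimes R M) : (n : WithBot ℕ∞) ≤ ringKrullDim (R ⧸ p) := by
  induction n generalizing M p with
  | zero =>
    have := hp.isPrime
    simpa using ringKrullDim_nonneg_of_nontrivial
  | succ n ih =>
    obtain ⟨_ | ⟨x, rs⟩, hlen, hmem, hrs⟩ := id h
    · simp at hlen
    have hx := hmem x (by simp)
    have hreg := ((isRegular_cons_iff _ _ _).mp hrs).1
    obtain ⟨q, hq, hpq, hxq⟩ := exists_mem_associatedPrimes_quotSMulTop hp hx hreg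
    have := hp.isPrime
    calc ((n + 1 : ℕ) : WithBot ℕ∞) = n + 1 := by push_cast; rfl
      _ ≤ ringKrullDim (R ⧸ q) + 1 := by gcongr; exact ih (h.quotSMulTop hx hreg) hq
      _ ≤ ringKrullDim (R ⧸ p) := ringKrullDim_quotient_add_one_le_of_mem_of_notMem hpq hxq
          (notMem_of_mem_associatedPrimes hp hreg)

lemma ringKrullDim_quotient_le_length_of_maximalIdeal_le_radical {p : Ideal R} [p.IsPrime]
    (xs : List R) (hxs : ∀ x ∈ xs, x ∈ maximalIdeal R)
    (hrad : maximalIdeal R ≤ (p ⊔ Ideal.ofList xs).radical) :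
    ringKrullDim (R ⧸ p) ≤ xs.length := by
  have : IsLocalRing (R ⧸ p) := .of_surjective' _ Ideal.Quotient.mk_surjective
  have : IsLocalHom (Ideal.Quotient.mk p) := .of_surjective _ Ideal.Quotient.mk_surjective
  have hmap : (p ⊔ Ideal.ofList xs).map (Ideal.Quotient.mk p) =
      Ideal.ofList (xs.map (Ideal.Quotient.mk p)) := by
    rw [Ideal.map_sup, Ideal.map_quotient_self, bot_sup_eq, Ideal.map_ofList]
  rw [← xs.length_map (f := Ideal.Quotient.mk p)]
  refine ringKrullDim_le_length_of_maximalIdeal_le_radical _ ?_ fun y hy ↦ ?_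
  · rintro y hy
    obtain ⟨z, hz, rfl⟩ := List.mem_map.mp hy
    exact map_nonunit (Ideal.Quotient.mk p) z (hxs z hz)
  · obtain ⟨z, rfl⟩ := Ideal.Quotient.mk_surjective y
    rw [← hmap]
    exact Ideal.map_radical_le _ (Ideal.mem_map_of_mem _ (hrad fun hz ↦ hy (hz.map _)))

lemma DepthGE.isSMulRegular_of_maximalIdeal_le_radical {x : R} {xs : List R}
    (h : DepthGE R M (xs.length + 1)) (hxs : ∀ y ∈ xs, y ∈ maximalIdeal R)
    (hrad : maximalIdeal R ≤ (Module.annihilator R M ⊔ Ideal.ofList (x :: xs)).radical) :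
    IsSMulRegular M x := by
  by_contra hnreg
  have hx : x ∈ ⋃ p ∈ associatedPrimes R M, (p : Set R) := by
    rw [biUnion_associatedPrimes_eq_compl_regular]
    exact hnreg
  obtain ⟨p, hp, hxp⟩ := Set.mem_iUnion₂.mp hx
  have := hp.isPrime
  have hann : Module.annihilator R M ≤ p := by
    rw [← Submodule.annihilator_top]
    exact hp.annihilator_le
  have hle : Module.annihilator R M ⊔ Ideal.ofList (x :: xs) ≤ p ⊔ Ideal.ofList xs := by
    rw [Ideal.ofList_cons, ← sup_assoc]
    exact sup_le_sup_right (sup_le hann (by rwa [Ideal.span_singleton_le_iff_mem])) _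
  have hdim := (h.le_ringKrullDim_quotient hp).trans
    (ringKrullDim_quotient_le_length_of_maximalIdeal_le_radical xs hxs
      (hrad.trans (Ideal.radical_mono hle)))
  exact absurd (by exact_mod_cast hdim) (Nat.not_succ_le_self xs.length)

lemma DepthGE.isRegular_of_maximalIdeal_le_radical {xs : List R} (h : DepthGE R M xs.length)
    (hxs : ∀ x ∈ xs, x ∈ maximalIdeal R)
    (hrad : maximalIdeal R ≤ (Module.annihilator R M ⊔ Ideal.ofList xs).radical) :
    IsRegular M xs := by
  induction xs generalizing M with
  | nil =>
    obtain ⟨_, _, _, hrs⟩ := h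
    have := hrs.nontrivial
    exact IsRegular.nil R M
  | cons x xs ih =>
    have hxs' : ∀ y ∈ xs, y ∈ maximalIdeal R := fun y hy ↦ hxs y (List.mem_cons_of_mem _ hy)
    have hreg := h.isSMulRegular_of_maximalIdeal_le_radical hxs' hrad
    refine .cons hreg (ih (h.quotSMulTop (hxs x (by simp)) hreg) hxs'
      (hrad.trans (Ideal.radical_mono ?_)))
    have hann : Module.annihilator R M ≤ Module.annihilator R (QuotSMulTop x M) :=
      LinearMap.annihilator_le_of_surjective (Submodule.mkQ _) (Submodule.mkQ_surjective _)
    have hx : x ∈ Module.annihilator R (QuotSMulTop x M) := by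
      rw [Module.mem_annihilator]
      intro m
      obtain ⟨m, rfl⟩ := Submodule.Quotient.mk_surjective _ m
      rw [← Submodule.Quotient.mk_smul, Submodule.Quotient.mk_eq_zero]
      exact Submodule.smul_mem_pointwise_smul m x _ trivial
    rw [Ideal.ofList_cons, ← sup_assoc]
    exact sup_le_sup_right (sup_le hann (by rwa [Ideal.span_singleton_le_iff_mem])) _

end Depth

section CohenMacaulay

universe u

open RingTheory.Sequence IsLocalRing Pointwise IsSMulRegular

lemma isWeaklyRegular_self_iff {R : Type*} [CommRing R] (rs : List R) :
    IsWeaklyRegular R rs ↔ ∀ i (h : i < rs.length) (g : R),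
      rs[i] * g ∈ Ideal.ofList (rs.take i) → g ∈ Ideal.ofList (rs.take i) := by
  simp only [isWeaklyRegular_iff, isSMulRegular_quotient_iff_mem_of_smul_mem, smul_eq_mul,
    Ideal.mul_top]

lemma isWeaklyRegular_of_map_of_faithfullyFlat {R S : Type*} [CommRing R] [CommRing S]
    [Algebra R S] [Module.FaithfullyFlat R S] {rs : List R}
    (h : IsWeaklyRegular S (rs.map (algebraMap R S))) : IsWeaklyRegular R rs := by
  rw [isWeaklyRegular_self_iff] at h ⊢
  intro i hi g hg
  have hmap := h i (by simpa using hi) (algebraMap R S g)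
  rw [List.getElem_map, ← map_mul, ← List.map_take, ← Ideal.map_ofList] at hmap
  rw [← Ideal.comap_map_eq_self_of_faithfullyFlat (B := S) (Ideal.ofList (rs.take i))]
  exact hmap (Ideal.mem_map_of_mem _ hg)

lemma height_head_add_length_le_height_last {R : Type*} [CommRing R]
    (l : LTSeries (PrimeSpectrum R)) :
    l.head.asIdeal.height + l.length ≤ l.last.asIdeal.height := by
  have hchain (i : ℕ) (hi : i < l.length + 1) :
      l.head.asIdeal.height + i ≤ (l ⟨i, hi⟩).asIdeal.height := by
    induction i with
    | zero => simp [RelSeries.head]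
    | succ i ih =>
      have hlt : (l ⟨i, by omega⟩).asIdeal < (l ⟨i + 1, hi⟩).asIdeal :=
        l.strictMono (a := ⟨i, by omega⟩) (b := ⟨i + 1, hi⟩) (by simp)
      calc l.head.asIdeal.height + (i + 1 : ℕ) = l.head.asIdeal.height + i + 1 := by
            push_cast; rw [add_assoc]
        _ ≤ (l ⟨i, by omega⟩).asIdeal.height + 1 := by gcongr; exact ih (by omega)
        _ ≤ _ := Ideal.height_add_one_le_of_lt_of_isPrime hlt
  exact hchain l.length (by omega)

lemma height_add_le_ringKrullDim {R : Type*} [CommRing R] (Q : Ideal R) (n : ℕ)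
    (hn : (n : WithBot ℕ∞) ≤ ringKrullDim (R ⧸ Q)) :
    (Q.height : WithBot ℕ∞) + n ≤ ringKrullDim R := by
  rw [ringKrullDim_quotient, Order.le_krullDim_iff] at hn
  obtain ⟨l, rfl⟩ := hn
  let l' : LTSeries (PrimeSpectrum R) := l.map Subtype.val (Subtype.strictMono_coe _)
  have hQ : Q ≤ l'.head.asIdeal := l.head.2
  have hheight : Q.height + l.length ≤ l'.last.asIdeal.height :=
    (add_le_add_left (Ideal.height_mono hQ) _).trans (height_head_add_length_le_height_last l')
  refine le_trans ?_ (Ideal.height_le_ringKrullDim_of_isPrime (I := l'.last.asIdeal))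
  exact_mod_cast hheight

-- The form of `depth R ≤ depth (Q, R) + dim R/Q` needed to localize the Cohen–Macaulay property.
lemma DepthGE.exists_isWeaklyRegular_of_isPrime {R : Type u} [CommRing R] [IsLocalRing R]
    [IsNoetherianRing R] {M : Type u} [AddCommGroup M] [Module R M] [Module.Finite R M] {n : ℕ}
    (h : DepthGE R M n) (Q : Ideal R) [Q.IsPrime] :
    ∃ (rs : List R) (m : ℕ), (∀ r ∈ rs, r ∈ Q) ∧ IsWeaklyRegular M rs ∧
      n ≤ rs.length + m ∧ (m : WithBot ℕ∞) ≤ ringKrullDim (R ⧸ Q) := by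
  induction n generalizing M with
  | zero =>
    exact ⟨[], 0, by simp, by simp, by simp, by simpa using ringKrullDim_nonneg_of_nontrivial⟩
  | succ n ih =>
    by_cases hx : ∃ x ∈ Q, IsSMulRegular M x
    · obtain ⟨x, hxQ, hx⟩ := hx
      obtain ⟨rs, m, hmem, hreg, hlen, hm⟩ :=
        ih (h.quotSMulTop (le_maximalIdeal (Ideal.IsPrime.ne_top inferInstance) hxQ) hx)
      exact ⟨x :: rs, m, List.forall_mem_cons.mpr ⟨hxQ, hmem⟩, .cons hx hreg,
        by rw [List.length_cons]; omega, hm⟩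
    · push Not at hx
      obtain ⟨p, hp, hQp⟩ := exists_mem_associatedPrimes_of_forall_not_isSMulRegular hx
      exact ⟨[], n + 1, by simp, by simp, by simp, (h.le_ringKrullDim_quotient hp).trans
        (ringKrullDim_le_of_surjective _ (Ideal.Quotient.factor_surjective hQp))⟩

/-- `R` is Cohen–Macaulay at the prime `P`: the local ring `R_P` is Cohen–Macaulay. -/
abbrev IsCohenMacaulayAt (R : Type*) [CommRing R] (P : Ideal R) [P.IsPrime] : Prop :=
  IsCohenMacaulayLocalRing (Localization.AtPrime P)

lemma IsCohenMacaulayLocalRing.of_equiv {R S : Type*} [CommRing R] [CommRing S] (e : R ≃+* S)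
    (h : IsCohenMacaulayLocalRing R) : IsCohenMacaulayLocalRing S := by
  obtain ⟨hnoeth, hlocal, rs, hmem, hreg, hlen⟩ := h
  refine ⟨isNoetherianRing_of_ringEquiv R e, e.isLocalRing, rs.map e, ?_, ?_, ?_⟩
  · intro x hx
    obtain ⟨y, hy, rfl⟩ := List.mem_map.mp hx
    exact fun hu ↦ hmem y hy ((MulEquiv.isUnit_map e).mp hu)
  · refine (AddEquiv.isRegular_congr (e := e.toAddEquiv) ?_).mp hreg
    rw [List.forall₂_map_right_iff, List.forall₂_same]
    exact fun x _ y ↦ by simp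
  · rw [List.length_map, hlen, ringKrullDim_eq_of_ringEquiv e]

lemma IsCohenMacaulayLocalRing.of_isWeaklyRegular {R : Type*} [CommRing R] [IsLocalRing R]
    [IsNoetherianRing R] (rs : List R) (hmem : ∀ x ∈ rs, x ∈ maximalIdeal R)
    (hreg : IsWeaklyRegular R rs) (hdim : ringKrullDim R ≤ rs.length) :
    IsCohenMacaulayLocalRing R := by
  have hreg' : IsRegular R rs := .of_isWeaklyRegular_of_mem_maximalIdeal R hmem hreg
  refine ⟨inferInstance, inferInstance, rs, hmem, hreg', le_antisymm ?_ hdim⟩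
  have : Nontrivial (R ⧸ Ideal.ofList rs) :=
    Ideal.Quotient.nontrivial_iff.mpr fun h ↦ hreg'.2 (by rw [h]; simp)
  rw [← ringKrullDim_add_length_eq_ringKrullDim_of_isRegular rs hreg']
  exact le_add_of_nonneg_left ringKrullDim_nonneg_of_nontrivial

lemma IsCohenMacaulayLocalRing.isWeaklyRegular_of_maximalIdeal_le_radical {R : Type*} [CommRing R]
    [IsLocalRing R] (h : IsCohenMacaulayLocalRing R) {xs : List R}
    (hlen : (xs.length : WithBot ℕ∞) = ringKrullDim R) (hmem : ∀ x ∈ xs, x ∈ maximalIdeal R)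
    (hrad : maximalIdeal R ≤ (Ideal.ofList xs).radical) : IsWeaklyRegular R xs := by
  obtain ⟨hnoeth, _, rs, hrsmem, hrs, hrslen⟩ := h
  have hdepth : DepthGE R R xs.length :=
    ⟨rs, by rw [← hrslen] at hlen; exact_mod_cast hlen.symm, hrsmem, hrs⟩
  exact (hdepth.isRegular_of_maximalIdeal_le_radical hmem
    (hrad.trans (Ideal.radical_mono le_sup_right))).toIsWeaklyRegular

lemma isCohenMacaulayAt_of_isWeaklyRegular {R : Type*} [CommRing R] [IsNoetherianRing R]
    {P : Ideal R} [P.IsPrime] (rs : List R) (hmem : ∀ r ∈ rs, r ∈ P) (hreg : IsWeaklyRegular R rs)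
    (hheight : P.height ≤ rs.length) : IsCohenMacaulayAt R P := by
  refine .of_isWeaklyRegular (rs.map (algebraMap R _)) ?_
    (hreg.of_isLocalization _ P.primeCompl) ?_
  · intro x hx
    obtain ⟨y, hy, rfl⟩ := List.mem_map.mp hx
    exact (IsLocalization.AtPrime.to_map_mem_maximal_iff _ P y).mpr (hmem y hy)
  · rw [IsLocalization.AtPrime.ringKrullDim_eq_height P, List.length_map]
    exact_mod_cast hheight

lemma IsCohenMacaulayLocalRing.isCohenMacaulayAt {R : Type*} [CommRing R]
    (h : IsCohenMacaulayLocalRing R) (Q : Ideal R) [Q.IsPrime] : IsCohenMacaulayAt R Q := by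
  obtain ⟨hnoeth, hlocal, rs, hmem, hreg, hdim⟩ := h
  obtain ⟨ss, m, hssQ, hss, hlen, hm⟩ :=
    DepthGE.exists_isWeaklyRegular_of_isPrime (M := R) ⟨rs, rfl, hmem, hreg⟩ Q
  refine isCohenMacaulayAt_of_isWeaklyRegular ss hssQ hss ?_
  have hheight := height_add_le_ringKrullDim Q m hm
  rw [← hdim] at hheight
  have hle : Q.height + m ≤ ss.length + m :=
    (show Q.height + m ≤ rs.length by exact_mod_cast hheight).trans (by exact_mod_cast hlen)
  exact (ENat.add_le_add_iff_right (ENat.natCast_ne_top m)).mp hle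

lemma IsCohenMacaulayAt.mono {R : Type*} [CommRing R] {N Q : Ideal R} [N.IsPrime] [Q.IsPrime]
    (hQN : Q ≤ N) (h : IsCohenMacaulayAt R N) : IsCohenMacaulayAt R Q := by
  have hdisj : Disjoint (N.primeCompl : Set R) (Q : Set R) :=
    Set.disjoint_left.mpr fun x hx hxQ ↦ hx (hQN hxQ)
  set Q' := Q.map (algebraMap R (Localization.AtPrime N))
  have : Q'.IsPrime :=
    IsLocalization.isPrime_of_isPrime_disjoint N.primeCompl _ Q inferInstance hdisj
  have hcomap : Q'.comap (algebraMap R _) = Q :=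
    IsLocalization.under_map_of_isPrime_disjoint N.primeCompl _ inferInstance hdisj
  have hloc : IsLocalization.AtPrime (Localization.AtPrime Q') (Q'.comap (algebraMap R _)) :=
    IsLocalization.isLocalization_isLocalization_atPrime_isLocalization N.primeCompl _ _
  simp only [hcomap] at hloc
  exact (h.isCohenMacaulayAt Q').of_equiv
    (IsLocalization.algEquiv Q.primeCompl _ (Localization.AtPrime Q)).toRingEquiv

end CohenMacaulay

section Polynomial

universe u

open RingTheory.Sequence IsLocalRing Polynomial

lemma isSMulRegular_quotient_map_C {D : Type*} [CommRing D] (K : Ideal D) {g : D[X]} {i : ℕ}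
    (hi : IsUnit (g.coeff i)) {f : D[X]} (hf : g * f ∈ K.map C) : f ∈ K.map C := by
  have hmem (f : D[X]) : f ∈ K.map C ↔ f.map (Ideal.Quotient.mk K) = 0 := by
    simp only [Ideal.mem_map_C_iff, Polynomial.ext_iff, coeff_map, coeff_zero,
      Ideal.Quotient.eq_zero_iff_mem]
  rw [hmem] at hf ⊢
  rw [Polynomial.map_mul] at hf
  refine (mem_nonZeroDivisors_iff.mp ?_).1 _ hf
  -- McCoy: a zero divisor in `(D/K)[X]` is killed by a nonzero constant.
  by_contra hzd
  obtain ⟨a, ha, hag⟩ := Polynomial.notMem_nonZeroDivisors_iff.mp hzd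
  have hcoeff := congrArg (fun f ↦ f.coeff i) hag
  simp only [coeff_smul, coeff_map, coeff_zero, smul_eq_mul] at hcoeff
  exact ha ((hi.map (Ideal.Quotient.mk K)).mul_left_eq_zero.mp hcoeff)

lemma IsCohenMacaulayLocalRing.isCohenMacaulayAt_polynomial {D : Type*} [CommRing D]
    [IsLocalRing D] (h : IsCohenMacaulayLocalRing D) (P : Ideal D[X]) [P.IsPrime]
    (hP : P.comap C = maximalIdeal D) : IsCohenMacaulayAt D[X] P := by
  obtain ⟨hnoeth, _, rs, hrsmem, hrs, hdim⟩ := h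
  have hreg : IsWeaklyRegular D[X] (rs.map C) := hrs.1.of_flat
  have hmem : ∀ r ∈ rs.map C, r ∈ P := by
    intro x hx
    obtain ⟨y, hy, rfl⟩ := List.mem_map.mp hx
    exact (hP ▸ hrsmem y hy :)
  have hle : (maximalIdeal D).map C ≤ P := hP ▸ Ideal.map_comap_le
  by_cases hPle : P ≤ (maximalIdeal D).map C
  · refine isCohenMacaulayAt_of_isWeaklyRegular _ hmem hreg ?_
    rw [le_antisymm hPle hle, Polynomial.height_map_C, List.length_map]
    exact_mod_cast (maximalIdeal_height_eq_ringKrullDim.trans hdim.symm).le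
  · obtain ⟨g, hgP, hg⟩ := Set.not_subset.mp hPle
    obtain ⟨i, hi⟩ : ∃ i, g.coeff i ∉ maximalIdeal D := by
      by_contra! hall
      exact hg (Ideal.mem_map_C_iff.mpr hall)
    refine isCohenMacaulayAt_of_isWeaklyRegular (rs.map C ++ [g]) ?_ ?_ ?_
    · simpa only [List.forall_mem_append, List.forall_mem_singleton] using ⟨hmem, hgP⟩
    · rw [isWeaklyRegular_append_iff, isWeaklyRegular_singleton_iff,
        isSMulRegular_quotient_iff_mem_of_smul_mem]
      refine ⟨hreg, fun f ↦ ?_⟩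
      rw [smul_eq_mul, Ideal.mul_top, ← Ideal.map_ofList]
      exact isSMulRegular_quotient_map_C _ (by simpa using hi)
    · have hheight := Ideal.height_le_ringKrullDim_of_isPrime (I := P)
      rw [Polynomial.ringKrullDim_of_isNoetherianRing, ← hdim] at hheight
      rw [List.length_append, List.length_map, List.length_singleton]
      exact_mod_cast hheight

lemma exists_list_maximalIdeal_le_radical (D : Type*) [CommRing D] [IsLocalRing D]
    [IsNoetherianRing D] : ∃ xs : List D, (xs.length : WithBot ℕ∞) = ringKrullDim D ∧
      (∀ x ∈ xs, x ∈ maximalIdeal D) ∧ maximalIdeal D ≤ (Ideal.ofList xs).radical := by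
  obtain ⟨s, hs, hcard⟩ := (maximalIdeal D).exists_finset_card_eq_height_of_isNoetherianRing
  have hspan : Ideal.ofList s.toList = Ideal.span (s : Set D) := by
    simp only [Ideal.ofList, Finset.mem_toList, Finset.setOfPred_mem]
  refine ⟨s.toList, ?_, ?_, ?_⟩
  · rw [← maximalIdeal_height_eq_ringKrullDim, ← hcard, Finset.length_toList]
    rfl
  · exact fun x hx ↦ hs.1.2 (Ideal.subset_span (Finset.mem_toList.mp hx))
  · rw [hspan, Ideal.radical_eq_sInf]
    refine le_sInf fun q ⟨hle, hq⟩ ↦ hs.2 ⟨hq, hle⟩ (le_maximalIdeal hq.ne_top)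

-- A system of parameters of `D` stays one in the flat extension `D[X]_{𝔪D[X]}`, where it is
-- regular.
lemma IsCohenMacaulayAt.isCohenMacaulayLocalRing_of_polynomial {D : Type*} [CommRing D]
    [IsLocalRing D] [IsNoetherianRing D] (h : IsCohenMacaulayAt D[X] ((maximalIdeal D).map C)) :
    IsCohenMacaulayLocalRing D := by
  set P := (maximalIdeal D).map (C : D →+* D[X]) with hP
  let S := Localization.AtPrime P
  have hmax : (maximalIdeal D).map (algebraMap D S) = maximalIdeal S := by
    rw [IsScalarTower.algebraMap_eq D D[X] S, ← Ideal.map_map, Polynomial.algebraMap_eq, ← hP]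
    exact Localization.AtPrime.map_eq_maximalIdeal
  have : Module.Flat D[X] S := IsLocalization.flat S P.primeCompl
  have : Module.Flat D S := Module.Flat.trans D D[X] S
  have : IsLocalHom (algebraMap D S) := ((local_hom_TFAE (algebraMap D S)).out 0 2 :).mpr hmax.le
  have : Module.FaithfullyFlat D S := .of_flat_of_isLocalHom
  obtain ⟨xs, hlen, hmem, hrad⟩ := exists_list_maximalIdeal_le_radical D
  refine .of_isWeaklyRegular xs hmem (isWeaklyRegular_of_map_of_faithfullyFlat (S := S)
    (h.isWeaklyRegular_of_maximalIdeal_le_radical ?_ ?_ ?_)) hlen.ge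
  · rw [List.length_map, hlen, IsLocalization.AtPrime.ringKrullDim_eq_height P S, hP,
      Polynomial.height_map_C, maximalIdeal_height_eq_ringKrullDim]
  · intro x hx
    obtain ⟨y, hy, rfl⟩ := List.mem_map.mp hx
    exact hmax ▸ Ideal.mem_map_of_mem _ (hmem y hy)
  · rw [← hmax, ← Ideal.map_ofList]
    exact (Ideal.map_mono hrad).trans (Ideal.map_radical_le _)

end Polynomial

section Localization

open IsLocalRing Polynomial

lemma isCohenMacaulayAt_iff_of_isLocalization {R S : Type*} [CommRing R] [CommRing S] [Algebra R S]
    (M : Submonoid R) [IsLocalization M S] {Q : Ideal S} [Q.IsPrime] {P : Ideal R} [P.IsPrime]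
    (hP : Q.comap (algebraMap R S) = P) : IsCohenMacaulayAt S Q ↔ IsCohenMacaulayAt R P := by
  subst hP
  have : IsLocalization.AtPrime (Localization.AtPrime Q) (Q.comap (algebraMap R S)) :=
    IsLocalization.isLocalization_isLocalization_atPrime_isLocalization M _ _
  let e := (IsLocalization.algEquiv (Q.comap (algebraMap R S)).primeCompl
    (Localization.AtPrime Q) (Localization.AtPrime (Q.comap (algebraMap R S)))).toRingEquiv
  exact ⟨fun h ↦ h.of_equiv e, fun h ↦ h.of_equiv e.symm⟩

section Dominating

variable {R S : Type*} [CommRing R] [CommRing S] {φ : R →+* S} {u : R}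

lemma isLocalization_away_of_injective (hφ : Function.Injective φ)
    (hu : ∀ s, ∃ n r, φ r = φ u ^ n * s) (T : Type*) [CommRing T] [Algebra S T] [Algebra R T]
    [IsLocalization.Away (φ u) T] (hT : algebraMap R T = (algebraMap S T).comp φ) :
    IsLocalization.Away u T := by
  have hunit : IsUnit (algebraMap R T u) := by
    rw [hT]
    exact IsLocalization.Away.algebraMap_isUnit (φ u)
  refine IsLocalization.Away.mk u hunit (fun t ↦ ?_) fun a b hab ↦ ?_
  · obtain ⟨n, s, hs⟩ := IsLocalization.Away.surj (φ u) t
    obtain ⟨m, r, hr⟩ := hu s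
    refine ⟨n + m, r, ?_⟩
    simp only [hT, RingHom.comp_apply, hr, map_mul, map_pow, ← hs]
    ring
  · rw [hT] at hab
    obtain ⟨n, hn⟩ := IsLocalization.Away.exists_of_eq (φ u) hab
    exact ⟨n, hφ (by simpa only [map_mul, map_pow] using hn)⟩

lemma isCohenMacaulayAt_comap_iff (hφ : Function.Injective φ)
    (hu : ∀ s, ∃ n r, φ r = φ u ^ n * s) {Q : Ideal S} [Q.IsPrime] (huQ : φ u ∉ Q) {P : Ideal R}
    [P.IsPrime] (hP : Q.comap φ = P) : IsCohenMacaulayAt R P ↔ IsCohenMacaulayAt S Q := by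
  let T := Localization.Away (φ u)
  let : Algebra R T := ((algebraMap S T).comp φ).toAlgebra
  have : IsLocalization.Away u T := isLocalization_away_of_injective hφ hu T rfl
  have hdisj : Disjoint (Submonoid.powers (φ u) : Set S) Q := by
    rwa [Ideal.disjoint_powers_iff_notMem _ (Ideal.IsPrime.isRadical inferInstance)]
  have : (Q.map (algebraMap S T)).IsPrime :=
    IsLocalization.isPrime_of_isPrime_disjoint (Submonoid.powers (φ u)) T Q inferInstance hdisj
  have hQ : (Q.map (algebraMap S T)).comap (algebraMap S T) = Q :=
    IsLocalization.under_map_of_isPrime_disjoint (Submonoid.powers (φ u)) T inferInstance hdisj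
  rw [← isCohenMacaulayAt_iff_of_isLocalization (Submonoid.powers (φ u)) hQ]
  refine (isCohenMacaulayAt_iff_of_isLocalization (Submonoid.powers u) ?_).symm
  rw [RingHom.algebraMap_toAlgebra, ← Ideal.comap_comap, hQ, hP]

lemma exists_isPrime_comap_eq_of_notMem (hφ : Function.Injective φ)
    (hu : ∀ s, ∃ n r, φ r = φ u ^ n * s) (P : Ideal R) [P.IsPrime] (huP : u ∉ P) :
    ∃ Q : Ideal S, Q.IsPrime ∧ Q.comap φ = P := by
  let T := Localization.Away (φ u)
  let : Algebra R T := ((algebraMap S T).comp φ).toAlgebra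
  have : IsLocalization.Away u T := isLocalization_away_of_injective hφ hu T rfl
  have hdisj : Disjoint (Submonoid.powers u : Set R) P := by
    rwa [Ideal.disjoint_powers_iff_notMem _ (Ideal.IsPrime.isRadical inferInstance)]
  have : (P.map (algebraMap R T)).IsPrime :=
    IsLocalization.isPrime_of_isPrime_disjoint (Submonoid.powers u) T P inferInstance hdisj
  refine ⟨(P.map (algebraMap R T)).comap (algebraMap S T), Ideal.comap_isPrime _ _, ?_⟩
  rw [Ideal.comap_comap]
  exact IsLocalization.under_map_of_isPrime_disjoint (Submonoid.powers u) T inferInstance hdisj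

end Dominating

section Polynomial

variable {B : Type*} [CommRing B] {p : Ideal B} [p.IsPrime]

attribute [local instance] Polynomial.algebra

lemma isLocalization_polynomial_atPrime (p : Ideal B) [p.IsPrime] :
    IsLocalization (p.primeCompl.map (C : B →+* B[X])) (Localization.AtPrime p)[X] :=
  Polynomial.isLocalization p.primeCompl _

lemma comap_map_C_maximalIdeal_localization (p : Ideal B) [p.IsPrime] :
    ((maximalIdeal (Localization.AtPrime p)).map C).comap
      (algebraMap B[X] (Localization.AtPrime p)[X]) = p.map C := by
  ext f
  rw [Ideal.mem_comap, Ideal.mem_map_C_iff, Ideal.mem_map_C_iff]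
  exact forall_congr' fun n ↦ by
    rw [← IsLocalization.AtPrime.to_map_mem_maximal_iff (Localization.AtPrime p) p]
    exact (Polynomial.coeff_map (algebraMap B (Localization.AtPrime p)) n).symm ▸ Iff.rfl

lemma IsCohenMacaulayAt.of_map_C [IsNoetherianRing B] (h : IsCohenMacaulayAt B[X] (p.map C)) :
    IsCohenMacaulayAt B p := by
  have := isLocalization_polynomial_atPrime p
  exact IsCohenMacaulayAt.isCohenMacaulayLocalRing_of_polynomial
    ((isCohenMacaulayAt_iff_of_isLocalization (p.primeCompl.map (C : B →+* B[X]))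
      (comap_map_C_maximalIdeal_localization p)).mpr h)

lemma IsCohenMacaulayAt.polynomial (h : IsCohenMacaulayAt B p) (P : Ideal B[X]) [P.IsPrime]
    (hP : P.comap C = p) : IsCohenMacaulayAt B[X] P := by
  let D := Localization.AtPrime p
  let M := p.primeCompl.map (C : B →+* B[X])
  have : IsLocalization M D[X] := isLocalization_polynomial_atPrime p
  have hdisj : Disjoint (M : Set B[X]) (P : Set B[X]) := by
    rw [Set.disjoint_left]
    rintro _ ⟨b, hb, rfl⟩ hbP
    exact hb (hP ▸ hbP)
  have : (P.map (algebraMap B[X] D[X])).IsPrime :=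
    IsLocalization.isPrime_of_isPrime_disjoint M _ P inferInstance hdisj
  have hcomap : (P.map (algebraMap B[X] D[X])).comap (algebraMap B[X] D[X]) = P :=
    IsLocalization.under_map_of_isPrime_disjoint M _ inferInstance hdisj
  refine (isCohenMacaulayAt_iff_of_isLocalization M hcomap).mp
    (IsCohenMacaulayLocalRing.isCohenMacaulayAt_polynomial h _ ?_)
  apply (IsLocalization.orderEmbedding p.primeCompl D).injective
  change Ideal.comap (algebraMap B D) _ = Ideal.comap (algebraMap B D) _
  have hC : (C : D →+* D[X]).comp (algebraMap B D) = (algebraMap B[X] D[X]).comp C := by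
    ext b
    simp [Polynomial.algebraMap_def]
  rw [Ideal.comap_comap, hC, ← Ideal.comap_comap, hcomap, hP]
  exact (IsLocalization.AtPrime.under_maximalIdeal D p).symm

end Polynomial

end Localization

section GradingHom

open Polynomial

/-- An `ℕ`-grading of `R`, encoded as the ring homomorphism `R → R[X]` sending `f = ∑ fₘ` to
`∑ fₘ Xᵐ`: the coefficients of `δ f` are the homogeneous components of `f`. -/
structure IsGradingHom {R : Type*} [CommRing R] (δ : R →+* R[X]) : Prop where
  eval_one (f : R) : (δ f).eval 1 = f
  map_coeff (f : R) (m : ℕ) : δ ((δ f).coeff m) = monomial m ((δ f).coeff m)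

/-- The ideal `P*` of the elements all of whose homogeneous components lie in `P`: the largest
homogeneous ideal contained in `P`. -/
noncomputable def homogeneousPart {R : Type*} [CommRing R] (δ : R →+* R[X]) (P : Ideal R) :
    Ideal R :=
  (P.map C).comap δ

variable {R : Type*} [CommRing R] {δ : R →+* R[X]}

lemma mem_homogeneousPart {P : Ideal R} {f : R} :
    f ∈ homogeneousPart δ P ↔ ∀ m, (δ f).coeff m ∈ P := by
  rw [homogeneousPart, Ideal.mem_comap, Ideal.mem_map_C_iff]

instance homogeneousPart_isPrime (P : Ideal R) [P.IsPrime] : (homogeneousPart δ P).IsPrime := by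
  unfold homogeneousPart
  infer_instance

/-- Dehomogenization `f ↦ ∑ f̄ₘ Xᵐ` with respect to `u`, where `f̄ₘ` is the class of `fₘ` modulo
`u - 1`. When `u` has degree one, it identifies `R[1/u]` with `(R/(u-1))[X, 1/X]`. -/
noncomputable def dehomogenize (δ : R →+* R[X]) (u : R) : R →+* (R ⧸ Ideal.span {u - 1})[X] :=
  (mapRingHom (Ideal.Quotient.mk _)).comp δ

lemma coeff_dehomogenize (u f : R) (m : ℕ) :
    (dehomogenize δ u f).coeff m = Ideal.Quotient.mk _ ((δ f).coeff m) := by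
  rw [dehomogenize, RingHom.comp_apply, coe_mapRingHom, coeff_map]

variable {u : R}

lemma mk_span_sub_one_self (u : R) : Ideal.Quotient.mk (Ideal.span {u - 1}) u = 1 := by
  rw [← map_one (Ideal.Quotient.mk _), Ideal.Quotient.mk_eq_mk_iff_sub_mem]
  exact Ideal.mem_span_singleton_self _

lemma dehomogenize_of_map_eq_monomial {f : R} {m : ℕ} (hf : δ f = monomial m f) :
    dehomogenize δ u f = C (Ideal.Quotient.mk _ f) * X ^ m := by
  rw [dehomogenize, RingHom.comp_apply, hf, coe_mapRingHom, map_monomial, C_mul_X_pow_eq_monomial]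

lemma dehomogenize_self (hu : δ u = monomial 1 u) : dehomogenize δ u u = X := by
  rw [dehomogenize_of_map_eq_monomial hu, mk_span_sub_one_self, map_one, one_mul, pow_one]

-- If `h = g (u - 1)` with `h` homogeneous and nonzero, then the lowest and the highest component
-- of the right-hand side have different degrees.
lemma eq_zero_of_map_eq_monomial_of_mem_span_sub_one [IsDomain R] (hu0 : u ≠ 0)
    (hu : δ u = monomial 1 u) {h : R} {m : ℕ} (hh : δ h = monomial m h)
    (hmem : h ∈ Ideal.span {u - 1}) : h = 0 := by
  obtain ⟨g, rfl⟩ := Ideal.mem_span_singleton'.mp hmem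
  have hprod : δ g * (monomial 1 u - 1) = monomial m (g * (u - 1)) := by
    rw [← hh, map_mul, map_sub, hu, map_one]
  by_contra hne
  have hne' : δ g * (monomial 1 u - 1) ≠ 0 := by
    rwa [hprod, Ne, monomial_eq_zero_iff]
  have hdeg := natDegree_mul (left_ne_zero_of_mul hne') (right_ne_zero_of_mul hne')
  have htrail := natTrailingDegree_mul (left_ne_zero_of_mul hne') (right_ne_zero_of_mul hne')
  rw [hprod, natDegree_monomial_eq _ hne] at hdeg
  rw [hprod, natTrailingDegree_monomial hne] at htrail
  have hdeg₁ : (monomial 1 u - 1 : R[X]).natDegree = 1 := by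
    rw [natDegree_sub_eq_left_of_natDegree_lt, natDegree_monomial_eq _ hu0]
    rw [natDegree_one, natDegree_monomial_eq _ hu0]
    exact one_pos
  have htrail₁ : (monomial 1 u - 1 : R[X]).natTrailingDegree = 0 :=
    Nat.eq_zero_of_le_zero (natTrailingDegree_le_of_ne_zero (by simp [coeff_monomial]))
  have := natTrailingDegree_le_natDegree (δ g)
  omega

namespace IsGradingHom

lemma dehomogenize_injective [IsDomain R] (hδ : IsGradingHom δ) (hu0 : u ≠ 0)
    (hu : δ u = monomial 1 u) :
    Function.Injective (dehomogenize δ u) := by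
  rw [injective_iff_map_eq_zero]
  intro f hf
  suffices δ f = 0 by rw [← hδ.eval_one f, this, eval_zero]
  ext m
  refine eq_zero_of_map_eq_monomial_of_mem_span_sub_one hu0 hu (hδ.map_coeff f m) ?_
  rw [← Ideal.Quotient.eq_zero_iff_mem, ← coeff_dehomogenize, hf, coeff_zero]

lemma exists_dehomogenize_eq (hδ : IsGradingHom δ) (hu : δ u = monomial 1 u)
    (s : (R ⧸ Ideal.span {u - 1})[X]) :
    ∃ n r, dehomogenize δ u r = dehomogenize δ u u ^ n * s := by
  rw [dehomogenize_self hu]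
  induction s using Polynomial.induction_on' with
  | add p q hp hq =>
    obtain ⟨n, r, hr⟩ := hp
    obtain ⟨m, t, ht⟩ := hq
    refine ⟨n + m, u ^ m * r + u ^ n * t, ?_⟩
    simp only [map_add, map_mul, map_pow, hr, ht, dehomogenize_self hu]
    ring
  | monomial i b =>
    obtain ⟨c, rfl⟩ := Ideal.Quotient.mk_surjective b
    -- Multiply each component of `c` by the power of `u` that brings it to the same degree.
    set d := (δ c).natDegree
    refine ⟨d, ∑ m ∈ Finset.range (d + 1), (δ c).coeff m * u ^ (i + (d - m)), ?_⟩
    have hc : Ideal.Quotient.mk (Ideal.span {u - 1}) c =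
        ∑ m ∈ Finset.range (d + 1), Ideal.Quotient.mk _ ((δ c).coeff m) := by
      conv_lhs => rw [← hδ.eval_one c, eval_eq_sum_range]
      simp only [one_pow, mul_one, map_sum, d]
    rw [hc, map_sum, map_sum, Finset.mul_sum]
    refine Finset.sum_congr rfl fun m hm ↦ ?_
    have hexp : m + (i + (d - m)) = d + i := by
      have := Finset.mem_range.mp hm
      omega
    rw [map_mul, map_pow, dehomogenize_self hu, dehomogenize_of_map_eq_monomial (hδ.map_coeff c m),
      mul_assoc, ← pow_add, hexp, ← C_mul_X_pow_eq_monomial]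
    ring

lemma comap_dehomogenize_map_C (hδ : IsGradingHom δ) (hu : δ u = monomial 1 u) {P : Ideal R}
    (huP : u ∉ P) {Q : Ideal (R ⧸ Ideal.span {u - 1})[X]} [Q.IsPrime]
    (hQ : Q.comap (dehomogenize δ u) = P) :
    ((Q.comap C).map C).comap (dehomogenize δ u) = homogeneousPart δ P := by
  have hX (n : ℕ) : (X ^ n : (R ⧸ Ideal.span {u - 1})[X]) ∉ Q := fun hn ↦ huP <| by
    rw [← hQ, Ideal.mem_comap, dehomogenize_self hu]
    exact Ideal.IsPrime.mem_of_pow_mem inferInstance n hn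
  ext f
  rw [mem_homogeneousPart, Ideal.mem_comap, Ideal.mem_map_C_iff]
  refine forall_congr' fun m ↦ ?_
  rw [coeff_dehomogenize, ← hQ, Ideal.mem_comap, Ideal.mem_comap,
    dehomogenize_of_map_eq_monomial (hδ.map_coeff f m)]
  exact ⟨Q.mul_mem_right _, fun h ↦
    (Ideal.IsPrime.mem_or_mem inferInstance h).resolve_right (hX m)⟩

-- Away from `u`, passing from `P` to `P*` is passing from a prime `Q` of `B[X]` to `(Q ∩ B)B[X]`.
lemma isCohenMacaulayAt_of_homogeneousPart [IsDomain R] [IsNoetherianRing R]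
    (hδ : IsGradingHom δ) (hu : δ u = monomial 1 u) {P : Ideal R} [P.IsPrime] (huP : u ∉ P)
    (h : IsCohenMacaulayAt R (homogeneousPart δ P)) : IsCohenMacaulayAt R P := by
  have hu0 : u ≠ 0 := fun h0 ↦ huP (h0 ▸ P.zero_mem)
  have hinj := hδ.dehomogenize_injective hu0 hu
  have hsurj := hδ.exists_dehomogenize_eq hu
  obtain ⟨Q, _, hQ⟩ := exists_isPrime_comap_eq_of_notMem hinj hsurj P huP
  have : (Q.comap C).IsPrime := Ideal.comap_isPrime _ _
  have huQ : dehomogenize δ u u ∉ Q := fun hmem ↦ huP (hQ ▸ hmem)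
  have huQ' : dehomogenize δ u u ∉ (Q.comap C).map C := fun hmem ↦
    huQ (Ideal.map_comap_le hmem)
  rw [isCohenMacaulayAt_comap_iff hinj hsurj huQ hQ]
  rw [isCohenMacaulayAt_comap_iff hinj hsurj huQ' (hδ.comap_dehomogenize_map_C hu huP hQ)] at h
  exact h.of_map_C.polynomial Q rfl

lemma le_homogeneousPart (hδ : IsGradingHom δ) {P : Ideal R}
    (h : ∀ f m, m ≠ 0 → (δ f).coeff m ∈ P) : P ≤ homogeneousPart δ P := fun f hf ↦ by
  have hsum : f = ∑ m ∈ Finset.range (δ f).natDegree, (δ f).coeff (m + 1) + (δ f).coeff 0 := by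
    conv_lhs => rw [← hδ.eval_one f, eval_eq_sum_range]
    simp only [one_pow, mul_one, Finset.sum_range_succ']
  refine mem_homogeneousPart.mpr fun m ↦ ?_
  obtain rfl | hm := eq_or_ne m 0
  · exact (Ideal.add_mem_iff_right _ (Ideal.sum_mem _ fun m _ ↦ h f _ m.succ_ne_zero)).mp
      (hsum ▸ hf)
  · exact h f m hm

lemma homogeneousPart_le (hδ : IsGradingHom δ) (P : Ideal R) : homogeneousPart δ P ≤ P :=
  fun f hf ↦ by
    rw [← hδ.eval_one f, eval_eq_sum_range]
    exact Ideal.sum_mem _ fun m _ ↦ P.mul_mem_right _ (mem_homogeneousPart.mp hf m)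

lemma homogeneousPart_eq_of_mem_minimalPrimes (hδ : IsGradingHom δ) {K P : Ideal R}
    (hP : P ∈ K.minimalPrimes) (hK : K ≤ homogeneousPart δ P) : homogeneousPart δ P = P :=
  have := hP.1.1
  (hδ.homogeneousPart_le P).antisymm (hP.2 ⟨inferInstance, hK⟩ (hδ.homogeneousPart_le P))

end IsGradingHom

end GradingHom

section Bigraded

open MvPolynomial

universe u

/-- The exponent vector of the monomial `t₁ᵐ t₂ⁿ`. -/
noncomputable def bidegree (m n : ℕ) : Fin 2 →₀ ℕ := Finsupp.single 0 m + Finsupp.single 1 n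

@[simp] lemma bidegree_apply_zero (m n : ℕ) : bidegree m n 0 = m := by simp [bidegree]

@[simp] lemma bidegree_apply_one (m n : ℕ) : bidegree m n 1 = n := by simp [bidegree]

lemma bidegree_eta (d : Fin 2 →₀ ℕ) : bidegree (d 0) (d 1) = d := by
  ext i; fin_cases i <;> simp

lemma bidegree_zero_zero : bidegree 0 0 = 0 := by simp [bidegree]

lemma bidegree_add (m n i j : ℕ) : bidegree m n + bidegree i j = bidegree (m + i) (n + j) := by
  ext i; fin_cases i <;> simp

lemma bidegree_sub (m n i j : ℕ) : bidegree m n - bidegree i j = bidegree (m - i) (n - j) := by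
  ext i; fin_cases i <;> simp

lemma bidegree_inj {m n i j : ℕ} : bidegree m n = bidegree i j ↔ m = i ∧ n = j := by
  refine ⟨fun h ↦ ?_, fun h ↦ by rw [h.1, h.2]⟩
  simpa using And.intro (DFunLike.congr_fun h 0) (DFunLike.congr_fun h 1)

lemma bidegree_le {m n i j : ℕ} : bidegree m n ≤ bidegree i j ↔ m ≤ i ∧ n ≤ j := by
  simp [Finsupp.le_def]

variable {A : Type u} [CommRing A]

/-- The coefficient of `t₁ᵐ t₂ⁿ` in a polynomial `f ∈ A[t₁, t₂]`. -/
noncomputable def bicoeff (f : MvPolynomial (Fin 2) A) (m n : ℕ) : A := coeff (bidegree m n) f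

/-- The monomial `a t₁ᵐ t₂ⁿ` of `A[t₁, t₂]`. -/
noncomputable def bimonomial (m n : ℕ) (a : A) : MvPolynomial (Fin 2) A :=
  monomial (bidegree m n) a

lemma bicoeff_ext {f g : MvPolynomial (Fin 2) A} (h : ∀ m n, bicoeff f m n = bicoeff g m n) :
    f = g := by
  ext d; rw [← bidegree_eta d]; exact h _ _

@[simp] lemma bicoeff_add (f g : MvPolynomial (Fin 2) A) (m n : ℕ) :
    bicoeff (f + g) m n = bicoeff f m n + bicoeff g m n := coeff_add _ _ _

@[simp] lemma bicoeff_sub (f g : MvPolynomial (Fin 2) A) (m n : ℕ) :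
    bicoeff (f - g) m n = bicoeff f m n - bicoeff g m n := coeff_sub _ _ _ _

@[simp] lemma bicoeff_zero (m n : ℕ) : bicoeff (0 : MvPolynomial (Fin 2) A) m n = 0 :=
  coeff_zero _

lemma bicoeff_bimonomial (i j : ℕ) (a : A) (m n : ℕ) :
    bicoeff (bimonomial i j a) m n = if i = m ∧ j = n then a else 0 := by
  simp [bicoeff, bimonomial, coeff_monomial, bidegree_inj]

@[simp] lemma bicoeff_bimonomial_self (i j : ℕ) (a : A) : bicoeff (bimonomial i j a) i j = a := by
  simp [bicoeff_bimonomial]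

lemma bicoeff_bimonomial_mul (i j : ℕ) (a : A) (f : MvPolynomial (Fin 2) A) (m n : ℕ) :
    bicoeff (bimonomial i j a * f) m n =
      if i ≤ m ∧ j ≤ n then a * bicoeff f (m - i) (n - j) else 0 := by
  simp only [bicoeff, bimonomial, coeff_monomial_mul', bidegree_sub, bidegree_le]

lemma bimonomial_mul (i j m n : ℕ) (a b : A) :
    bimonomial i j a * bimonomial m n b = bimonomial (i + m) (j + n) (a * b) := by
  simp [bimonomial, monomial_mul, bidegree_add]

lemma bimonomial_add (i j : ℕ) (a b : A) :
    bimonomial i j (a + b) = bimonomial i j a + bimonomial i j b := map_add _ _ _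

@[simp] lemma bimonomial_zero (i j : ℕ) : bimonomial i j (0 : A) = 0 := map_zero _

lemma bimonomial_zero_zero (a : A) : bimonomial 0 0 a = C a := by
  simp [bimonomial, bidegree_zero_zero]

lemma bimonomial_one_zero (a : A) : bimonomial 1 0 a = C a * X 0 := by
  simp [bimonomial, bidegree, C_mul_X_eq_monomial]

lemma bimonomial_zero_one (a : A) : bimonomial 0 1 a = C a * X 1 := by
  simp [bimonomial, bidegree, C_mul_X_eq_monomial]

lemma bimonomial_pow (i j n : ℕ) (a : A) :
    bimonomial i j a ^ n = bimonomial (n * i) (n * j) (a ^ n) := by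
  induction n with
  | zero => simp [bimonomial_zero_zero]
  | succ n ih => rw [pow_succ, ih, bimonomial_mul, pow_succ, Nat.succ_mul, Nat.succ_mul]

lemma bimonomial_injective (i j : ℕ) : Function.Injective (bimonomial (A := A) i j) :=
  fun a b h ↦ by simpa using congrArg (fun f ↦ bicoeff f i j) h

lemma eq_sum_bimonomial (f : MvPolynomial (Fin 2) A) :
    f = ∑ d ∈ f.support, bimonomial (d 0) (d 1) (bicoeff f (d 0) (d 1)) := by
  conv_lhs => rw [f.as_sum]
  refine Finset.sum_congr rfl fun d _ ↦ ?_
  rw [bimonomial, bicoeff, bidegree_eta]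

/-- The coaction `A[t₁, t₂] → A[t₁, t₂][X]` of the grading by the degree in `tᵢ`: it sends `tᵢ` to
`tᵢ X` and fixes the other variable. -/
noncomputable def degreeOfHom (i : Fin 2) :
    MvPolynomial (Fin 2) A →+* Polynomial (MvPolynomial (Fin 2) A) :=
  eval₂Hom (Polynomial.C.comp C)
    (fun j ↦ if j = i then Polynomial.C (X j) * Polynomial.X else Polynomial.C (X j))

lemma degreeOfHom_monomial (i : Fin 2) (d : Fin 2 →₀ ℕ) (a : A) :
    degreeOfHom i (monomial d a) = Polynomial.monomial (d i) (monomial d a) := by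
  rw [degreeOfHom, coe_eval₂Hom, eval₂_monomial, ← Polynomial.C_mul_X_pow_eq_monomial, monomial_eq]
  simp only [RingHom.comp_apply, Finsupp.prod_fintype, map_mul, map_pow, Fin.prod_univ_two,
    pow_zero, implies_true]
  fin_cases i <;> simp [mul_pow] <;> ring

lemma coeff_coeff_degreeOfHom (i : Fin 2) (f : MvPolynomial (Fin 2) A) (m : ℕ) (d : Fin 2 →₀ ℕ) :
    coeff d ((degreeOfHom i f).coeff m) = if d i = m then coeff d f else 0 := by
  induction f using MvPolynomial.induction_on' with
  | monomial e a =>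
    rw [degreeOfHom_monomial, Polynomial.coeff_monomial]
    by_cases h : e = d
    · subst h; split_ifs <;> simp
    · split_ifs <;> simp [coeff_monomial, h]
  | add p q hp hq =>
    simp only [map_add, Polynomial.coeff_add, coeff_add, hp, hq]
    split_ifs <;> simp

lemma eval_one_degreeOfHom (i : Fin 2) (f : MvPolynomial (Fin 2) A) :
    (degreeOfHom i f).eval 1 = f := by
  induction f using MvPolynomial.induction_on' with
  | monomial e a => simp [degreeOfHom_monomial]
  | add p q hp hq => rw [map_add, Polynomial.eval_add, hp, hq]

end Bigraded

section BiRees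

open MvPolynomial

universe u

variable {A : Type u} [CommRing A]

/-- The multi-Rees algebra `A[It₁, Jt₂]` of two ideals. -/
noncomputable abbrev biRees (I J : Ideal A) : Subalgebra A (MvPolynomial (Fin 2) A) :=
  multiReesAlgebra ![I, J]

variable {I J : Ideal A}

/-- The subalgebra `⊕ Iᵐ Jⁿ t₁ᵐ t₂ⁿ` of `A[t₁, t₂]`; it equals `A[It₁, Jt₂]` by `mem_biRees`. -/
noncomputable def biReesSum (I J : Ideal A) : Subalgebra A (MvPolynomial (Fin 2) A) where
  carrier := {f | ∀ m n, bicoeff f m n ∈ I ^ m * J ^ n}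
  add_mem' {f g} hf hg m n := by rw [bicoeff_add]; exact add_mem (hf m n) (hg m n)
  mul_mem' {f g} hf hg m n := by
    rw [bicoeff, coeff_mul]
    refine Ideal.sum_mem _ fun x hx ↦ ?_
    rw [Finset.HasAntidiagonal.mem_antidiagonal] at hx
    have hm : x.1 0 + x.2 0 = m := by rw [← Finsupp.add_apply, hx, bidegree_apply_zero]
    have hn : x.1 1 + x.2 1 = n := by rw [← Finsupp.add_apply, hx, bidegree_apply_one]
    have hfg := Ideal.mul_mem_mul (hf (x.1 0) (x.1 1)) (hg (x.2 0) (x.2 1))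
    rwa [bicoeff, bicoeff, bidegree_eta, bidegree_eta, mul_mul_mul_comm, ← pow_add, ← pow_add,
      hm, hn] at hfg
  algebraMap_mem' a m n := by
    rw [algebraMap_eq, ← bimonomial_zero_zero, bicoeff_bimonomial]
    split_ifs with h
    · rw [← h.1, ← h.2]; simp
    · exact zero_mem _

lemma bimonomial_mem_biReesSum {m n : ℕ} {a : A} (ha : a ∈ I ^ m * J ^ n) :
    bimonomial m n a ∈ biReesSum I J := fun i j ↦ by
  rw [bicoeff_bimonomial]
  split_ifs with h
  · rwa [← h.1, ← h.2]
  · exact zero_mem _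

lemma bimonomial_mem_of_mem_mul {S : Subalgebra A (MvPolynomial (Fin 2) A)} {K L : Ideal A}
    {i j m n : ℕ} (hK : ∀ a ∈ K, bimonomial i j a ∈ S) (hL : ∀ a ∈ L, bimonomial m n a ∈ S)
    {a : A} (ha : a ∈ K * L) : bimonomial (i + m) (j + n) a ∈ S := by
  refine Submodule.mul_induction_on ha (fun x hx y hy ↦ ?_) fun x y hx hy ↦ ?_
  · rw [← bimonomial_mul]
    exact mul_mem (hK x hx) (hL y hy)
  · rw [bimonomial_add]
    exact add_mem hx hy

lemma bimonomial_mem_of_mem_pow {S : Subalgebra A (MvPolynomial (Fin 2) A)} {K : Ideal A}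
    {i j : ℕ} (hK : ∀ a ∈ K, bimonomial i j a ∈ S) (m : ℕ) :
    ∀ a ∈ K ^ m, bimonomial (m * i) (m * j) a ∈ S := by
  induction m with
  | zero => intro a _; rw [zero_mul, zero_mul, bimonomial_zero_zero]; exact S.algebraMap_mem a
  | succ m ih =>
    intro a ha
    rw [Nat.succ_mul, Nat.succ_mul]
    exact bimonomial_mem_of_mem_mul ih hK (pow_succ K m ▸ ha)

lemma biReesSum_le_biRees : biReesSum I J ≤ biRees I J := fun f hf ↦ by
  have hI : ∀ a ∈ I, bimonomial 1 0 a ∈ biRees I J := fun a ha ↦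
    Algebra.subset_adjoin (Set.mem_iUnion.mpr ⟨0, a, ha, (bimonomial_one_zero a).symm⟩)
  have hJ : ∀ a ∈ J, bimonomial 0 1 a ∈ biRees I J := fun a ha ↦
    Algebra.subset_adjoin (Set.mem_iUnion.mpr ⟨1, a, ha, (bimonomial_zero_one a).symm⟩)
  rw [eq_sum_bimonomial f]
  refine sum_mem fun d _ ↦ ?_
  simpa using bimonomial_mem_of_mem_mul (bimonomial_mem_of_mem_pow hI (d 0))
    (bimonomial_mem_of_mem_pow hJ (d 1)) (hf (d 0) (d 1))

lemma biRees_le_biReesSum : biRees I J ≤ biReesSum I J := by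
  refine Algebra.adjoin_le ?_
  rintro _ hf
  obtain ⟨i, a, ha, rfl⟩ := Set.mem_iUnion.mp hf
  fin_cases i
  · have hmem : bimonomial 1 0 a ∈ biReesSum I J := bimonomial_mem_biReesSum (by simpa using ha)
    rwa [bimonomial_one_zero] at hmem
  · have hmem : bimonomial 0 1 a ∈ biReesSum I J := bimonomial_mem_biReesSum (by simpa using ha)
    rwa [bimonomial_zero_one] at hmem

lemma mem_biRees {f : MvPolynomial (Fin 2) A} :
    f ∈ biRees I J ↔ ∀ m n, bicoeff f m n ∈ I ^ m * J ^ n :=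
  ⟨fun h ↦ biRees_le_biReesSum h, fun h ↦ biReesSum_le_biRees h⟩

lemma bimonomial_mem_biRees {m n : ℕ} {a : A} :
    bimonomial m n a ∈ biRees I J ↔ a ∈ I ^ m * J ^ n :=
  ⟨fun h ↦ by simpa using mem_biRees.mp h m n,
    fun h ↦ biReesSum_le_biRees (bimonomial_mem_biReesSum h)⟩

/-- The homogeneous element `a t₁ᵐ t₂ⁿ` of `A[It₁, Jt₂]`, for `a ∈ Iᵐ Jⁿ`. -/
noncomputable def biReesMonomial (I J : Ideal A) (m n : ℕ) (a : A) (ha : a ∈ I ^ m * J ^ n) :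
    biRees I J :=
  ⟨bimonomial m n a, bimonomial_mem_biRees.mpr ha⟩

lemma mapAlgHom_val_biRees_injective (I J : Ideal A) :
    Function.Injective (Polynomial.mapAlgHom (biRees I J).val) :=
  Polynomial.map_injective _ Subtype.val_injective

lemma degreeOfHom_mem_range (i : Fin 2) (f : biRees I J) :
    degreeOfHom i (f : MvPolynomial (Fin 2) A) ∈ (Polynomial.mapAlgHom (biRees I J).val).range := by
  refine (Polynomial.lifts_iff_coeff_lifts (f := (biRees I J).val.toRingHom) _).mpr fun m ↦ ?_
  refine ⟨⟨(degreeOfHom i (f : MvPolynomial (Fin 2) A)).coeff m, mem_biRees.mpr fun a b ↦ ?_⟩, rfl⟩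
  rw [bicoeff, coeff_coeff_degreeOfHom]
  split_ifs
  · exact mem_biRees.mp f.2 a b
  · exact zero_mem _

/-- The coaction on `A[It₁, Jt₂]` of the grading by the degree in `tᵢ`, obtained by restricting
`degreeOfHom`. -/
noncomputable def biReesGradingHom (I J : Ideal A) (i : Fin 2) :
    biRees I J →+* Polynomial (biRees I J) :=
  (AlgEquiv.ofInjective _ (mapAlgHom_val_biRees_injective I J)).symm.toRingEquiv.toRingHom.comp
    (((degreeOfHom i).comp (biRees I J).val.toRingHom).codRestrict _ (degreeOfHom_mem_range i))

lemma map_val_biReesGradingHom (i : Fin 2) (f : biRees I J) :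
    (biReesGradingHom I J i f).map (biRees I J).val.toRingHom =
      degreeOfHom i (f : MvPolynomial (Fin 2) A) :=
  congrArg Subtype.val (AlgEquiv.apply_symm_apply
    (AlgEquiv.ofInjective _ (mapAlgHom_val_biRees_injective I J))
    ⟨degreeOfHom i (f : MvPolynomial (Fin 2) A), degreeOfHom_mem_range i f⟩)

lemma coeff_coeff_biReesGradingHom (i : Fin 2) (f : biRees I J) (m : ℕ) (d : Fin 2 →₀ ℕ) :
    coeff d ((biReesGradingHom I J i f).coeff m : MvPolynomial (Fin 2) A) =
      if d i = m then coeff d (f : MvPolynomial (Fin 2) A) else 0 := by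
  rw [← coeff_coeff_degreeOfHom, ← map_val_biReesGradingHom, Polynomial.coeff_map]
  rfl

lemma biReesGradingHom_biReesMonomial (i : Fin 2) (m n : ℕ) (a : A) (ha : a ∈ I ^ m * J ^ n) :
    biReesGradingHom I J i (biReesMonomial I J m n a ha) =
      Polynomial.monomial (bidegree m n i) (biReesMonomial I J m n a ha) := by
  refine Polynomial.map_injective (biRees I J).val.toRingHom Subtype.val_injective ?_
  rw [map_val_biReesGradingHom, Polynomial.map_monomial]
  exact degreeOfHom_monomial i (bidegree m n) a

lemma isGradingHom_biReesGradingHom (I J : Ideal A) (i : Fin 2) :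
    IsGradingHom (biReesGradingHom I J i) where
  eval_one f := by
    have heval := Polynomial.eval_map_apply (biRees I J).val.toRingHom
      (p := biReesGradingHom I J i f) 1
    rw [map_val_biReesGradingHom, map_one, eval_one_degreeOfHom] at heval
    exact Subtype.ext heval.symm
  map_coeff f m := by
    ext n d
    rw [coeff_coeff_biReesGradingHom, coeff_coeff_biReesGradingHom, Polynomial.coeff_monomial]
    by_cases h : m = n
    · rw [if_pos h, coeff_coeff_biReesGradingHom, ← h]
      split_ifs <;> rfl
    · rw [if_neg h, ZeroMemClass.coe_zero, coeff_zero]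
      split_ifs <;> first | omega | rfl

end BiRees

section GradedMaximalIdeal

open MvPolynomial IsLocalRing

universe u

lemma isNoetherianRing_adjoin_of_finite {A B : Type*} [CommRing A] [IsNoetherianRing A]
    [CommRing B] [Algebra A B] {T : Set B} (hT : T.Finite) :
    IsNoetherianRing (Algebra.adjoin A T) := by
  have : Algebra.FiniteType A (Algebra.adjoin A T) :=
    (Subalgebra.fg_iff_finiteType _).mp (Subalgebra.fg_def.mpr ⟨T, hT, rfl⟩)
  exact Algebra.FiniteType.isNoetherianRing A _

variable {A : Type u} [CommRing A] {I J : Ideal A}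

lemma bimonomial_mem_of_mem_span {S : Subalgebra A (MvPolynomial (Fin 2) A)} {s : Set A} {i j : ℕ}
    (hs : ∀ a ∈ s, bimonomial i j a ∈ S) : ∀ a ∈ Ideal.span s, bimonomial i j a ∈ S := by
  intro a ha
  induction ha using Submodule.span_induction with
  | mem x hx => exact hs x hx
  | zero => rw [bimonomial_zero]; exact zero_mem S
  | add x y _ _ hx hy => rw [bimonomial_add]; exact add_mem hx hy
  | smul b x _ hx =>
    have hsmul : bimonomial i j (b * x) = b • bimonomial i j x := (smul_monomial b).symm
    exact hsmul ▸ S.smul_mem hx b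

lemma biRees_span_span (s t : Set A) :
    biRees (Ideal.span s) (Ideal.span t) =
      Algebra.adjoin A (bimonomial 1 0 '' s ∪ bimonomial 0 1 '' t) := by
  refine le_antisymm (Algebra.adjoin_le ?_) (Algebra.adjoin_le ?_)
  · rintro _ hf
    obtain ⟨i, a, ha, rfl⟩ := Set.mem_iUnion.mp hf
    fin_cases i
    · change C a * X 0 ∈ Algebra.adjoin A _
      rw [← bimonomial_one_zero]
      exact bimonomial_mem_of_mem_span
        (fun x hx ↦ Algebra.subset_adjoin (.inl ⟨x, hx, rfl⟩)) a ha
    · change C a * X 1 ∈ Algebra.adjoin A _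
      rw [← bimonomial_zero_one]
      exact bimonomial_mem_of_mem_span
        (fun x hx ↦ Algebra.subset_adjoin (.inr ⟨x, hx, rfl⟩)) a ha
  · rintro _ (⟨x, hx, rfl⟩ | ⟨x, hx, rfl⟩)
    · exact bimonomial_mem_biRees.mpr (by simpa using Ideal.subset_span hx)
    · exact bimonomial_mem_biRees.mpr (by simpa using Ideal.subset_span hx)

instance biRees_isNoetherianRing [IsNoetherianRing A] : IsNoetherianRing (biRees I J) := by
  obtain ⟨s, rfl⟩ := IsNoetherian.noetherian I
  obtain ⟨t, rfl⟩ := IsNoetherian.noetherian J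
  rw [biRees_span_span]
  exact isNoetherianRing_adjoin_of_finite
    ((s.finite_toSet.image _).union (t.finite_toSet.image _))

lemma biRees_ext {f g : biRees I J} (h : ∀ m n, bicoeff f.1 m n = bicoeff g.1 m n) : f = g :=
  Subtype.ext (bicoeff_ext h)

lemma mul_mem_pow_mul_pow {m n i j : ℕ} {a b : A} (ha : a ∈ I ^ m * J ^ n)
    (hb : b ∈ I ^ i * J ^ j) : a * b ∈ I ^ (m + i) * J ^ (n + j) := by
  rw [pow_add, pow_add, mul_mul_mul_comm]
  exact Ideal.mul_mem_mul ha hb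

lemma biReesMonomial_mul {m n i j : ℕ} {a b : A} (ha : a ∈ I ^ m * J ^ n)
    (hb : b ∈ I ^ i * J ^ j) :
    biReesMonomial I J m n a ha * biReesMonomial I J i j b hb =
      biReesMonomial I J (m + i) (n + j) (a * b) (mul_mem_pow_mul_pow ha hb) :=
  Subtype.ext (bimonomial_mul m n i j a b)

lemma biReesMonomial_zero_zero (a : A) :
    biReesMonomial I J 0 0 a (by simp) = algebraMap A (biRees I J) a :=
  Subtype.ext (bimonomial_zero_zero a)

/-- The ideal of `A` of all `a` with `a t₁ᵐ t₂ⁿ ∈ P`, for an ideal `P` of `A[It₁, Jt₂]`. -/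
noncomputable def coeffIdeal (P : Ideal (biRees I J)) (m n : ℕ) : Ideal A :=
  ((P.restrictScalars A).map (biRees I J).val.toLinearMap).comap (monomial (bidegree m n))

lemma mem_coeffIdeal {P : Ideal (biRees I J)} {m n : ℕ} {a : A} :
    a ∈ coeffIdeal P m n ↔ ∃ ha, biReesMonomial I J m n a ha ∈ P := by
  constructor
  · rintro ⟨f, hf, hfa : f.1 = bimonomial m n a⟩
    have ha : a ∈ I ^ m * J ^ n := bimonomial_mem_biRees.mp (hfa ▸ f.2)
    exact ⟨ha, (Subtype.ext hfa : f = biReesMonomial I J m n a ha) ▸ hf⟩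
  · rintro ⟨ha, hP⟩
    exact ⟨_, hP, rfl⟩

lemma mem_coeffIdeal_iff {P : Ideal (biRees I J)} {m n : ℕ} {a : A} (ha : a ∈ I ^ m * J ^ n) :
    a ∈ coeffIdeal P m n ↔ biReesMonomial I J m n a ha ∈ P :=
  mem_coeffIdeal.trans ⟨fun h ↦ h.2, fun h ↦ ⟨ha, h⟩⟩

lemma coeffIdeal_top (m n : ℕ) : coeffIdeal (⊤ : Ideal (biRees I J)) m n = I ^ m * J ^ n := by
  ext a
  simp [mem_coeffIdeal]

lemma coeffIdeal_zero_zero (P : Ideal (biRees I J)) :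
    coeffIdeal P 0 0 = P.comap (algebraMap A (biRees I J)) := by
  ext a
  rw [mem_coeffIdeal_iff (by simp), Ideal.mem_comap, biReesMonomial_zero_zero]

lemma coeffIdeal_mono {P Q : Ideal (biRees I J)} (h : P ≤ Q) (m n : ℕ) :
    coeffIdeal P m n ≤ coeffIdeal Q m n :=
  Submodule.comap_mono (Submodule.map_mono h)

lemma coeffIdeal_mul_le (P Q : Ideal (biRees I J)) (m n i j : ℕ) :
    coeffIdeal P m n * coeffIdeal Q i j ≤ coeffIdeal (P * Q) (m + i) (n + j) := by
  refine Ideal.mul_le.mpr fun a ha b hb ↦ ?_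
  obtain ⟨ha, haP⟩ := mem_coeffIdeal.mp ha
  obtain ⟨hb, hbQ⟩ := mem_coeffIdeal.mp hb
  exact mem_coeffIdeal.mpr ⟨_, biReesMonomial_mul ha hb ▸ Ideal.mul_mem_mul haP hbQ⟩

lemma mul_coeffIdeal_le (P : Ideal (biRees I J)) (m n i j : ℕ) :
    I ^ m * J ^ n * coeffIdeal P i j ≤ coeffIdeal P (m + i) (n + j) := by
  simpa only [coeffIdeal_top, Ideal.top_mul] using coeffIdeal_mul_le ⊤ P m n i j

lemma pow_mul_pow_le_coeffIdeal {P : Ideal (biRees I J)} {i j : ℕ}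
    (hP : I ^ i * J ^ j ≤ coeffIdeal P i j) {m n : ℕ} (him : i ≤ m) (hjn : j ≤ n) :
    I ^ m * J ^ n ≤ coeffIdeal P m n := by
  obtain ⟨m, rfl⟩ := Nat.exists_eq_add_of_le' him
  obtain ⟨n, rfl⟩ := Nat.exists_eq_add_of_le' hjn
  calc I ^ (m + i) * J ^ (n + j) = I ^ m * J ^ n * (I ^ i * J ^ j) := by
        rw [pow_add, pow_add, mul_mul_mul_comm]
    _ ≤ I ^ m * J ^ n * coeffIdeal P i j := Ideal.mul_mono_right hP
    _ ≤ coeffIdeal P (m + i) (n + j) := mul_coeffIdeal_le P m n i j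

lemma coeffIdeal_le_coeffIdeal_homogeneousPart (i : Fin 2) (P : Ideal (biRees I J)) (m n : ℕ) :
    coeffIdeal P m n ≤ coeffIdeal (homogeneousPart (biReesGradingHom I J i) P) m n := fun a ha ↦ by
  obtain ⟨ha, haP⟩ := mem_coeffIdeal.mp ha
  refine mem_coeffIdeal.mpr ⟨ha, mem_homogeneousPart.mpr fun l ↦ ?_⟩
  rw [biReesGradingHom_biReesMonomial, Polynomial.coeff_monomial]
  split_ifs
  exacts [haP, P.zero_mem]

lemma mem_of_forall_bicoeff_mem_coeffIdeal {P : Ideal (biRees I J)} {f : biRees I J}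
    (h : ∀ m n, bicoeff f.1 m n ≠ 0 → bicoeff f.1 m n ∈ coeffIdeal P m n) : f ∈ P := by
  have hsum : f = ∑ d ∈ f.1.support,
      biReesMonomial I J (d 0) (d 1) (bicoeff f.1 (d 0) (d 1)) (mem_biRees.mp f.2 _ _) := by
    refine Subtype.ext ?_
    rw [AddSubmonoidClass.coe_finsetSum]
    exact eq_sum_bimonomial f.1
  rw [hsum]
  refine Ideal.sum_mem _ fun d hd ↦ (mem_coeffIdeal_iff _).mp (h _ _ ?_)
  rw [bicoeff, bidegree_eta]
  exact mem_support_iff.mp hd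

lemma biRees_le_homogeneousPart {P : Ideal (biRees I J)} {i : Fin 2}
    (hP : ∀ m n, bidegree m n i = 1 → I ^ m * J ^ n ≤ coeffIdeal P m n) :
    P ≤ homogeneousPart (biReesGradingHom I J i) P := by
  refine (isGradingHom_biReesGradingHom I J i).le_homogeneousPart fun f d hd ↦ ?_
  refine mem_of_forall_bicoeff_mem_coeffIdeal fun m n hmn ↦ ?_
  have hdeg : bidegree m n i ≠ 0 := fun h0 ↦ hmn <| by
    rw [bicoeff, coeff_coeff_biReesGradingHom, if_neg (h0 ▸ hd.symm)]
  suffices I ^ m * J ^ n ≤ coeffIdeal P m n from this (mem_biRees.mp (Subtype.prop _) m n)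
  fin_cases i
  · exact pow_mul_pow_le_coeffIdeal (hP 1 0 (by simp))
      (Nat.one_le_iff_ne_zero.mpr (by simpa using hdeg)) n.zero_le
  · exact pow_mul_pow_le_coeffIdeal (hP 0 1 (by simp))
      m.zero_le (Nat.one_le_iff_ne_zero.mpr (by simpa using hdeg))

lemma isCohenMacaulayAt_biRees_of_homogeneousPart [IsDomain A] [IsNoetherianRing A] (i : Fin 2)
    {P : Ideal (biRees I J)} [P.IsPrime]
    (h : IsCohenMacaulayAt (biRees I J) (homogeneousPart (biReesGradingHom I J i) P)) :
    IsCohenMacaulayAt (biRees I J) P := by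
  by_cases hP : ∀ m n, bidegree m n i = 1 → I ^ m * J ^ n ≤ coeffIdeal P m n
  · exact h.mono (biRees_le_homogeneousPart hP)
  · push Not at hP
    obtain ⟨m, n, hdeg, hle⟩ := hP
    obtain ⟨a, ha, haP⟩ := SetLike.not_le_iff_exists.mp hle
    refine (isGradingHom_biReesGradingHom I J i).isCohenMacaulayAt_of_homogeneousPart
      (u := biReesMonomial I J m n a ha) ?_ (fun h ↦ haP ((mem_coeffIdeal_iff ha).mpr h)) h
    rw [biReesGradingHom_biReesMonomial, hdeg]

/-- The projection of `A[It₁, Jt₂]` onto its component `A` of bidegree `(0, 0)`. -/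
noncomputable def biReesConstantCoeff (I J : Ideal A) : biRees I J →+* A :=
  constantCoeff.comp (biRees I J).val.toRingHom

lemma biReesConstantCoeff_apply (f : biRees I J) :
    biReesConstantCoeff I J f = bicoeff f.1 0 0 := by
  rw [bicoeff, bidegree_zero_zero]
  rfl

lemma biReesConstantCoeff_algebraMap (a : A) :
    biReesConstantCoeff I J (algebraMap A (biRees I J) a) = a := constantCoeff_C _ a

lemma coeff_zero_biReesGradingHom_coeff_zero (f : biRees I J) :
    (biReesGradingHom I J 0 ((biReesGradingHom I J 1 f).coeff 0)).coeff 0 =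
      algebraMap A (biRees I J) (bicoeff f.1 0 0) := by
  rw [← biReesMonomial_zero_zero]
  refine biRees_ext fun m n ↦ ?_
  change _ = bicoeff (bimonomial 0 0 _) m n
  rw [bicoeff, coeff_coeff_biReesGradingHom, coeff_coeff_biReesGradingHom, bicoeff_bimonomial,
    bidegree_apply_zero, bidegree_apply_one, ← ite_and, bicoeff]
  grind

variable [IsLocalRing A]

/-- The graded maximal ideal `𝔪 ⊕ ⨁_{(m, n) ≠ 0} Iᵐ Jⁿ t₁ᵐ t₂ⁿ` of `A[It₁, Jt₂]`. -/
noncomputable def gradedMaximalIdeal (I J : Ideal A) : Ideal (biRees I J) :=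
  (maximalIdeal A).comap (biReesConstantCoeff I J)

instance gradedMaximalIdeal_isPrime : (gradedMaximalIdeal I J).IsPrime := by
  unfold gradedMaximalIdeal
  infer_instance

lemma mem_gradedMaximalIdeal {f : biRees I J} :
    f ∈ gradedMaximalIdeal I J ↔ bicoeff f.1 0 0 ∈ maximalIdeal A := by
  rw [gradedMaximalIdeal, Ideal.mem_comap, biReesConstantCoeff_apply]

lemma homogeneousPart_homogeneousPart_le_gradedMaximalIdeal {P : Ideal (biRees I J)} (hP : P ≠ ⊤) :
    homogeneousPart (biReesGradingHom I J 1) (homogeneousPart (biReesGradingHom I J 0) P) ≤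
      gradedMaximalIdeal I J := fun f hf ↦ by
  have hf0 := mem_homogeneousPart.mp (mem_homogeneousPart.mp hf 0) 0
  rw [coeff_zero_biReesGradingHom_coeff_zero] at hf0
  exact mem_gradedMaximalIdeal.mpr fun hu ↦
    hP (Ideal.eq_top_of_isUnit_mem _ hf0 (hu.map (algebraMap A (biRees I J))))

lemma isCohenMacaulayRing_biRees [IsDomain A] [IsNoetherianRing A]
    (h : IsCohenMacaulayAt (biRees I J) (gradedMaximalIdeal I J)) :
    IsCohenMacaulayRing (biRees I J) :=
  ⟨inferInstance, fun _ hP ↦ isCohenMacaulayAt_biRees_of_homogeneousPart 0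
    (isCohenMacaulayAt_biRees_of_homogeneousPart 1
      (h.mono (homogeneousPart_homogeneousPart_le_gradedMaximalIdeal hP.ne_top)))⟩

end GradedMaximalIdeal

section Dimension

open MvPolynomial IsLocalRing

universe u

lemma ringKrullDim_le_of_polynomial_surjective {S T : Type*} [CommRing S] [IsDomain S]
    [IsNoetherianRing S] [CommRing T] {φ : Polynomial S →+* T} (hφ : Function.Surjective φ)
    {p : Polynomial S} (hp : p ≠ 0) (hpφ : φ p = 0) : ringKrullDim T ≤ ringKrullDim S := by
  have hle : ringKrullDim T ≤ ringKrullDim (Polynomial S ⧸ Ideal.span {p}) := by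
    refine ringKrullDim_le_of_surjective (Ideal.Quotient.lift (Ideal.span {p}) φ fun a ha ↦ ?_)
      (Ideal.Quotient.lift_surjective_of_surjective _ _ hφ)
    obtain ⟨c, rfl⟩ := Ideal.mem_span_singleton.mp ha
    rw [map_mul, hpφ, zero_mul]
  have hquot := ringKrullDim_quotient_succ_le_of_nonZeroDivisor (mem_nonZeroDivisors_of_ne_zero hp)
  rw [Polynomial.ringKrullDim_of_isNoetherianRing] at hquot
  exact hle.trans (ENat.WithBot.add_le_add_one_right_iff.mp hquot)

lemma ringKrullDim_adjoin_insert_le {A B : Type*} [CommRing A] [IsNoetherianRing A] [CommRing B]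
    [IsDomain B] [Algebra A B] {T : Set B} (hT : T.Finite) {x c : B}
    (hc : c ∈ Algebra.adjoin A T) (hc0 : c ≠ 0) (hcx : c * x ∈ Algebra.adjoin A T) :
    ringKrullDim (Algebra.adjoin A (insert x T)) ≤ ringKrullDim (Algebra.adjoin A T) := by
  have := isNoetherianRing_adjoin_of_finite (A := A) hT
  have hadjoin : Algebra.adjoin A (insert x T) =
      (Polynomial.aeval (R := Algebra.adjoin A T) x).range.restrictScalars A := by
    rw [← Algebra.adjoin_singleton_eq_range_aeval, ← Algebra.adjoin_union_eq_adjoin_adjoin,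
      Set.union_singleton]
  rw [hadjoin]
  refine ringKrullDim_le_of_polynomial_surjective
    (φ := (Polynomial.aeval (R := Algebra.adjoin A T) x).rangeRestrict.toRingHom)
    (AlgHom.rangeRestrict_surjective _)
    (p := Polynomial.C ⟨c, hc⟩ * Polynomial.X - Polynomial.C ⟨c * x, hcx⟩) (fun h0 ↦ hc0 ?_)
    (Subtype.ext ?_)
  · have hcoeff : (⟨c, hc⟩ : Algebra.adjoin A T) = 0 := by
      simpa [Polynomial.coeff_C] using congrArg (fun p ↦ p.coeff 1) h0
    exact congrArg Subtype.val hcoeff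
  · change Polynomial.aeval (R := Algebra.adjoin A T) x _ = 0
    simp

lemma ringKrullDim_adjoin_union_le {A B : Type*} [CommRing A] [IsNoetherianRing A] [CommRing B]
    [IsDomain B] [Algebra A B] {s T : Set B} (hs : s.Finite) (hT : T.Finite)
    (h : ∀ x ∈ s, ∃ c ∈ Algebra.adjoin A T, c ≠ 0 ∧ c * x ∈ Algebra.adjoin A T) :
    ringKrullDim (Algebra.adjoin A (s ∪ T)) ≤ ringKrullDim (Algebra.adjoin A T) := by
  induction s, hs using Set.Finite.induction_on with
  | empty => rw [Set.empty_union]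
  | @insert x s _ hs ih =>
    have hle : Algebra.adjoin A T ≤ Algebra.adjoin A (s ∪ T) :=
      Algebra.adjoin_mono Set.subset_union_right
    obtain ⟨c, hc, hc0, hcx⟩ := h x (Set.mem_insert _ _)
    rw [Set.insert_union]
    exact (ringKrullDim_adjoin_insert_le (hs.union hT) (hle hc) hc0 (hle hcx)).trans
      (ih fun y hy ↦ h y (Set.mem_insert_of_mem _ hy))

lemma ringKrullDim_adjoin_range_le {A B : Type*} [CommRing A] [IsNoetherianRing A] [CommRing B]
    [Algebra A B] {r : ℕ} (f : Fin r → B) :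
    ringKrullDim (Algebra.adjoin A (Set.range f)) ≤ ringKrullDim A + r := by
  rw [Algebra.adjoin_range_eq_range_aeval]
  refine (ringKrullDim_le_of_surjective
    (aeval f : MvPolynomial (Fin r) A →ₐ[A] B).rangeRestrict.toRingHom
    (AlgHom.rangeRestrict_surjective _)).trans_eq ?_
  rw [MvPolynomial.ringKrullDim_of_isNoetherianRing, Nat.card_eq_fintype_card, Fintype.card_fin]

variable {A : Type u} [CommRing A] {I J : Ideal A}

/-- The projection of `A[It₁, Jt₂]` onto its subring `A[Jt₂]` of elements of `t₁`-degree zero. -/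
noncomputable def biReesProjection (I J : Ideal A) : biRees I J →+* biRees I J :=
  Polynomial.constantCoeff.comp (biReesGradingHom I J 0)

lemma bicoeff_biReesProjection (f : biRees I J) (m n : ℕ) :
    bicoeff (biReesProjection I J f).1 m n = if m = 0 then bicoeff f.1 m n else 0 := by
  simpa [bicoeff, biReesProjection] using coeff_coeff_biReesGradingHom 0 f 0 (bidegree m n)

lemma biReesProjection_biReesMonomial {m n : ℕ} {a : A} (ha : a ∈ I ^ m * J ^ n) :
    biReesProjection I J (biReesMonomial I J m n a ha) =
      if m = 0 then biReesMonomial I J m n a ha else 0 := by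
  change (biReesGradingHom I J 0 _).coeff 0 = _
  rw [biReesGradingHom_biReesMonomial, Polynomial.coeff_monomial, bidegree_apply_zero]

lemma bot_lt_ker_biReesProjection (hI : I ≠ ⊥) :
    (⊥ : Ideal (biRees I J)) < RingHom.ker (biReesProjection I J) := by
  obtain ⟨a, haI, ha0⟩ := Submodule.exists_mem_ne_zero_of_ne_bot hI
  refine SetLike.lt_iff_le_and_exists.mpr
    ⟨bot_le, biReesMonomial I J 1 0 a (by simpa using haI), ?_, fun h ↦ ha0 ?_⟩
  · exact (biReesProjection_biReesMonomial _).trans (if_neg one_ne_zero)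
  · simpa [biReesMonomial] using congrArg (fun f : biRees I J ↦ bicoeff f.1 1 0) h

lemma ker_biReesProjection_lt (hJ : J ≠ ⊥) :
    RingHom.ker (biReesProjection I J) < RingHom.ker (biReesConstantCoeff I J) := by
  obtain ⟨b, hbJ, hb0⟩ := Submodule.exists_mem_ne_zero_of_ne_bot hJ
  refine SetLike.lt_iff_le_and_exists.mpr
    ⟨fun f hf ↦ ?_, biReesMonomial I J 0 1 b (by simpa using hbJ), ?_, fun h ↦ hb0 ?_⟩
  · rw [RingHom.mem_ker, biReesConstantCoeff_apply]
    simpa [bicoeff_biReesProjection] using congrArg (fun f : biRees I J ↦ bicoeff f.1 0 0) hf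
  · rw [RingHom.mem_ker, biReesConstantCoeff_apply]
    simp [biReesMonomial, bicoeff_bimonomial]
  · rw [RingHom.mem_ker, biReesProjection_biReesMonomial, if_pos rfl] at h
    simpa [biReesMonomial] using congrArg (fun f : biRees I J ↦ bicoeff f.1 0 1) h

variable [IsDomain A] [IsNoetherianRing A]

-- If `a ∈ I` and `b ∈ J` are nonzero, `A[It₁, Jt₂]` is birational to its subring `A[at₁, bt₂]`.
lemma ringKrullDim_biRees_le (hI : I ≠ ⊥) (hJ : J ≠ ⊥) :
    ringKrullDim (biRees I J) ≤ ringKrullDim A + 2 := by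
  obtain ⟨a, haI, ha0⟩ := Submodule.exists_mem_ne_zero_of_ne_bot hI
  obtain ⟨b, hbJ, hb0⟩ := Submodule.exists_mem_ne_zero_of_ne_bot hJ
  obtain ⟨s, hs⟩ := IsNoetherian.noetherian I
  obtain ⟨t, ht⟩ := IsNoetherian.noetherian J
  set T : Set (MvPolynomial (Fin 2) A) := Set.range ![bimonomial 1 0 a, bimonomial 0 1 b]
  have ha : bimonomial 1 0 a ∈ Algebra.adjoin A T := Algebra.subset_adjoin ⟨0, rfl⟩
  have hb : bimonomial 0 1 b ∈ Algebra.adjoin A T := Algebra.subset_adjoin ⟨1, rfl⟩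
  have hconst (c : A) : bimonomial 0 0 c ∈ Algebra.adjoin A T := by
    rw [bimonomial_zero_zero]
    exact Subalgebra.algebraMap_mem _ c
  have hne {c : A} (hc : c ≠ 0) : bimonomial 0 0 c ≠ 0 := fun h ↦
    hc (bimonomial_injective 0 0 (h.trans (bimonomial_zero 0 0).symm))
  have hbiRees : biRees I J =
      Algebra.adjoin A (bimonomial 1 0 '' (s : Set A) ∪ bimonomial 0 1 '' (t : Set A) ∪ T) := by
    have hspan : biRees I J =
        Algebra.adjoin A (bimonomial 1 0 '' (s : Set A) ∪ bimonomial 0 1 '' (t : Set A)) := by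
      rw [← biRees_span_span, ← Ideal.submodule_span_eq, hs, ← Ideal.submodule_span_eq, ht]
    refine le_antisymm (hspan ▸ Algebra.adjoin_mono Set.subset_union_left)
      (Algebra.adjoin_le (Set.union_subset (hspan ▸ Algebra.subset_adjoin) ?_))
    rintro _ ⟨i, rfl⟩
    fin_cases i
    · exact bimonomial_mem_biRees.mpr (by simpa using haI)
    · exact bimonomial_mem_biRees.mpr (by simpa using hbJ)
  rw [hbiRees]
  refine (ringKrullDim_adjoin_union_le ((s.finite_toSet.image _).union (t.finite_toSet.image _))
    (Set.finite_range _) ?_).trans (ringKrullDim_adjoin_range_le _)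
  rintro _ (⟨x, _, rfl⟩ | ⟨x, _, rfl⟩)
  · refine ⟨bimonomial 0 0 a, hconst a, hne ha0, ?_⟩
    have hmem := mul_mem (hconst x) ha
    rwa [bimonomial_mul, mul_comm x, ← bimonomial_mul] at hmem
  · refine ⟨bimonomial 0 0 b, hconst b, hne hb0, ?_⟩
    have hmem := mul_mem (hconst x) hb
    rwa [bimonomial_mul, mul_comm x, ← bimonomial_mul] at hmem

lemma height_add_two_le_height_comap_biReesConstantCoeff (hI : I ≠ ⊥) (hJ : J ≠ ⊥) (p : Ideal A)
    [p.IsPrime] : p.height + 2 ≤ (p.comap (biReesConstantCoeff I J)).height := by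
  obtain ⟨l, hlast, hlength⟩ := p.exists_ltSeries_length_eq_height
  have hsurj : Function.Surjective (biReesConstantCoeff I J) := fun a ↦
    ⟨_, biReesConstantCoeff_algebraMap a⟩
  let l' := l.map _ (RingHom.strictMono_comap_of_surjective hsurj)
  have hlast' : l'.last.asIdeal = p.comap (biReesConstantCoeff I J) := by
    simp [l', hlast]
  have hhead : 2 ≤ l'.head.asIdeal.height := by
    have : (RingHom.ker (biReesProjection I J)).IsPrime := RingHom.ker_isPrime _
    have hlt : RingHom.ker (biReesProjection I J) < l'.head.asIdeal :=
      (ker_biReesProjection_lt hJ).trans_le (Ideal.comap_mono bot_le)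
    calc (2 : ℕ∞) = (⊥ : Ideal (biRees I J)).height + 1 + 1 := by simp [one_add_one_eq_two]
      _ ≤ (RingHom.ker (biReesProjection I J)).height + 1 := by
        gcongr; exact Ideal.height_add_one_le_of_lt_of_isPrime (bot_lt_ker_biReesProjection hI)
      _ ≤ _ := Ideal.height_add_one_le_of_lt_of_isPrime hlt
  calc p.height + 2 = 2 + l'.length := by rw [← hlength, add_comm]; rfl
    _ ≤ l'.head.asIdeal.height + l'.length := by gcongr
    _ ≤ _ := hlast' ▸ height_head_add_length_le_height_last l'

variable [IsLocalRing A]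

lemma height_gradedMaximalIdeal (hI : I ≠ ⊥) (hJ : J ≠ ⊥) :
    ((gradedMaximalIdeal I J).height : WithBot ℕ∞) = ringKrullDim A + 2 := by
  refine le_antisymm
    (Ideal.height_le_ringKrullDim_of_isPrime.trans (ringKrullDim_biRees_le hI hJ)) ?_
  rw [← maximalIdeal_height_eq_ringKrullDim]
  exact WithBot.coe_le_coe.mpr
    (height_add_two_le_height_comap_biReesConstantCoeff hI hJ (maximalIdeal A))

end Dimension

section Generic

open IsLocalRing

lemma subsingleton_of_finite_of_infinite_residueField {A M : Type*} [CommRing A] [IsLocalRing A]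
    [Infinite (ResidueField A)] [AddCommGroup M] [Module A M] [Finite M] : Subsingleton M := by
  by_contra hM
  have : Nontrivial M := not_subsingleton_iff_nontrivial.mp hM
  obtain ⟨x, hx⟩ := exists_ne (0 : M)
  let f := LinearMap.toSpanSingleton A M x
  have hker : LinearMap.ker f ≠ ⊤ := fun h ↦
    hx (by simpa [f] using (h ▸ Submodule.mem_top : (1 : A) ∈ LinearMap.ker f))
  have : Finite (A ⧸ LinearMap.ker f) := .of_equiv _ f.quotKerEquivRange.symm.toEquiv
  have : Finite (ResidueField A) := .of_surjective _
    (Ideal.Quotient.factor_surjective (le_maximalIdeal hker))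
  exact not_finite (ResidueField A)

/-- `p a` holds for generic `a ∈ I`: for all `a ∈ I` outside finitely many ideals not containing
`I`. -/
def Generically {A : Type*} [CommRing A] (I : Ideal A) (p : A → Prop) : Prop :=
  ∃ W : Set (Ideal A), W.Finite ∧ (∀ w ∈ W, ¬ I ≤ w) ∧ ∀ a ∈ I, (∀ w ∈ W, a ∉ w) → p a

namespace Generically

variable {A : Type*} [CommRing A] {I : Ideal A} {p q : A → Prop}

lemma and (hp : Generically I p) (hq : Generically I q) :
    Generically I fun a ↦ p a ∧ q a := by
  obtain ⟨W, hW, hIW, hWp⟩ := hp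
  obtain ⟨V, hV, hIV, hVq⟩ := hq
  refine ⟨W ∪ V, hW.union hV, fun w hw ↦ hw.elim (hIW w) (hIV w), fun a ha haw ↦ ⟨?_, ?_⟩⟩
  · exact hWp a ha fun w hw ↦ haw w (.inl hw)
  · exact hVq a ha fun w hw ↦ haw w (.inr hw)

lemma exists_mem [IsLocalRing A] [Infinite (ResidueField A)] (hp : Generically I p) :
    ∃ a ∈ I, p a := by
  obtain ⟨W, hW, hIW, hWp⟩ := hp
  by_contra! hcon
  have hcover : ⋃ w ∈ hW.toFinset, (Submodule.comap I.subtype w : Set I) = Set.univ := by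
    refine Set.eq_univ_of_forall fun a ↦ ?_
    by_contra ha
    refine hcon a a.2 (hWp a a.2 fun w hw haw ↦ ha ?_)
    exact Set.mem_biUnion (hW.mem_toFinset.mpr hw) haw
  obtain ⟨w, hw, _⟩ := Submodule.exists_finiteIndex_of_cover hcover
  have : Finite (I ⧸ Submodule.comap I.subtype w) :=
    inferInstanceAs (Finite (I ⧸ (Submodule.comap I.subtype w).toAddSubgroup))
  have htop : Submodule.comap I.subtype w = ⊤ :=
    Submodule.Quotient.subsingleton_iff.mp
      (subsingleton_of_finite_of_infinite_residueField (A := A))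
  exact hIW w (hW.mem_toFinset.mp hw) fun a ha ↦ (htop ▸ Submodule.mem_top : (⟨a, ha⟩ : I) ∈ _)

lemma mono (hp : Generically I p) (h : ∀ a ∈ I, p a → q a) : Generically I q := by
  obtain ⟨W, hW, hIW, hWp⟩ := hp
  exact ⟨W, hW, hIW, fun a ha haw ↦ h a ha (hWp a ha haw)⟩

end Generically

lemma generically_forall_mem_imp_le {A : Type*} [CommRing A] {I : Ideal A} {W : Set (Ideal A)}
    (hW : W.Finite) : Generically I fun a ↦ ∀ w ∈ W, a ∈ w → I ≤ w :=
  ⟨{w ∈ W | ¬ I ≤ w}, hW.subset (Set.sep_subset _ _), fun _ hw ↦ hw.2,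
    fun _ _ h w hw haw ↦ by_contra fun hI ↦ h w ⟨hw, hI⟩ haw⟩

end Generic

section JointReduction

open MvPolynomial IsLocalRing

universe u

variable {A : Type u} [CommRing A] {I J : Ideal A} {a b : A}

/-- `(a, b)` is a joint reduction of `(I, J)`: `a ∈ I`, `b ∈ J` and `a J + b I` is a reduction of
`I J`, the latter in the form `Iⁿ⁺¹ Jⁿ⁺¹ = a Iⁿ Jⁿ⁺¹ + b Iⁿ⁺¹ Jⁿ` for some `n`. -/
structure IsJointReduction (I J : Ideal A) (a b : A) : Prop where
  left_mem : a ∈ I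
  right_mem : b ∈ J
  exists_le : ∃ n, I ^ (n + 1) * J ^ (n + 1) ≤
    Ideal.span {a} * (I ^ n * J ^ (n + 1)) ⊔ Ideal.span {b} * (I ^ (n + 1) * J ^ n)

lemma bicoeff_mem_of_mem_map {K : Ideal A} {f : biRees I J}
    (hf : f ∈ K.map (algebraMap A (biRees I J))) (m n : ℕ) :
    bicoeff f.1 m n ∈ K * (I ^ m * J ^ n) := by
  let φ : biRees I J →ₗ[A] A := lcoeff A (bidegree m n) ∘ₗ (biRees I J).val.toLinearMap
  have hφ : Submodule.map φ ⊤ ≤ I ^ m * J ^ n := by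
    rintro _ ⟨g, -, rfl⟩
    exact mem_biRees.mp g.2 m n
  have hmem : f ∈ K • (⊤ : Submodule A (biRees I J)) := by rwa [Ideal.smul_top_eq_map]
  have hmap := Submodule.mem_map_of_mem (f := φ) hmem
  rw [Submodule.map_smul''] at hmap
  exact smul_mono_right K hφ hmap

lemma coeffIdeal_map_sup_span_sup_span_le (K : Ideal A) (ha : a ∈ I ^ 1 * J ^ 0)
    (hb : b ∈ I ^ 0 * J ^ 1) (m n : ℕ) :
    coeffIdeal (K.map (algebraMap A (biRees I J)) ⊔ Ideal.span {biReesMonomial I J 1 0 a ha} ⊔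
      Ideal.span {biReesMonomial I J 0 1 b hb}) (m + 1) (n + 1) ≤
    Ideal.span {a} * (I ^ m * J ^ (n + 1)) ⊔ Ideal.span {b} * (I ^ (m + 1) * J ^ n) ⊔
      K * (I ^ (m + 1) * J ^ (n + 1)) := fun c hc ↦ by
  obtain ⟨hc, hcP⟩ := mem_coeffIdeal.mp hc
  obtain ⟨f, hf, _, hh, hsum⟩ := Submodule.mem_sup.mp hcP
  obtain ⟨e, he, _, hg, rfl⟩ := Submodule.mem_sup.mp hf
  obtain ⟨h, rfl⟩ := Ideal.mem_span_singleton.mp hh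
  obtain ⟨g, rfl⟩ := Ideal.mem_span_singleton.mp hg
  have hcoeff : bicoeff e.1 (m + 1) (n + 1) + a * bicoeff g.1 m (n + 1) +
      b * bicoeff h.1 (m + 1) n = c := by
    simpa [biReesMonomial, bicoeff_add, bicoeff_bimonomial_mul] using
      congrArg (fun f : biRees I J ↦ bicoeff f.1 (m + 1) (n + 1)) hsum
  rw [← hcoeff]
  refine add_mem (add_mem ?_ ?_) ?_
  · exact Ideal.mem_sup_right (bicoeff_mem_of_mem_map he _ _)
  · exact Ideal.mem_sup_left (Ideal.mem_sup_left
      (Ideal.mul_mem_mul (Ideal.mem_span_singleton_self a) (mem_biRees.mp g.2 _ _)))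
  · exact Ideal.mem_sup_left (Ideal.mem_sup_right
      (Ideal.mul_mem_mul (Ideal.mem_span_singleton_self b) (mem_biRees.mp h.2 _ _)))

lemma coeffIdeal_pow_le (P : Ideal (biRees I J)) (m n k : ℕ) :
    coeffIdeal P m n ^ k ≤ coeffIdeal (P ^ k) (k * m) (k * n) := by
  induction k with
  | zero => simp [coeffIdeal_top]
  | succ k ih =>
    rw [pow_succ, pow_succ, add_one_mul, add_one_mul]
    exact (Ideal.mul_mono_left ih).trans (coeffIdeal_mul_le _ _ _ _ _ _)

lemma le_coeffIdeal_or_le_of_mul_le {P : Ideal (biRees I J)} [hP : P.IsPrime] {m n i j : ℕ}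
    (h : I ^ m * J ^ n * (I ^ i * J ^ j) ≤ coeffIdeal P (m + i) (n + j)) :
    I ^ m * J ^ n ≤ coeffIdeal P m n ∨ I ^ i * J ^ j ≤ coeffIdeal P i j := by
  by_contra! hcon
  obtain ⟨c, hc, hcP⟩ := SetLike.not_le_iff_exists.mp hcon.1
  obtain ⟨d, hd, hdP⟩ := SetLike.not_le_iff_exists.mp hcon.2
  rw [mem_coeffIdeal_iff hc] at hcP
  rw [mem_coeffIdeal_iff hd] at hdP
  have hcd := (mem_coeffIdeal_iff (mul_mem_pow_mul_pow hc hd)).mp (h (Ideal.mul_mem_mul hc hd))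
  rw [← biReesMonomial_mul hc hd] at hcd
  exact (hP.mem_or_mem hcd).elim hcP hdP

lemma le_coeffIdeal_of_pow_le {P : Ideal (biRees I J)} [hP : P.IsPrime] {m n k : ℕ}
    (h : (I ^ m * J ^ n) ^ k ≤ coeffIdeal P (k * m) (k * n)) :
    I ^ m * J ^ n ≤ coeffIdeal P m n := by
  induction k with
  | zero =>
    have htop : P = ⊤ := by
      rw [Ideal.eq_top_iff_one, ← map_one (algebraMap A (biRees I J)), ← Ideal.mem_comap,
        ← coeffIdeal_zero_zero]
      simpa [Ideal.eq_top_iff_one] using h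
    exact absurd htop hP.ne_top
  | succ k ih =>
    rw [pow_succ, mul_pow, ← pow_mul', ← pow_mul', add_one_mul, add_one_mul] at h
    refine (le_coeffIdeal_or_le_of_mul_le h).elim (fun h ↦ ih ?_) id
    rwa [mul_pow, ← pow_mul', ← pow_mul']

lemma le_coeffIdeal_or_of_pow_le {P : Ideal (biRees I J)} [P.IsPrime] {n : ℕ}
    (h : I ^ n * J ^ n ≤ coeffIdeal P n n) : I ≤ coeffIdeal P 1 0 ∨ J ≤ coeffIdeal P 0 1 := by
  have h' : I ^ n * J ^ 0 * (I ^ 0 * J ^ n) ≤ coeffIdeal P (n + 0) (0 + n) := by simpa using h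
  refine (le_coeffIdeal_or_le_of_mul_le h').imp (fun h ↦ ?_) (fun h ↦ ?_)
  · simpa using le_coeffIdeal_of_pow_le (P := P) (m := 1) (n := 0) (k := n) (by simpa using h)
  · simpa using le_coeffIdeal_of_pow_le (P := P) (m := 0) (n := 1) (k := n) (by simpa using h)

lemma map_sup_span_le_iff {L : Ideal A} (ha : a ∈ I ^ 1 * J ^ 0) {P : Ideal (biRees I J)} :
    L.map (algebraMap A (biRees I J)) ⊔ Ideal.span {biReesMonomial I J 1 0 a ha} ≤ P ↔
      L ≤ coeffIdeal P 0 0 ∧ a ∈ coeffIdeal P 1 0 := by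
  rw [sup_le_iff, Ideal.map_le_iff_le_comap, coeffIdeal_zero_zero, mem_coeffIdeal_iff ha,
    Ideal.span_singleton_le_iff_mem]

lemma map_sup_span_sup_span_le_iff {L : Ideal A} (ha : a ∈ I ^ 1 * J ^ 0)
    (hb : b ∈ I ^ 0 * J ^ 1) {P : Ideal (biRees I J)} :
    L.map (algebraMap A (biRees I J)) ⊔ Ideal.span {biReesMonomial I J 1 0 a ha} ⊔
      Ideal.span {biReesMonomial I J 0 1 b hb} ≤ P ↔
      L ≤ coeffIdeal P 0 0 ∧ a ∈ coeffIdeal P 1 0 ∧ b ∈ coeffIdeal P 0 1 := by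
  rw [sup_le_iff, map_sup_span_le_iff, Ideal.span_singleton_le_iff_mem, mem_coeffIdeal_iff hb,
    and_assoc]

lemma isJointReduction_of_forall_isPrime [IsNoetherianRing A] [IsLocalRing A] (ha : a ∈ I)
    (hb : b ∈ J)
    (h : ∀ P : Ideal (biRees I J), P.IsPrime → maximalIdeal A ≤ coeffIdeal P 0 0 →
      a ∈ coeffIdeal P 1 0 → b ∈ coeffIdeal P 0 1 →
        I ≤ coeffIdeal P 1 0 ∨ J ≤ coeffIdeal P 0 1) :
    IsJointReduction I J a b := by
  have ha' : a ∈ I ^ 1 * J ^ 0 := by simpa using ha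
  have hb' : b ∈ I ^ 0 * J ^ 1 := by simpa using hb
  set K := (maximalIdeal A).map (algebraMap A (biRees I J)) ⊔
    Ideal.span {biReesMonomial I J 1 0 a ha'} ⊔ Ideal.span {biReesMonomial I J 0 1 b hb'}
  have hrad : I ^ 1 * J ^ 1 ≤ coeffIdeal K.radical 1 1 := fun c hc ↦ by
    rw [mem_coeffIdeal_iff hc, Ideal.radical_eq_sInf, Ideal.mem_sInf]
    rintro P ⟨hKP, hP⟩
    obtain ⟨hmP, haP, hbP⟩ := (map_sup_span_sup_span_le_iff ha' hb').mp hKP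
    refine (mem_coeffIdeal_iff hc).mp ?_
    obtain hI | hJ := h P hP hmP haP hbP
    · exact pow_mul_pow_le_coeffIdeal (by simpa using hI) le_rfl zero_le_one hc
    · exact pow_mul_pow_le_coeffIdeal (by simpa using hJ) zero_le_one le_rfl hc
  obtain ⟨n, hn⟩ := K.exists_radical_pow_le_of_fg (IsNoetherian.noetherian _)
  have hle : I ^ n * J ^ n ≤ coeffIdeal K n n := by
    calc I ^ n * J ^ n = (I ^ 1 * J ^ 1) ^ n := by rw [pow_one, pow_one, mul_pow]
      _ ≤ coeffIdeal K.radical 1 1 ^ n := Ideal.pow_right_mono hrad n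
      _ ≤ coeffIdeal (K.radical ^ n) (n * 1) (n * 1) := coeffIdeal_pow_le _ _ _ _
      _ ≤ coeffIdeal K n n := by rw [mul_one]; exact coeffIdeal_mono hn _ _
  refine ⟨ha, hb, n, ?_⟩
  refine Submodule.le_of_le_smul_of_le_jacobson_bot (IsNoetherian.noetherian _)
    (maximalIdeal_le_jacobson _) ?_
  exact (pow_mul_pow_le_coeffIdeal hle n.le_succ n.le_succ).trans
    (coeffIdeal_map_sup_span_sup_span_le _ ha' hb' n n)

lemma height_add_two_le_height_gradedMaximalIdeal [IsLocalRing A] {P : Ideal (biRees I J)}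
    [P.IsPrime] (hP : ∀ i, homogeneousPart (biReesGradingHom I J i) P = P)
    (hI : ¬ I ≤ coeffIdeal P 1 0) (hJ : ¬ J ≤ coeffIdeal P 0 1) :
    P.height + 1 + 1 ≤ (gradedMaximalIdeal I J).height := by
  obtain ⟨c, hc, hcP⟩ := SetLike.not_le_iff_exists.mp hI
  obtain ⟨d, hd, hdP⟩ := SetLike.not_le_iff_exists.mp hJ
  rw [mem_coeffIdeal_iff (by simpa using hc)] at hcP
  rw [mem_coeffIdeal_iff (by simpa using hd)] at hdP
  have hlt₁ : P < P.comap (biReesProjection I J) := by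
    refine SetLike.lt_iff_le_and_exists.mpr ⟨fun f hf ↦ ?_, _, ?_, hcP⟩
    · exact mem_homogeneousPart.mp ((hP 0).symm ▸ hf) 0
    · rw [Ideal.mem_comap, biReesProjection_biReesMonomial, if_neg one_ne_zero]
      exact P.zero_mem
  have hlt₂ : P.comap (biReesProjection I J) < gradedMaximalIdeal I J := by
    refine SetLike.lt_iff_le_and_exists.mpr ⟨fun f hf ↦ ?_,
      biReesMonomial I J 0 1 d (by simpa using hd), ?_, fun h ↦ hdP ?_⟩
    · have hle := homogeneousPart_homogeneousPart_le_gradedMaximalIdeal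
        (Ideal.IsPrime.ne_top ‹P.IsPrime›)
      rw [hP 0, hP 1] at hle
      simpa [mem_gradedMaximalIdeal, bicoeff_biReesProjection] using hle hf
    · simp [mem_gradedMaximalIdeal, biReesMonomial, bicoeff_bimonomial]
    · rwa [Ideal.mem_comap, biReesProjection_biReesMonomial, if_pos rfl] at h
  calc P.height + 1 + 1 ≤ (P.comap (biReesProjection I J)).height + 1 := by
        gcongr; exact Ideal.height_add_one_le_of_lt_of_isPrime hlt₁
    _ ≤ _ := Ideal.height_add_one_le_of_lt_of_isPrime hlt₂

lemma three_le_height_of_lt {R : Type*} [CommRing R] {P₀ P₁ P₂ P₃ : Ideal R} [P₀.IsPrime]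
    [P₁.IsPrime] [P₂.IsPrime] [P₃.IsPrime] (h₀ : P₀ < P₁) (h₁ : P₁ < P₂) (h₂ : P₂ < P₃) :
    3 ≤ P₃.height := by
  calc (3 : ℕ∞) ≤ P₀.height + 1 + 1 + 1 := by
        rw [add_assoc, add_assoc]
        exact le_add_self
    _ ≤ P₁.height + 1 + 1 := by
      gcongr
      exact Ideal.height_add_one_le_of_lt_of_isPrime h₀
    _ ≤ P₂.height + 1 := by
      gcongr
      exact Ideal.height_add_one_le_of_lt_of_isPrime h₁
    _ ≤ P₃.height := Ideal.height_add_one_le_of_lt_of_isPrime h₂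

lemma bot_lt_of_map_maximalIdeal_le [IsDomain A] [IsLocalRing A] (hdim : ringKrullDim A ≠ 0)
    {P : Ideal (biRees I J)} (hP : (maximalIdeal A).map (algebraMap A (biRees I J)) ≤ P) :
    ⊥ < P := by
  refine bot_lt_iff_ne_bot.mpr fun h ↦ hdim ?_
  have hm : maximalIdeal A = ⊥ := by
    rw [eq_bot_iff, ← Ideal.comap_bot_of_injective (algebraMap A (biRees I J))
      (FaithfulSMul.algebraMap_injective _ _), ← Ideal.map_le_iff_le_comap, ← h]
    exact hP
  exact ringKrullDim_eq_zero_of_isField (IsLocalRing.isField_iff_maximalIdeal_eq.mpr hm)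

lemma le_coeffIdeal_or_of_forall_minimalPrimes [IsDomain A] [IsNoetherianRing A] [IsLocalRing A]
    (hdim : ringKrullDim A = 2) (ha : a ∈ I ^ 1 * J ^ 0) (hb : b ∈ I ^ 0 * J ^ 1)
    (hI : ∀ P ∈ ((maximalIdeal A).map (algebraMap A (biRees I J))).minimalPrimes,
      a ∈ coeffIdeal P 1 0 → I ≤ coeffIdeal P 1 0)
    (hJ : ∀ P ∈ ((maximalIdeal A).map (algebraMap A (biRees I J)) ⊔
      Ideal.span {biReesMonomial I J 1 0 a ha}).minimalPrimes,
      b ∈ coeffIdeal P 0 1 → J ≤ coeffIdeal P 0 1)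
    {P : Ideal (biRees I J)} [P.IsPrime] (hmP : maximalIdeal A ≤ coeffIdeal P 0 0)
    (haP : a ∈ coeffIdeal P 1 0) (hbP : b ∈ coeffIdeal P 0 1) :
    I ≤ coeffIdeal P 1 0 ∨ J ≤ coeffIdeal P 0 1 := by
  by_contra! hcon
  obtain ⟨Q, hQ, hQP⟩ := Ideal.exists_minimalPrimes_le
    ((map_sup_span_sup_span_le_iff ha hb).mpr ⟨hmP, haP, hbP⟩)
  have hQI : ¬ I ≤ coeffIdeal Q 1 0 := fun h ↦ hcon.1 (h.trans (coeffIdeal_mono hQP _ _))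
  have hQJ : ¬ J ≤ coeffIdeal Q 0 1 := fun h ↦ hcon.2 (h.trans (coeffIdeal_mono hQP _ _))
  have hI0 : I ≠ ⊥ := fun h ↦ hQI (h.le.trans bot_le)
  have hJ0 : J ≠ ⊥ := fun h ↦ hQJ (h.le.trans bot_le)
  have := hQ.1.1
  obtain ⟨hmQ, haQ, hbQ⟩ := (map_sup_span_sup_span_le_iff ha hb).mp hQ.1.2
  have hhom (i : Fin 2) : homogeneousPart (biReesGradingHom I J i) Q = Q := by
    refine (isGradingHom_biReesGradingHom I J i).homogeneousPart_eq_of_mem_minimalPrimes hQ ?_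
    have hle := coeffIdeal_le_coeffIdeal_homogeneousPart i Q
    exact (map_sup_span_sup_span_le_iff ha hb).mpr
      ⟨hmQ.trans (hle 0 0), hle 1 0 haQ, hle 0 1 hbQ⟩
  obtain ⟨P₁, hP₁, hP₁Q⟩ := Ideal.exists_minimalPrimes_le
    ((map_sup_span_le_iff ha).mpr ⟨hmQ, haQ⟩)
  have := hP₁.1.1
  obtain ⟨hmP₁, haP₁⟩ := (map_sup_span_le_iff ha).mp hP₁.1.2
  obtain ⟨P₀, hP₀, hP₀P₁⟩ := Ideal.exists_minimalPrimes_le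
    (Ideal.map_le_iff_le_comap.mpr (coeffIdeal_zero_zero P₁ ▸ hmP₁))
  have := hP₀.1.1
  have hlt₀ : P₀ < P₁ := lt_of_le_of_ne hP₀P₁ fun h ↦
    hQI ((hI P₀ hP₀ (h ▸ haP₁)).trans (coeffIdeal_mono (hP₀P₁.trans hP₁Q) _ _))
  have hlt₁ : P₁ < Q := lt_of_le_of_ne hP₁Q fun h ↦
    hQJ ((hJ P₁ hP₁ (h ▸ hbQ)).trans (coeffIdeal_mono hP₁Q _ _))
  have hbot : ⊥ < P₀ := bot_lt_of_map_maximalIdeal_le (by simp [hdim]) hP₀.1.2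
  have hQ3 := three_le_height_of_lt hbot hlt₀ hlt₁
  have hle := height_add_two_le_height_gradedMaximalIdeal hhom hQI hQJ
  have hdimN := height_gradedMaximalIdeal hI0 hJ0
  have hcast : (2 + 2 : WithBot ℕ∞) = ((2 + 2 : ℕ∞) : WithBot ℕ∞) := rfl
  rw [hdim, hcast, WithBot.coe_inj] at hdimN
  rw [hdimN] at hle
  have hlt : (2 + 2 : ℕ∞) < 3 + 1 + 1 := by norm_num
  exact absurd ((by gcongr : (3 + 1 + 1 : ℕ∞) ≤ Q.height + 1 + 1).trans hle) hlt.not_ge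

lemma generically_isJointReduction [IsDomain A] [IsNoetherianRing A] [IsLocalRing A]
    (hdim : ringKrullDim A = 2) (I J : Ideal A) :
    Generically I fun a ↦ Generically J fun b ↦ IsJointReduction I J a b := by
  refine (generically_forall_mem_imp_le (Set.Finite.image (coeffIdeal · 1 0)
    (Ideal.finite_minimalPrimes_of_isNoetherianRing (biRees I J)
      ((maximalIdeal A).map (algebraMap A (biRees I J)))))).mono fun a ha hgena ↦ ?_
  have ha' : a ∈ I ^ 1 * J ^ 0 := by simpa using ha
  refine (generically_forall_mem_imp_le (Set.Finite.image (coeffIdeal · 0 1)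
    (Ideal.finite_minimalPrimes_of_isNoetherianRing (biRees I J)
      ((maximalIdeal A).map (algebraMap A (biRees I J)) ⊔
        Ideal.span {biReesMonomial I J 1 0 a ha'})))).mono fun b hb hgenb ↦ ?_
  have hb' : b ∈ I ^ 0 * J ^ 1 := by simpa using hb
  exact isJointReduction_of_forall_isPrime ha hb fun P _ hmP haP hbP ↦
    le_coeffIdeal_or_of_forall_minimalPrimes hdim ha' hb'
      (fun P hP ↦ hgena _ ⟨P, hP, rfl⟩) (fun P hP ↦ hgenb _ ⟨P, hP, rfl⟩) hmP haP hbP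

lemma IsJointReduction.le_coeffIdeal_or (h : IsJointReduction I J a b) {P : Ideal (biRees I J)}
    [P.IsPrime] (ha : a ∈ coeffIdeal P 1 0) (hb : b ∈ coeffIdeal P 0 1) :
    I ≤ coeffIdeal P 1 0 ∨ J ≤ coeffIdeal P 0 1 := by
  obtain ⟨n, hn⟩ := h.exists_le
  refine le_coeffIdeal_or_of_pow_le (hn.trans (sup_le ?_ ?_))
  · rw [mul_comm]
    exact (Ideal.mul_mono_right ((Ideal.span_singleton_le_iff_mem _).mpr ha)).trans
      (mul_coeffIdeal_le P n (n + 1) 1 0)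
  · rw [mul_comm]
    exact (Ideal.mul_mono_right ((Ideal.span_singleton_le_iff_mem _).mpr hb)).trans
      (mul_coeffIdeal_le P (n + 1) n 0 1)

lemma le_coeffIdeal_of_pow_le_mul {P : Ideal (biRees I J)} [P.IsPrime] {m n k : ℕ} {L : Ideal A}
    (h : (I ^ m * J ^ n) ^ (k + 1) ≤ L * (I ^ m * J ^ n) ^ k) (hL : L ≤ coeffIdeal P m n) :
    I ^ m * J ^ n ≤ coeffIdeal P m n := by
  refine le_coeffIdeal_of_pow_le (k := k + 1) ?_
  calc (I ^ m * J ^ n) ^ (k + 1) ≤ I ^ (k * m) * J ^ (k * n) * L := by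
        rwa [pow_mul', pow_mul', ← mul_pow, mul_comm _ L]
    _ ≤ I ^ (k * m) * J ^ (k * n) * coeffIdeal P m n := Ideal.mul_mono_right hL
    _ ≤ coeffIdeal P ((k + 1) * m) ((k + 1) * n) := by
      rw [add_one_mul, add_one_mul]
      exact mul_coeffIdeal_le P _ _ m n

end JointReduction

section IntegralOverIdeal

open Polynomial

variable {A : Type*} [CommRing A] {K L : Ideal A} {x y : A}

lemma isIntegralOverIdeal_of_sum_range {n : ℕ} (hn : 0 < n) {c : ℕ → A}
    (hc : ∀ i < n, c i ∈ K ^ (n - i)) (h : x ^ n + ∑ i ∈ Finset.range n, c i * x ^ i = 0) :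
    IsIntegralOverIdeal K x := by
  refine ⟨n, hn, fun i ↦ c (n - i), fun i h1 hin ↦ ?_, ?_⟩
  · simpa only [Nat.sub_sub_self hin] using hc (n - i) (by omega)
  · rw [← h]
    congr 1
    refine Finset.sum_bij' (fun i _ ↦ n - i) (fun i _ ↦ n - i) ?_ ?_ ?_ ?_ ?_ <;>
      simp only [Finset.mem_Icc, Finset.mem_range] <;> intros <;>
      first | omega | trivial

lemma isIntegralOverIdeal_of_forall_mul_mem [IsDomain A] (hL : L ≠ ⊥) (hLfg : L.FG)
    (h : ∀ l ∈ L, x * l ∈ K * L) : IsIntegralOverIdeal K x := by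
  have : Module.Finite A L := Module.Finite.iff_fg.mpr hLfg
  have hKL : (K • (⊤ : Submodule A L)).map L.subtype = K * L := by
    rw [Submodule.map_smul'', Submodule.map_top, Submodule.range_subtype, smul_eq_mul]
  have hrange : LinearMap.range (algebraMap A (Module.End A L) x) ≤ K • ⊤ := by
    rintro _ ⟨l, rfl⟩
    have hl : x * l ∈ (K • (⊤ : Submodule A L)).map L.subtype := hKL ▸ h l l.2
    obtain ⟨m, hm, hml⟩ := hl
    rwa [show m = algebraMap A (Module.End A L) x l from Subtype.ext hml] at hm
  obtain ⟨p, hp, -, hcoeff, hp0⟩ :=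
    LinearMap.exists_monic_and_natDegree_eq_and_coeff_mem_pow_and_aeval_eq_zero A _ K hrange
  have hpx : p.eval x = 0 := by
    obtain ⟨l, hl, hl0⟩ := Submodule.exists_mem_ne_zero_of_ne_bot hL
    rw [aeval_algebraMap_apply_eq_algebraMap_eval] at hp0
    have hpl : p.eval x * l = 0 := congrArg Subtype.val (LinearMap.congr_fun hp0 ⟨l, hl⟩)
    exact (mul_eq_zero.mp hpl).resolve_right hl0
  refine isIntegralOverIdeal_of_sum_range (c := p.coeff) (n := p.natDegree)
    (Nat.pos_of_ne_zero fun hdeg ↦ ?_) (fun i _ ↦ hcoeff i) ?_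
  · rw [hp.natDegree_eq_zero.mp hdeg, eval_one] at hpx
    exact one_ne_zero hpx
  · rw [eval_eq_sum_range, Finset.sum_range_succ, hp.coeff_natDegree, one_mul] at hpx
    rw [add_comm, hpx]

lemma sup_pow_succ_le (K X : Ideal A) (m : ℕ) :
    (K ⊔ X) ^ (m + 1) ≤ K * (K ⊔ X) ^ m ⊔ X ^ (m + 1) := by
  induction m with
  | zero => simp
  | succ m ih =>
    have hX : X * (K ⊔ X) ^ (m + 1) ≤ X * (K * (K ⊔ X) ^ m) ⊔ X * X ^ (m + 1) := by
      rw [← Ideal.mul_sup]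
      exact Ideal.mul_mono_right ih
    have hXK : X * (K * (K ⊔ X) ^ m) ≤ K * (K ⊔ X) ^ (m + 1) := by
      rw [mul_left_comm, pow_succ']
      exact Ideal.mul_mono_right (Ideal.mul_mono_left le_sup_right)
    rw [pow_succ' _ (m + 1), Ideal.sup_mul, pow_succ' X]
    exact sup_le le_sup_left (hX.trans (sup_le_sup_right hXK _))

lemma IsIntegralOverIdeal.exists_forall_mul_mem [IsDomain A] (hK : K ≠ ⊥)
    (hx : IsIntegralOverIdeal K x) : ∃ L : Ideal A, L ≠ ⊥ ∧ ∀ l ∈ L, x * l ∈ K * L := by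
  obtain ⟨n, hn, c, hc, h0⟩ := hx
  obtain ⟨n, rfl⟩ := Nat.exists_eq_succ_of_ne_zero hn.ne'
  set X := Ideal.span {x}
  have hxX : x ∈ K ⊔ X := Ideal.mem_sup_right (Ideal.mem_span_singleton_self x)
  have hcx (i : ℕ) (hi : i ∈ Finset.Icc 1 (n + 1)) :
      c i * x ^ (n + 1 - i) ∈ K * (K ⊔ X) ^ n := by
    obtain ⟨hi1, hin⟩ := Finset.mem_Icc.mp hi
    obtain ⟨i, rfl⟩ := Nat.exists_eq_add_of_le' hi1
    have hmul : K ^ (i + 1) * (K ⊔ X) ^ (n - i) ≤ K * (K ⊔ X) ^ n := by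
      rw [pow_succ', mul_assoc, ← Nat.add_sub_cancel' (Nat.le_of_succ_le_succ hin), pow_add,
        Nat.add_sub_cancel_left]
      exact Ideal.mul_mono_right (Ideal.mul_mono_left (Ideal.pow_right_mono le_sup_left i))
    refine hmul (Ideal.mul_mem_mul (hc _ hi1 hin) ?_)
    rw [Nat.add_sub_add_right]
    exact Ideal.pow_mem_pow hxX _
  have hX : X ^ (n + 1) ≤ K * (K ⊔ X) ^ n := by
    rw [Ideal.span_singleton_pow, Ideal.span_singleton_le_iff_mem,
      eq_neg_of_add_eq_zero_left h0]
    exact neg_mem (Ideal.sum_mem _ hcx)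
  refine ⟨(K ⊔ X) ^ n, pow_ne_zero n fun h ↦ hK (eq_bot_iff.mpr (le_sup_left.trans h.le)),
    fun l hl ↦ (sup_pow_succ_le K X n).trans (sup_le le_rfl hX) ?_⟩
  rw [pow_succ']
  exact Ideal.mul_mem_mul hxX hl

lemma dvd_of_forall_exists_mul_eq [IsDomain A] [IsIntegrallyClosed A] (hL : L ≠ ⊥) (hLfg : L.FG)
    (hy : y ≠ 0) (h : ∀ l ∈ L, ∃ l' ∈ L, x * l = y * l') : y ∣ x := by
  let F := FractionRing A
  have hyF : algebraMap A F y ≠ 0 := by simpa using hy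
  let N : Submodule A F := Submodule.map (Algebra.linearMap A F) L
  have hN : N ≠ ⊥ := fun hbot ↦
    hL (Submodule.map_injective_of_injective (IsFractionRing.injective A F)
      (hbot.trans (Submodule.map_bot _).symm))
  have hint : IsIntegral A (algebraMap A F x / algebraMap A F y) := by
    refine isIntegral_of_smul_mem_submodule N hN (Submodule.FG.map _ hLfg) _ ?_
    rintro _ ⟨l, hl, rfl⟩
    obtain ⟨l', hl', hll'⟩ := h l hl
    refine ⟨l', hl', ?_⟩
    rw [Algebra.linearMap_apply, Algebra.linearMap_apply, smul_eq_mul, div_mul_eq_mul_div,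
      eq_div_iff hyF, ← map_mul, ← map_mul, hll', mul_comm]
  obtain ⟨z, hz⟩ := IsIntegrallyClosed.isIntegral_iff.mp hint
  refine ⟨z, IsFractionRing.injective A F ?_⟩
  rw [map_mul, hz, mul_div_cancel₀ _ hyF]

lemma IdealIsIntegrallyClosed.exists_mem_eq_mul [IsDomain A] [IsIntegrallyClosed A]
    (hK : IdealIsIntegrallyClosed K) (hL : L ≠ ⊥) (hLfg : L.FG) (hy : y ≠ 0)
    (h : ∀ l ∈ L, ∃ l' ∈ K * L, x * l = y * l') : ∃ z ∈ K, x = y * z := by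
  obtain ⟨z, rfl⟩ := dvd_of_forall_exists_mul_eq hL hLfg hy fun l hl ↦
    (h l hl).imp fun _ hl' ↦ ⟨Ideal.mul_le_right hl'.1, hl'.2⟩
  refine ⟨z, hK z (isIntegralOverIdeal_of_forall_mul_mem hL hLfg fun l hl ↦ ?_), rfl⟩
  obtain ⟨l', hl', hzl⟩ := h l hl
  exact mul_left_cancel₀ hy ((mul_assoc y z l).symm.trans hzl) ▸ hl'

lemma idealIsIntegrallyClosed_top : IdealIsIntegrallyClosed (⊤ : Ideal A) := fun _ _ ↦ trivial

end IntegralOverIdeal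

section ParameterSystem

open IsLocalRing

variable {A : Type*} [CommRing A] [IsNoetherianRing A] [IsLocalRing A]

lemma isUnit_of_maximalIdeal_pow_le_span_singleton (hdim : 1 < ringKrullDim A) {t : A} {n : ℕ}
    (h : maximalIdeal A ^ n ≤ Ideal.span {t}) : IsUnit t := by
  by_contra ht
  have hmin : maximalIdeal A ∈ (Ideal.span {t}).minimalPrimes := by
    refine ⟨⟨inferInstance, ?_⟩, fun p ⟨hp, htp⟩ _ ↦ hp.le_of_pow_le (h.trans htp)⟩
    exact (Ideal.span_singleton_le_iff_mem _).mpr ((mem_maximalIdeal t).mpr ht)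
  have hle := Ideal.height_le_one_of_isPrincipal_of_mem_minimalPrimes _ _ hmin
  rw [← maximalIdeal_height_eq_ringKrullDim] at hdim
  exact (WithBot.coe_lt_coe.mp hdim).not_ge hle

lemma maximalIdeal_pow_ne_bot (hdim : 1 < ringKrullDim A) (n : ℕ) : maximalIdeal A ^ n ≠ ⊥ := by
  intro h
  have h0 : IsUnit (0 : A) := isUnit_of_maximalIdeal_pow_le_span_singleton hdim (h.le.trans bot_le)
  exact not_isUnit_zero h0

variable [IsDomain A] [IsIntegrallyClosed A]

lemma dvd_of_forall_mem_maximalIdeal_dvd_mul (hdim : 1 < ringKrullDim A) {u y : A} (hy : y ≠ 0)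
    (h : ∀ m ∈ maximalIdeal A, y ∣ m * u) : y ∣ u := by
  by_cases hmem : ∀ m ∈ maximalIdeal A, ∃ l' ∈ maximalIdeal A, u * m = y * l'
  · exact dvd_of_forall_exists_mul_eq (by simpa using maximalIdeal_pow_ne_bot hdim 1)
      (IsNoetherian.noetherian _) hy hmem
  push Not at hmem
  obtain ⟨m₀, hm₀, hmem⟩ := hmem
  obtain ⟨c, hc⟩ := h m₀ hm₀
  have hcunit : IsUnit c := by
    by_contra hcunit
    exact hmem c ((mem_maximalIdeal c).mpr hcunit) ((mul_comm _ _).trans hc)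
  by_contra hyu
  have hu : u ≠ 0 := fun hu ↦ hyu (hu ▸ dvd_zero y)
  -- Up to a unit `y` is `m₀ * u`, so `𝔪 * u ⊆ (y)` makes `𝔪` principal.
  have hspan : maximalIdeal A ^ 1 ≤ Ideal.span {m₀} := fun m hm ↦ by
    have hmu : m₀ * u ∣ m * u :=
      hc ▸ (hcunit.mul_right_dvd.mpr (h m (by simpa using hm)))
    exact Ideal.mem_span_singleton.mpr ((mul_dvd_mul_iff_right hu).mp hmu)
  exact (mem_maximalIdeal m₀).mp hm₀ (isUnit_of_maximalIdeal_pow_le_span_singleton hdim hspan)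

lemma dvd_of_forall_mem_maximalIdeal_pow_dvd_mul (hdim : 1 < ringKrullDim A) {u y : A}
    (hy : y ≠ 0) {n : ℕ} (h : ∀ m ∈ maximalIdeal A ^ n, y ∣ m * u) : y ∣ u := by
  induction n generalizing u with
  | zero => simpa using h 1 (by simp)
  | succ n ih =>
    refine dvd_of_forall_mem_maximalIdeal_dvd_mul hdim hy fun m hm ↦ ih fun m' hm' ↦ ?_
    exact mul_assoc m' m u ▸ h (m' * m) (Ideal.mul_mem_mul hm' hm)

lemma exists_eq_mul_of_mul_eq_mul (hdim : 1 < ringKrullDim A) {x y : A} {n : ℕ}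
    (h : maximalIdeal A ^ n ≤ Ideal.span {x, y}) {u v : A} (huv : x * u = y * v) :
    ∃ w, u = y * w ∧ v = x * w := by
  rcases eq_or_ne y 0 with rfl | hy
  · have hx : IsUnit x := by
      refine isUnit_of_maximalIdeal_pow_le_span_singleton hdim (n := n) (h.trans ?_)
      rw [Ideal.span_insert, Ideal.span_singleton_zero, sup_bot_eq]
    obtain ⟨w, rfl⟩ := hx.dvd (a := v)
    rw [zero_mul] at huv
    exact ⟨w, by rw [(mul_eq_zero.mp huv).resolve_left hx.ne_zero, zero_mul], rfl⟩
  · obtain ⟨w, rfl⟩ : y ∣ u := dvd_of_forall_mem_maximalIdeal_pow_dvd_mul hdim hy fun m hm ↦ by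
      obtain ⟨a, b, rfl⟩ := Ideal.mem_span_pair.mp (h hm)
      exact ⟨a * v + b * u, by linear_combination a * huv⟩
    exact ⟨w, rfl, mul_left_cancel₀ hy (by linear_combination -huv)⟩

end ParameterSystem

section Normality

open MvPolynomial

universe u

instance mvPolynomial_fin_two_isIntegrallyClosed {A : Type*} [CommRing A] [IsDomain A]
    [IsIntegrallyClosed A] : IsIntegrallyClosed (MvPolynomial (Fin 2) A) := by
  have : IsIntegrallyClosed (MvPolynomial (Fin 0) A) :=
    .of_equiv (isEmptyAlgEquiv A (Fin 0)).symm.toRingEquiv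
  have : IsIntegrallyClosed (MvPolynomial (Fin 1) A) :=
    .of_equiv (finSuccEquiv A 0).symm.toRingEquiv
  exact .of_equiv (finSuccEquiv A 1).symm.toRingEquiv

variable {A : Type u} [CommRing A] {I J : Ideal A}

lemma isIntegral_coeff_degreeOfHom {s : MvPolynomial (Fin 2) A} (hs : IsIntegral (biRees I J) s)
    (i : Fin 2) (m : ℕ) : IsIntegral (biRees I J) ((degreeOfHom i s).coeff m) := by
  let := Polynomial.algebra (biRees I J) (MvPolynomial (Fin 2) A)
  have hint : IsIntegral (Polynomial (biRees I J)) (degreeOfHom i s) := by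
    obtain ⟨p, hp, hps⟩ := hs
    refine ⟨p.map (biReesGradingHom I J i), hp.map _, ?_⟩
    have hcomp : (algebraMap (Polynomial (biRees I J)) (Polynomial (MvPolynomial (Fin 2) A))).comp
        (biReesGradingHom I J i) =
        (degreeOfHom i).comp (algebraMap (biRees I J) (MvPolynomial (Fin 2) A)) :=
      RingHom.ext fun f ↦ map_val_biReesGradingHom i f
    rw [Polynomial.eval₂_map, hcomp, ← Polynomial.hom_eval₂, hps, map_zero]
  exact Polynomial.isIntegral_iff_isIntegral_coeff.mp hint m

lemma isIntegral_bimonomial_bicoeff {s : MvPolynomial (Fin 2) A} (hs : IsIntegral (biRees I J) s)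
    (m n : ℕ) : IsIntegral (biRees I J) (bimonomial m n (bicoeff s m n)) := by
  have hcoeff : (degreeOfHom 1 ((degreeOfHom 0 s).coeff m)).coeff n =
      bimonomial m n (bicoeff s m n) := by
    refine bicoeff_ext fun a b ↦ ?_
    rw [bicoeff, coeff_coeff_degreeOfHom, coeff_coeff_degreeOfHom, bicoeff_bimonomial,
      bidegree_apply_zero, bidegree_apply_one]
    by_cases ha : a = m <;> by_cases hb : b = n <;> simp_all [bicoeff, eq_comm]
  exact hcoeff ▸ isIntegral_coeff_degreeOfHom (isIntegral_coeff_degreeOfHom hs 0 m) 1 n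

lemma isIntegralOverIdeal_of_isIntegral_bimonomial [Nontrivial A] {m n : ℕ} {x : A}
    (h : IsIntegral (biRees I J) (bimonomial m n x)) : IsIntegralOverIdeal (I ^ m * J ^ n) x := by
  obtain ⟨p, hp, hpx⟩ := h
  set N := p.natDegree
  have hterm (i : ℕ) (hi : i ∈ Finset.range (N + 1)) :
      bicoeff ((p.coeff i : MvPolynomial (Fin 2) A) * bimonomial m n x ^ i) (N * m) (N * n) =
        bicoeff (p.coeff i) ((N - i) * m) ((N - i) * n) * x ^ i := by
    have hiN : i ≤ N := Finset.mem_range_succ_iff.mp hi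
    rw [bimonomial_pow, mul_comm, bicoeff_bimonomial_mul,
      if_pos ⟨Nat.mul_le_mul_right _ hiN, Nat.mul_le_mul_right _ hiN⟩, Nat.sub_mul, Nat.sub_mul,
      mul_comm]
  refine isIntegralOverIdeal_of_sum_range (n := N)
    (c := fun i ↦ bicoeff (p.coeff i) ((N - i) * m) ((N - i) * n))
    (Nat.pos_of_ne_zero fun hN ↦ ?_) (fun i _ ↦ ?_) ?_
  · rw [hp.natDegree_eq_zero.mp hN, Polynomial.eval₂_one] at hpx
    exact one_ne_zero hpx
  · rw [mul_pow, ← pow_mul', ← pow_mul']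
    exact mem_biRees.mp (p.coeff i).2 _ _
  · have hlead : bicoeff ((1 : biRees I J) : MvPolynomial (Fin 2) A) 0 0 = 1  := by
      rw [OneMemClass.coe_one, bicoeff, bidegree_zero_zero, coeff_zero_one]
    have hsum : ∑ i ∈ Finset.range (N + 1), bicoeff
        ((p.coeff i : MvPolynomial (Fin 2) A) * bimonomial m n x ^ i) (N * m) (N * n) = 0 := by
      rw [← bicoeff_zero (N * m) (N * n), ← hpx, Polynomial.eval₂_eq_sum_range]
      exact (coeff_sum _ _ _).symm
    rw [Finset.sum_congr rfl hterm, Finset.sum_range_succ, hp.coeff_natDegree, Nat.sub_self,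
      zero_mul, zero_mul, hlead, one_mul, add_comm] at hsum
    exact hsum

lemma isIntegrallyClosed_biRees [IsDomain A] [IsIntegrallyClosed A]
    (h : ∀ m n, IdealIsIntegrallyClosed (I ^ m * J ^ n)) : IsIntegrallyClosed (biRees I J) := by
  have : IsIntegrallyClosedIn (biRees I J) (MvPolynomial (Fin 2) A) := by
    refine isIntegrallyClosedIn_iff.mpr ⟨Subtype.val_injective, fun {s} hs ↦ ⟨⟨s, ?_⟩, rfl⟩⟩
    exact mem_biRees.mpr fun m n ↦
      h m n _ (isIntegralOverIdeal_of_isIntegral_bimonomial (isIntegral_bimonomial_bicoeff hs m n))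
  exact .of_isIntegrallyClosed_of_isIntegrallyClosedIn _ (MvPolynomial (Fin 2) A)

lemma exists_mul_biReesMonomial_eq {L : Ideal A} {m n : ℕ} {d x : A} (hd : d ∈ I ^ m * J ^ n)
    (hL : ∀ l ∈ L, x * l ∈ I ^ m * J ^ n * L) {f : biRees I J}
    (hf : f ∈ L.map (algebraMap A (biRees I J))) :
    ∃ g ∈ L.map (algebraMap A (biRees I J)),
      biReesMonomial I J m n (d * x) (Ideal.mul_mem_right _ _ hd) * f =
        algebraMap A (biRees I J) d * g := by
  have hmem : I ^ m * J ^ n * L ≤ coeffIdeal (L.map (algebraMap A (biRees I J))) m n := by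
    have hL0 : L ≤ coeffIdeal (L.map (algebraMap A (biRees I J))) 0 0 := by
      rw [coeffIdeal_zero_zero]
      exact Ideal.le_comap_map
    exact (Ideal.mul_mono_right hL0).trans (mul_coeffIdeal_le _ m n 0 0)
  induction hf using Submodule.span_induction with
  | mem f hf =>
    obtain ⟨l, hl, rfl⟩ := hf
    obtain ⟨ha, haL⟩ := mem_coeffIdeal.mp (hmem (hL l hl))
    refine ⟨_, haL, ?_⟩
    rw [← biReesMonomial_zero_zero l, ← biReesMonomial_zero_zero d, biReesMonomial_mul,
      biReesMonomial_mul]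
    simp only [zero_add, add_zero, mul_assoc]
  | zero => exact ⟨0, zero_mem _, by rw [mul_zero, mul_zero]⟩
  | add f₁ f₂ _ _ h₁ h₂ =>
    obtain ⟨g₁, hg₁, h₁⟩ := h₁
    obtain ⟨g₂, hg₂, h₂⟩ := h₂
    exact ⟨g₁ + g₂, add_mem hg₁ hg₂, by rw [mul_add, mul_add, h₁, h₂]⟩
  | smul r f _ h =>
    obtain ⟨g, hg, h⟩ := h
    exact ⟨r * g, Ideal.mul_mem_left _ _ hg, by rw [smul_eq_mul, mul_left_comm, h, mul_left_comm]⟩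

lemma idealIsIntegrallyClosed_pow_mul_pow [IsDomain A] [IsNoetherianRing A]
    [IsIntegrallyClosed (biRees I J)] (hI : I ≠ ⊥) (hJ : J ≠ ⊥) (m n : ℕ) :
    IdealIsIntegrallyClosed (I ^ m * J ^ n) := by
  intro x hx
  have hIJ : I ^ m * J ^ n ≠ ⊥ := mul_ne_zero (pow_ne_zero m hI) (pow_ne_zero n hJ)
  obtain ⟨L, hL, hxL⟩ := hx.exists_forall_mul_mem hIJ
  obtain ⟨d, hd, hd0⟩ := Submodule.exists_mem_ne_zero_of_ne_bot hIJ
  have hinj : Function.Injective (algebraMap A (biRees I J)) :=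
    FaithfulSMul.algebraMap_injective _ _
  have hLmap : L.map (algebraMap A (biRees I J)) ≠ ⊥ := by
    rwa [Ne, Ideal.map_eq_bot_iff_of_injective hinj]
  -- The quotient of `d x t₁ᵐ t₂ⁿ` by `d` is `x t₁ᵐ t₂ⁿ`.
  obtain ⟨g, hg⟩ : algebraMap A (biRees I J) d ∣
      biReesMonomial I J m n (d * x) (Ideal.mul_mem_right _ _ hd) :=
    dvd_of_forall_exists_mul_eq hLmap (IsNoetherian.noetherian _)
      ((map_ne_zero_iff _ hinj).mpr hd0) fun f hf ↦ exists_mul_biReesMonomial_eq hd hxL hf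
  have hgx : d * x = d * bicoeff g.1 m n := by
    rw [← biReesMonomial_zero_zero] at hg
    have hcoeff : bicoeff (bimonomial m n (d * x)) m n = bicoeff (bimonomial 0 0 d * g.1) m n :=
      congrArg (fun f : biRees I J ↦ bicoeff f.1 m n) hg
    simpa only [bicoeff_bimonomial_self, bicoeff_bimonomial_mul, zero_le, and_self, if_true,
      Nat.sub_zero] using hcoeff
  exact mul_left_cancel₀ hd0 hgx ▸ mem_biRees.mp g.2 m n

end Normality

section ParameterAvoidance

open IsLocalRing

variable {A : Type*} [CommRing A] [IsNoetherianRing A] [IsLocalRing A]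

lemma not_maximalIdeal_le_of_mem_minimalPrimes_span_singleton (hdim : 1 < ringKrullDim A) {c : A}
    {p : Ideal A} (hp : p ∈ (Ideal.span {c}).minimalPrimes) : ¬ maximalIdeal A ≤ p := by
  intro hle
  have := hp.1.1
  have hpm : p = maximalIdeal A := (le_maximalIdeal ‹p.IsPrime›.ne_top).antisymm hle
  have hheight := Ideal.height_le_one_of_isPrincipal_of_mem_minimalPrimes _ p hp
  rw [← maximalIdeal_height_eq_ringKrullDim, ← hpm] at hdim
  exact hheight.not_gt (WithBot.coe_lt_coe.mp hdim)

variable [IsDomain A]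

lemma exists_maximalIdeal_pow_le_span_pair (hdim : ringKrullDim A ≤ 2) {c γ : A} (hc : c ≠ 0)
    (h : ∀ p ∈ (Ideal.span {c}).minimalPrimes, γ ∉ p) :
    ∃ n, maximalIdeal A ^ n ≤ Ideal.span {c, γ} := by
  refine Ideal.exists_pow_le_of_le_radical_of_fg ?_ (IsNoetherian.noetherian _)
  rw [Ideal.radical_eq_sInf]
  refine le_sInf fun p ⟨hle, hp⟩ ↦ ?_
  obtain ⟨hcp, hγp⟩ := Set.pair_subset_iff.mp (Ideal.span_le.mp hle)
  obtain ⟨q, hq, hqp⟩ := Ideal.exists_minimalPrimes_le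
    ((Ideal.span_singleton_le_iff_mem p).mpr hcp)
  have := hq.1.1
  have hbot : ⊥ < q := bot_lt_iff_ne_bot.mpr fun hq0 ↦
    hc (by simpa [hq0] using (Ideal.span_singleton_le_iff_mem q).mp hq.1.2)
  have hqp : q < p := lt_of_le_of_ne hqp fun hqp ↦ h q hq (hqp ▸ hγp)
  refine (eq_of_le_of_not_lt (le_maximalIdeal hp.ne_top) fun hpm ↦ ?_).ge
  have hthree := three_le_height_of_lt hbot hqp hpm
  rw [← maximalIdeal_height_eq_ringKrullDim] at hdim
  have htwo : (maximalIdeal A).height ≤ 2 := WithBot.coe_le_coe.mp hdim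
  have hlt : (2 : ℕ∞) < 3 := by norm_num
  exact (hthree.trans htwo).not_gt hlt

lemma exists_mem_maximalIdeal_pow_le_span_pair (hdim : ringKrullDim A = 2) {c : A} (hc : c ≠ 0) :
    ∃ γ ∈ maximalIdeal A, γ ≠ 0 ∧ ∃ n, maximalIdeal A ^ n ≤ Ideal.span {c, γ} := by
  have hdim' : 1 < ringKrullDim A := hdim ▸ by norm_num
  have hfin : (insert ⊥ (Ideal.span {c}).minimalPrimes).Finite :=
    (Ideal.finite_minimalPrimes_of_isNoetherianRing _ _).insert _
  have hprime : ∀ p ∈ insert ⊥ (Ideal.span {c}).minimalPrimes, p.IsPrime := by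
    rintro p (rfl | hp)
    · infer_instance
    · exact hp.1.1
  have hsub :
      ¬ (maximalIdeal A : Set A) ⊆ ⋃ p ∈ insert ⊥ (Ideal.span {c}).minimalPrimes, (p : Set A) := by
    rw [Ideal.subset_union_prime_finite hfin ⊥ ⊥ fun p hp _ _ ↦ hprime p hp]
    rintro ⟨p, rfl | hp, hle⟩
    · exact maximalIdeal_pow_ne_bot hdim' 1 (by rwa [pow_one, eq_bot_iff])
    · exact not_maximalIdeal_le_of_mem_minimalPrimes_span_singleton hdim' hp hle
  obtain ⟨γ, hγ, hγp⟩ := Set.not_subset.mp hsub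
  simp only [Set.mem_iUnion, not_exists] at hγp
  exact ⟨γ, hγ, hγp ⊥ (Set.mem_insert _ _), exists_maximalIdeal_pow_le_span_pair hdim.le hc
    fun p hp ↦ hγp p (Set.mem_insert_of_mem _ hp)⟩

end ParameterAvoidance

section JointReductionZero

open IsLocalRing

lemma mem_span_singleton_mul_sup {A : Type*} [CommRing A] {a b x : A} {K L : Ideal A} :
    x ∈ Ideal.span {a} * K ⊔ Ideal.span {b} * L ↔ ∃ s ∈ K, ∃ t ∈ L, a * s + b * t = x := by
  simp only [Submodule.mem_sup, Ideal.mem_span_singleton_mul, exists_exists_and_eq_and]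

lemma le_span_singleton_pow_mul_sup {A : Type*} [CommRing A] {a b : A} {F : ℕ → ℕ → Ideal A}
    (h : ∀ m n, F (m + 1) (n + 1) ≤
      Ideal.span {a} * F m (n + 1) ⊔ Ideal.span {b} * F (m + 1) n)
    (ha : ∀ m n, Ideal.span {a} * F m n ≤ F (m + 1) n)
    (hb : ∀ m n, Ideal.span {b} * F m n ≤ F m (n + 1)) (m n : ℕ) :
    F m n ≤ Ideal.span {a ^ m} * F 0 n ⊔ Ideal.span {b ^ n} * F m 0 := by
  simp only [← Ideal.span_singleton_pow]
  induction m generalizing n with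
  | zero => simp
  | succ m ihm =>
    induction n with
    | zero => simp
    | succ n ihn =>
      refine (h m n).trans (sup_le ((Ideal.mul_mono_right (ihm (n + 1))).trans ?_)
        ((Ideal.mul_mono_right ihn).trans ?_))
      · rw [Ideal.mul_sup, ← mul_assoc, ← pow_succ', mul_left_comm]
        exact sup_le_sup_left (Ideal.mul_mono_right (ha m 0)) _
      · rw [Ideal.mul_sup, ← mul_assoc _ _ (F (m + 1) 0), ← pow_succ', mul_left_comm]
        exact sup_le_sup_right (Ideal.mul_mono_right (hb 0 n)) _

/-- `(a, b)` is a joint reduction of `(I, J)` with joint reduction number zero: `a ∈ I`, `b ∈ J`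
and `I J = a J + b I`. For `I = J` this says that `(a, b)` is a reduction of `I` with
`I² = (a, b) I`. -/
structure IsJointReductionZero {A : Type*} [CommRing A] (I J : Ideal A) (a b : A) : Prop where
  left_mem : a ∈ I
  right_mem : b ∈ J
  mul_le : I * J ≤ Ideal.span {a} * J ⊔ Ideal.span {b} * I

namespace IsJointReductionZero

variable {A : Type*} [CommRing A] {I J : Ideal A} {a b : A}

lemma pow_mul_pow_le (h : IsJointReductionZero I J a b) (m n : ℕ) :
    I ^ (m + 1) * J ^ (n + 1) ≤
      Ideal.span {a} * (I ^ m * J ^ (n + 1)) ⊔ Ideal.span {b} * (I ^ (m + 1) * J ^ n) :=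
  calc I ^ (m + 1) * J ^ (n + 1) = I * J * (I ^ m * J ^ n) := by ring
    _ ≤ (Ideal.span {a} * J ⊔ Ideal.span {b} * I) * (I ^ m * J ^ n) := Ideal.mul_mono_left h.mul_le
    _ = _ := by rw [Ideal.sup_mul]; congr 1 <;> ring

lemma pow_add_two_le (h : IsJointReductionZero J J a b) (n : ℕ) :
    J ^ (n + 2) ≤ Ideal.span {a} * J ^ (n + 1) ⊔ Ideal.span {b} * J ^ (n + 1) := by
  simpa [← pow_succ, ← pow_succ'] using h.pow_mul_pow_le 0 n

lemma pow (h : IsJointReductionZero I J a b) (m n : ℕ) :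
    IsJointReductionZero (I ^ m) (J ^ n) (a ^ m) (b ^ n) := by
  have ha : Ideal.span {a} ≤ I := (Ideal.span_singleton_le_iff_mem I).mpr h.left_mem
  have hb : Ideal.span {b} ≤ J := (Ideal.span_singleton_le_iff_mem J).mpr h.right_mem
  refine ⟨Ideal.pow_mem_pow h.left_mem m, Ideal.pow_mem_pow h.right_mem n, ?_⟩
  have hle := le_span_singleton_pow_mul_sup (F := fun m n ↦ I ^ m * J ^ n) h.pow_mul_pow_le
    (fun m n ↦ ?_) (fun m n ↦ ?_) m n
  · simpa only [pow_zero, one_mul, mul_one] using hle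
  · calc Ideal.span {a} * (I ^ m * J ^ n) ≤ I * (I ^ m * J ^ n) := Ideal.mul_mono_left ha
      _ = I ^ (m + 1) * J ^ n := by ring
  · calc Ideal.span {b} * (I ^ m * J ^ n) ≤ J * (I ^ m * J ^ n) := Ideal.mul_mono_left hb
      _ = I ^ m * J ^ (n + 1) := by ring

lemma pow_succ_le (h : IsJointReductionZero J J a b) (n : ℕ) :
    J ^ (n + 1) ≤ Ideal.span {a} * J ^ n ⊔ Ideal.span {b ^ n} * J := by
  simpa [← pow_succ'] using (h.pow 1 n).mul_le

variable [IsLocalRing A]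

lemma exists_maximalIdeal_pow_le_span_pow (h : IsJointReductionZero J J a b)
    (hJ : ∃ n, maximalIdeal A ^ n ≤ J) (m : ℕ) :
    ∃ n, maximalIdeal A ^ n ≤ Ideal.span {a, b ^ m} := by
  obtain ⟨n, hn⟩ := hJ
  refine ⟨n * (m + 1), ?_⟩
  rw [pow_mul, Ideal.span_insert]
  exact (Ideal.pow_right_mono hn (m + 1)).trans
    ((h.pow_succ_le m).trans (sup_le_sup Ideal.mul_le_left Ideal.mul_le_left))

lemma exists_maximalIdeal_pow_le (h : IsJointReductionZero J J a b)
    (hJ : ∃ n, maximalIdeal A ^ n ≤ J) : ∃ n, maximalIdeal A ^ n ≤ Ideal.span {a, b} := by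
  simpa using h.exists_maximalIdeal_pow_le_span_pow hJ 1

variable [IsDomain A] [IsNoetherianRing A] [IsIntegrallyClosed A]

lemma mem_pow_of_mul_mem_pow_succ (h : IsJointReductionZero J J a b) (hdim : 1 < ringKrullDim A)
    (hJ : ∃ n, maximalIdeal A ^ n ≤ J) {n : ℕ} {x : A} (hx : a * x ∈ J ^ (n + 1)) : x ∈ J ^ n := by
  obtain _ | n := n
  · simp
  obtain ⟨N, hN⟩ := h.exists_maximalIdeal_pow_le_span_pow hJ (n + 1)
  obtain ⟨s, hs, t, -, hst⟩ := mem_span_singleton_mul_sup.mp (h.pow_succ_le (n + 1) hx)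
  obtain ⟨w, hw, -⟩ := exists_eq_mul_of_mul_eq_mul hdim hN
    (show a * (x - s) = b ^ (n + 1) * t by linear_combination -hst)
  rw [← sub_add_cancel x s, hw]
  exact add_mem (Ideal.mul_mem_right _ _ (Ideal.pow_mem_pow h.right_mem _)) hs

lemma mem_of_mul_mem (h : IsJointReductionZero J J a b) (hdim : 1 < ringKrullDim A)
    (hJ : ∃ n, maximalIdeal A ^ n ≤ J) {γ : A} {n : ℕ} {u : A} (hu : u ∈ J ^ (n + 1))
    (hbu : b * u ∈ Ideal.span {a} * J ^ (n + 1) ⊔ Ideal.span {γ} * J ^ (n + 2)) :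
    u ∈ Ideal.span {a} * J ^ n ⊔ Ideal.span {γ} * J ^ (n + 1) := by
  obtain ⟨s, -, t, ht, hst⟩ := mem_span_singleton_mul_sup.mp hbu
  obtain ⟨p, -, q, hq, rfl⟩ := mem_span_singleton_mul_sup.mp (h.pow_add_two_le n ht)
  obtain ⟨N, hN⟩ := h.exists_maximalIdeal_pow_le hJ
  obtain ⟨w, -, hw⟩ := exists_eq_mul_of_mul_eq_mul hdim hN
    (show a * (s + γ * p) = b * (u - γ * q) by linear_combination hst)
  have hwJ : w ∈ J ^ n := h.mem_pow_of_mul_mem_pow_succ hdim hJ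
    (hw ▸ sub_mem hu (Ideal.mul_mem_left _ _ hq))
  exact mem_span_singleton_mul_sup.mpr ⟨w, hwJ, q, hq, by linear_combination -hw⟩

lemma mem_of_forall_mul_sub_mul_mem (h : IsJointReductionZero J J a b)
    (hdim : 1 < ringKrullDim A) (hJ : ∃ n, maximalIdeal A ^ n ≤ J) {β γ : A} {g : ℕ → A}
    (hg : ∀ n, g n ∈ J ^ n) {N : ℕ} (hN : ∀ n, N ≤ n → g n = 0)
    (hrec : ∀ n, b * g n - β * g (n + 1) ∈ Ideal.span {a} * J ^ n ⊔ Ideal.span {γ} * J ^ (n + 1))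
    (n : ℕ) : g (n + 1) ∈ Ideal.span {a} * J ^ n ⊔ Ideal.span {γ} * J ^ (n + 1) := by
  rcases le_total N n with hn | hn
  · rw [hN (n + 1) (by omega)]
    exact zero_mem _
  · induction hn using Nat.decreasingInduction with
    | self =>
      rw [hN (N + 1) N.le_succ]
      exact zero_mem _
    | of_succ n _ ih =>
      have hadd := add_mem (hrec (n + 1)) (Ideal.mul_mem_left _ β ih)
      rw [sub_add_cancel] at hadd
      exact h.mem_of_mul_mem hdim hJ (hg _) hadd

end IsJointReductionZero

end JointReductionZero

section RegularSequence

open RingTheory.Sequence MvPolynomial IsLocalRing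

universe u

lemma isWeaklyRegular_quadruple {R : Type u} [CommRing R] {x y z w : R}
    (hx : ∀ g, x * g = 0 → g = 0) (hy : ∀ g, y * g ∈ Ideal.span {x} → g ∈ Ideal.span {x})
    (hz : ∀ g, z * g ∈ Ideal.span {x, y} → g ∈ Ideal.span {x, y})
    (hw : ∀ g, w * g ∈ Ideal.span {x, y, z} → g ∈ Ideal.span {x, y, z}) :
    IsWeaklyRegular R [x, y, z, w] := by
  refine (isWeaklyRegular_self_iff _).mpr fun i hi g hg ↦ ?_
  obtain _ | _ | _ | _ | i := i
  · simpa using hx g (by simpa using hg)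
  · simpa using hy g (by simpa using hg)
  · simpa [Ideal.span_insert] using hz g (by simpa [Ideal.span_insert] using hg)
  · simpa [Ideal.span_insert] using hw g (by simpa [Ideal.span_insert] using hg)
  · simp only [List.length_cons, List.length_nil] at hi
    omega

lemma exists_forall_bicoeff_eq_zero {A : Type*} [CommRing A] (f : MvPolynomial (Fin 2) A) :
    ∃ N, ∀ m n, N ≤ m + n → bicoeff f m n = 0 := by
  refine ⟨f.totalDegree + 1, fun m n h ↦ coeff_eq_zero_of_totalDegree_lt ?_⟩
  have hdeg : ∑ i ∈ (bidegree m n).support, bidegree m n i = m + n := by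
    rw [Finset.sum_subset (Finset.subset_univ _) fun i _ hi ↦ by simpa using hi, Fin.sum_univ_two,
      bidegree_apply_zero, bidegree_apply_one]
  omega

variable {A : Type u} [CommRing A] {I J : Ideal A} {a b : A}

lemma bicoeff_biReesMonomial_mul {i j : ℕ} (ha : a ∈ I ^ i * J ^ j) (f : biRees I J) (m n : ℕ) :
    bicoeff (biReesMonomial I J i j a ha * f).1 m n =
      if i ≤ m ∧ j ≤ n then a * bicoeff f.1 (m - i) (n - j) else 0 :=
  bicoeff_bimonomial_mul i j a f.1 m n

lemma bicoeff_algebraMap_mul (c : A) (f : biRees I J) (m n : ℕ) :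
    bicoeff (algebraMap A (biRees I J) c * f).1 m n = c * bicoeff f.1 m n := by
  rw [← biReesMonomial_zero_zero, bicoeff_biReesMonomial_mul, if_pos ⟨m.zero_le, n.zero_le⟩,
    Nat.sub_zero, Nat.sub_zero]

lemma span_singleton_mul_le_coeffIdeal {P : Ideal (biRees I J)} {i j : ℕ}
    (ha : a ∈ coeffIdeal P i j) (m n : ℕ) :
    Ideal.span {a} * (I ^ m * J ^ n) ≤ coeffIdeal P (m + i) (n + j) := by
  rw [mul_comm]
  exact (Ideal.mul_mono_right ((Ideal.span_singleton_le_iff_mem _).mpr ha)).trans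
    (mul_coeffIdeal_le P m n i j)

lemma biReesMonomial_mem_gradedMaximalIdeal [IsLocalRing A] {m n : ℕ} (ha : a ∈ I ^ m * J ^ n)
    (hmn : ¬ (m = 0 ∧ n = 0)) : biReesMonomial I J m n a ha ∈ gradedMaximalIdeal I J := by
  simp [mem_gradedMaximalIdeal, biReesMonomial, bicoeff_bimonomial, hmn]

lemma algebraMap_mem_gradedMaximalIdeal [IsLocalRing A] {c : A} :
    algebraMap A (biRees I J) c ∈ gradedMaximalIdeal I J ↔ c ∈ maximalIdeal A := by
  rw [mem_gradedMaximalIdeal, ← biReesMonomial_zero_zero, biReesMonomial, bicoeff_bimonomial_self]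

namespace IsJointReductionZero

lemma left_mem_pow (h : IsJointReductionZero I J a b) : a ∈ I ^ 1 * J ^ 0 := by
  simpa using h.left_mem

lemma right_mem_pow (h : IsJointReductionZero I J a b) : b ∈ I ^ 0 * J ^ 1 := by
  simpa using h.right_mem

lemma mem_of_mem_coeffIdeal (h : IsJointReductionZero I J a b) {γ : A} {Q : Ideal (biRees I J)}
    (ha : a ∈ coeffIdeal Q 1 0) (hb : b ∈ coeffIdeal Q 0 1) (hγ : γ ∈ coeffIdeal Q 0 0)
    {g : biRees I J} (h₀ : γ ∣ bicoeff g.1 0 0)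
    (h₁ : ∀ m, bicoeff g.1 (m + 1) 0 ∈ Ideal.span {a} * I ^ m ⊔ Ideal.span {γ} * I ^ (m + 1))
    (h₂ : ∀ n, bicoeff g.1 0 (n + 1) ∈ Ideal.span {b} * J ^ n ⊔ Ideal.span {γ} * J ^ (n + 1)) :
    g ∈ Q := by
  refine mem_of_forall_bicoeff_mem_coeffIdeal fun m n _ ↦ ?_
  obtain _ | m := m <;> obtain _ | n := n
  · exact Ideal.mem_of_dvd _ h₀ hγ
  · have hle := sup_le (span_singleton_mul_le_coeffIdeal hb 0 n)
      (span_singleton_mul_le_coeffIdeal hγ 0 (n + 1))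
    exact hle (by simpa using h₂ n)
  · have hle := sup_le (span_singleton_mul_le_coeffIdeal ha m 0)
      (span_singleton_mul_le_coeffIdeal hγ (m + 1) 0)
    exact hle (by simpa using h₁ m)
  · exact sup_le (span_singleton_mul_le_coeffIdeal ha m (n + 1))
      (span_singleton_mul_le_coeffIdeal hb (m + 1) n)
      (h.pow_mul_pow_le m n (mem_biRees.mp g.2 _ _))

lemma mem_span_triple_iff (h : IsJointReductionZero I J a b) (γ : A) {g : biRees I J} :
    g ∈ Ideal.span {biReesMonomial I J 1 0 a h.left_mem_pow,
      biReesMonomial I J 0 1 b h.right_mem_pow, algebraMap A (biRees I J) γ} ↔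
    γ ∣ bicoeff g.1 0 0 ∧
      (∀ m, bicoeff g.1 (m + 1) 0 ∈ Ideal.span {a} * I ^ m ⊔ Ideal.span {γ} * I ^ (m + 1)) ∧
      ∀ n, bicoeff g.1 0 (n + 1) ∈ Ideal.span {b} * J ^ n ⊔ Ideal.span {γ} * J ^ (n + 1) := by
  constructor
  · intro hg
    obtain ⟨x, y, z, rfl⟩ := Submodule.mem_span_triple.mp hg
    have hbicoeff (m n : ℕ) : bicoeff (x • biReesMonomial I J 1 0 a h.left_mem_pow +
        y • biReesMonomial I J 0 1 b h.right_mem_pow + z • algebraMap A (biRees I J) γ).1 m n =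
        (if 1 ≤ m then a * bicoeff x.1 (m - 1) n else 0) +
          (if 1 ≤ n then b * bicoeff y.1 m (n - 1) else 0) + γ * bicoeff z.1 m n := by
      simp only [smul_eq_mul, mul_comm x, mul_comm y, mul_comm z, AddMemClass.coe_add, bicoeff_add,
        bicoeff_biReesMonomial_mul, bicoeff_algebraMap_mul, zero_le, true_and, and_true,
        Nat.sub_zero]
    refine ⟨?_, fun m ↦ ?_, fun n ↦ ?_⟩
    · rw [hbicoeff]
      simp
    · refine mem_span_singleton_mul_sup.mpr ⟨bicoeff x.1 m 0, ?_, bicoeff z.1 (m + 1) 0, ?_, ?_⟩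
      · simpa using mem_biRees.mp x.2 m 0
      · simpa using mem_biRees.mp z.2 (m + 1) 0
      · rw [hbicoeff]
        simp
    · refine mem_span_singleton_mul_sup.mpr ⟨bicoeff y.1 0 n, ?_, bicoeff z.1 0 (n + 1), ?_, ?_⟩
      · simpa using mem_biRees.mp y.2 0 n
      · simpa using mem_biRees.mp z.2 0 (n + 1)
      · rw [hbicoeff]
        simp
  · rintro ⟨h₀, h₁, h₂⟩
    set Q := Ideal.span {biReesMonomial I J 1 0 a h.left_mem_pow,
      biReesMonomial I J 0 1 b h.right_mem_pow, algebraMap A (biRees I J) γ}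
    refine h.mem_of_mem_coeffIdeal ((mem_coeffIdeal_iff h.left_mem_pow).mpr ?_)
      ((mem_coeffIdeal_iff h.right_mem_pow).mpr ?_) (coeffIdeal_zero_zero Q ▸ ?_) h₀ h₁ h₂
    all_goals exact Ideal.subset_span (by simp)

variable [IsDomain A]

lemma mem_span_singleton_of_mul_mem [IsNoetherianRing A] [IsIntegrallyClosed A]
    (h : IsJointReductionZero I J a b) (hcl : ∀ m n, IdealIsIntegrallyClosed (I ^ m * J ^ n))
    (ha : a ≠ 0) (hb : b ≠ 0) {g : biRees I J}
    (hg : biReesMonomial I J 0 1 b h.right_mem_pow * g ∈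
      Ideal.span {biReesMonomial I J 1 0 a h.left_mem_pow}) :
    g ∈ Ideal.span {biReesMonomial I J 1 0 a h.left_mem_pow} := by
  obtain ⟨f, hf⟩ := Ideal.mem_span_singleton.mp hg
  have hbicoeff (m n : ℕ) :
      b * bicoeff g.1 m n = if 1 ≤ m then a * bicoeff f.1 (m - 1) (n + 1) else 0 := by
    simpa [bicoeff_biReesMonomial_mul, -MulMemClass.coe_mul] using
      congrArg (fun f : biRees I J ↦ bicoeff f.1 m (n + 1)) hf
  set Q := Ideal.span {biReesMonomial I J 1 0 a h.left_mem_pow}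
  have haQ : a ∈ coeffIdeal Q 1 0 :=
    (mem_coeffIdeal_iff h.left_mem_pow).mpr (Ideal.mem_span_singleton_self _)
  have hIJ : I * J ≠ ⊥ := (Submodule.ne_bot_iff _).mpr
    ⟨a * b, Ideal.mul_mem_mul h.left_mem h.right_mem, mul_ne_zero ha hb⟩
  refine mem_of_forall_bicoeff_mem_coeffIdeal fun m n hmn ↦ ?_
  obtain _ | m := m
  · exact absurd ((mul_eq_zero.mp (hbicoeff 0 n)).resolve_left hb) hmn
  have hbg : b * bicoeff g.1 (m + 1) n = a * bicoeff f.1 m (n + 1) := by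
    simpa using hbicoeff (m + 1) n
  -- By `I J = a J + b I`, multiplying `I J` by `bicoeff g (m + 1) n` gives multiples of `a`.
  obtain ⟨z, hz, hgz⟩ := (hcl m n).exists_mem_eq_mul hIJ (IsNoetherian.noetherian _) ha
    (x := bicoeff g.1 (m + 1) n) fun l hl ↦ by
      obtain ⟨s, hs, t, ht, rfl⟩ := mem_span_singleton_mul_sup.mp (h.mul_le hl)
      refine ⟨bicoeff g.1 (m + 1) n * s + bicoeff f.1 m (n + 1) * t, add_mem ?_ ?_,
        by linear_combination t * hbg⟩
      · rw [show I ^ m * J ^ n * (I * J) = I ^ (m + 1) * J ^ n * J by ring]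
        exact Ideal.mul_mem_mul (mem_biRees.mp g.2 _ _) hs
      · rw [show I ^ m * J ^ n * (I * J) = I ^ m * J ^ (n + 1) * I by ring]
        exact Ideal.mul_mem_mul (mem_biRees.mp f.2 _ _) ht
  exact hgz ▸ span_singleton_mul_le_coeffIdeal haQ m n
    (Ideal.mul_mem_mul (Ideal.mem_span_singleton_self a) hz)

variable [IsNoetherianRing A] [IsLocalRing A] [IsIntegrallyClosed A]

lemma mem_span_singleton_mul_pow_of_mul_mem (h : IsJointReductionZero J J a b)
    (hdim : 1 < ringKrullDim A) (hJ : ∃ n, maximalIdeal A ^ n ≤ J) {γ : A}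
    (hγ : ∃ n, maximalIdeal A ^ n ≤ Ideal.span {a, γ}) {n : ℕ} {x : A} (hx : x ∈ J ^ (n + 1))
    (hγx : γ * x ∈ Ideal.span {a} * J ^ n) : x ∈ Ideal.span {a} * J ^ n := by
  obtain ⟨z, -, hz⟩ := Ideal.mem_span_singleton_mul.mp hγx
  obtain ⟨N, hN⟩ := hγ
  obtain ⟨w, -, rfl⟩ := exists_eq_mul_of_mul_eq_mul hdim hN hz
  exact Ideal.mul_mem_mul (Ideal.mem_span_singleton_self a)
    (h.mem_pow_of_mul_mem_pow_succ hdim hJ hx)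

variable {a' b' : A}

lemma mem_span_pair_of_mul_mem (h : IsJointReductionZero I J a b)
    (hI : IsJointReductionZero I I a a') (hJ : IsJointReductionZero J J b b')
    (hdim : 1 < ringKrullDim A) (hmI : ∃ n, maximalIdeal A ^ n ≤ I)
    (hmJ : ∃ n, maximalIdeal A ^ n ≤ J) {γ : A} (hγ0 : γ ≠ 0)
    (hγa : ∃ n, maximalIdeal A ^ n ≤ Ideal.span {a, γ})
    (hγb : ∃ n, maximalIdeal A ^ n ≤ Ideal.span {b, γ}) {g : biRees I J}
    (hg : algebraMap A (biRees I J) γ * g ∈ Ideal.span {biReesMonomial I J 1 0 a h.left_mem_pow,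
      biReesMonomial I J 0 1 b h.right_mem_pow}) :
    g ∈ Ideal.span {biReesMonomial I J 1 0 a h.left_mem_pow,
      biReesMonomial I J 0 1 b h.right_mem_pow} := by
  have hpair : Ideal.span {biReesMonomial I J 1 0 a h.left_mem_pow,
      biReesMonomial I J 0 1 b h.right_mem_pow} = Ideal.span
        {biReesMonomial I J 1 0 a h.left_mem_pow, biReesMonomial I J 0 1 b h.right_mem_pow,
          algebraMap A (biRees I J) 0} := by
    simp [Ideal.span_insert]
  rw [hpair, h.mem_span_triple_iff] at hg ⊢
  simp only [bicoeff_algebraMap_mul, Ideal.span_singleton_zero, Ideal.bot_mul, sup_bot_eq,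
    zero_dvd_iff] at hg ⊢
  obtain ⟨h₀, h₁, h₂⟩ := hg
  refine ⟨(mul_eq_zero.mp h₀).resolve_left hγ0, fun m ↦ ?_, fun n ↦ ?_⟩
  · refine hI.mem_span_singleton_mul_pow_of_mul_mem hdim hmI hγa ?_ (h₁ m)
    simpa using mem_biRees.mp g.2 (m + 1) 0
  · refine hJ.mem_span_singleton_mul_pow_of_mul_mem hdim hmJ hγb ?_ (h₂ n)
    simpa using mem_biRees.mp g.2 0 (n + 1)

lemma mem_span_triple_of_mul_mem (h : IsJointReductionZero I J a b)
    (hI : IsJointReductionZero I I a a') (hJ : IsJointReductionZero J J b b')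
    (ha' : a' ∈ I ^ 1 * J ^ 0) (hb' : b' ∈ I ^ 0 * J ^ 1)
    (hdim : 1 < ringKrullDim A) (hmI : ∃ n, maximalIdeal A ^ n ≤ I)
    (hmJ : ∃ n, maximalIdeal A ^ n ≤ J) {β γ : A}
    (hβ : ∃ n, maximalIdeal A ^ n ≤ Ideal.span {γ, β}) {g : biRees I J}
    (hg : (biReesMonomial I J 1 0 a' ha' + biReesMonomial I J 0 1 b' hb' -
      algebraMap A (biRees I J) β) * g ∈ Ideal.span {biReesMonomial I J 1 0 a h.left_mem_pow,
        biReesMonomial I J 0 1 b h.right_mem_pow, algebraMap A (biRees I J) γ}) :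
    g ∈ Ideal.span {biReesMonomial I J 1 0 a h.left_mem_pow,
      biReesMonomial I J 0 1 b h.right_mem_pow, algebraMap A (biRees I J) γ} := by
  rw [h.mem_span_triple_iff] at hg ⊢
  have hbicoeff (m n : ℕ) : bicoeff ((biReesMonomial I J 1 0 a' ha' +
      biReesMonomial I J 0 1 b' hb' - algebraMap A (biRees I J) β) * g).1 m n =
      (if 1 ≤ m then a' * bicoeff g.1 (m - 1) n else 0) +
        (if 1 ≤ n then b' * bicoeff g.1 m (n - 1) else 0) - β * bicoeff g.1 m n := by
    simp only [sub_mul, add_mul, AddSubgroupClass.coe_sub, AddMemClass.coe_add, bicoeff_add,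
      bicoeff_sub, bicoeff_biReesMonomial_mul, bicoeff_algebraMap_mul, zero_le, true_and, and_true,
      Nat.sub_zero]
  simp only [hbicoeff] at hg
  obtain ⟨h₀, h₁, h₂⟩ := hg
  obtain ⟨N, hN⟩ := exists_forall_bicoeff_eq_zero g.1
  refine ⟨?_, ?_, ?_⟩
  · obtain ⟨n, hn⟩ := hβ
    obtain ⟨z, hz⟩ : γ ∣ β * bicoeff g.1 0 0 := by simpa using h₀
    obtain ⟨w, -, hw⟩ := exists_eq_mul_of_mul_eq_mul hdim hn hz.symm
    exact ⟨w, hw⟩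
  · exact hI.mem_of_forall_mul_sub_mul_mem hdim hmI (g := fun m ↦ bicoeff g.1 m 0)
      (fun m ↦ by simpa using mem_biRees.mp g.2 m 0) (fun m hm ↦ hN m 0 hm)
      (fun m ↦ by simpa using h₁ m)
  · exact hJ.mem_of_forall_mul_sub_mul_mem hdim hmJ (N := N) (g := fun n ↦ bicoeff g.1 0 n)
      (fun n ↦ by simpa using mem_biRees.mp g.2 0 n) (fun n hn ↦ hN 0 n (by omega))
      (fun n ↦ by simpa using h₂ n)

lemma isCohenMacaulayAt_gradedMaximalIdeal (h : IsJointReductionZero I J a b)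
    (hI : IsJointReductionZero I I a a') (hJ : IsJointReductionZero J J b b')
    (hcl : ∀ m n, IdealIsIntegrallyClosed (I ^ m * J ^ n)) (hdim : ringKrullDim A = 2)
    (hmI : ∃ n, maximalIdeal A ^ n ≤ I) (hmJ : ∃ n, maximalIdeal A ^ n ≤ J) (ha : a ≠ 0)
    (hb : b ≠ 0) : IsCohenMacaulayAt (biRees I J) (gradedMaximalIdeal I J) := by
  have hdim' : 1 < ringKrullDim A := hdim ▸ by norm_num
  have ha' : a' ∈ I ^ 1 * J ^ 0 := by simpa using hI.right_mem
  have hb' : b' ∈ I ^ 0 * J ^ 1 := by simpa using hJ.right_mem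
  obtain ⟨γ, hγ, hγ0, N, hN⟩ := exists_mem_maximalIdeal_pow_le_span_pair hdim (mul_ne_zero ha hb)
  obtain ⟨β, hβ, -, hγβ⟩ := exists_mem_maximalIdeal_pow_le_span_pair hdim hγ0
  have hγa : maximalIdeal A ^ N ≤ Ideal.span {a, γ} := hN.trans <| Ideal.span_le.mpr <|
    Set.pair_subset (Ideal.mul_mem_right _ _ (Ideal.subset_span (by simp)))
      (Ideal.subset_span (by simp))
  have hγb : maximalIdeal A ^ N ≤ Ideal.span {b, γ} := hN.trans <| Ideal.span_le.mpr <|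
    Set.pair_subset (Ideal.mul_mem_left _ _ (Ideal.subset_span (by simp)))
      (Ideal.subset_span (by simp))
  have ha0 : biReesMonomial I J 1 0 a h.left_mem_pow ≠ 0 := fun h0 ↦
    ha (bimonomial_injective 1 0 ((congrArg Subtype.val h0).trans (bimonomial_zero 1 0).symm))
  refine isCohenMacaulayAt_of_isWeaklyRegular [biReesMonomial I J 1 0 a h.left_mem_pow,
    biReesMonomial I J 0 1 b h.right_mem_pow, algebraMap A (biRees I J) γ,
    biReesMonomial I J 1 0 a' ha' + biReesMonomial I J 0 1 b' hb' - algebraMap A (biRees I J) β]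
    ?_ (isWeaklyRegular_quadruple ?_ ?_ ?_ ?_) ?_
  · simp only [List.forall_mem_cons, List.not_mem_nil, false_imp_iff, implies_true, and_true,
      algebraMap_mem_gradedMaximalIdeal]
    exact ⟨biReesMonomial_mem_gradedMaximalIdeal _ (by simp),
      biReesMonomial_mem_gradedMaximalIdeal _ (by simp), hγ,
      sub_mem (add_mem (biReesMonomial_mem_gradedMaximalIdeal _ (by simp))
        (biReesMonomial_mem_gradedMaximalIdeal _ (by simp)))
        (algebraMap_mem_gradedMaximalIdeal.mpr hβ)⟩
  · exact fun g hg ↦ (mul_eq_zero.mp hg).resolve_left ha0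
  · exact fun g ↦ h.mem_span_singleton_of_mul_mem hcl ha hb
  · exact fun g ↦ h.mem_span_pair_of_mul_mem hI hJ hdim' hmI hmJ hγ0 ⟨N, hγa⟩ ⟨N, hγb⟩
  · exact fun g ↦ h.mem_span_triple_of_mul_mem hI hJ ha' hb' hdim' hmI hmJ hγβ
  · have hheight := height_gradedMaximalIdeal (I := I) (J := J)
      (Submodule.ne_bot_iff _ |>.mpr ⟨a, h.left_mem, ha⟩)
      (Submodule.ne_bot_iff _ |>.mpr ⟨b, h.right_mem, hb⟩)
    rw [hdim] at hheight
    exact (WithBot.coe_injective hheight).le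

lemma isCMNormalDomain_biRees (h : IsJointReductionZero I J a b)
    (hI : IsJointReductionZero I I a a') (hJ : IsJointReductionZero J J b b')
    (hcl : ∀ m n, IdealIsIntegrallyClosed (I ^ m * J ^ n)) (hdim : ringKrullDim A = 2)
    (hmI : ∃ n, maximalIdeal A ^ n ≤ I) (hmJ : ∃ n, maximalIdeal A ^ n ≤ J) (ha : a ≠ 0)
    (hb : b ≠ 0) : IsCMNormalDomain (biRees I J) :=
  ⟨isCohenMacaulayRing_biRees
    (h.isCohenMacaulayAt_gradedMaximalIdeal hI hJ hcl hdim hmI hmJ ha hb),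
    inferInstance, isIntegrallyClosed_biRees hcl⟩

end IsJointReductionZero

end RegularSequence

section ReductionNumber

open RingTheory.Sequence MvPolynomial IsLocalRing

universe u

lemma IsCohenMacaulayAt.exists_notMem_mul_mem {R : Type u} [CommRing R] {N : Ideal R} [N.IsPrime]
    (h : IsCohenMacaulayAt R N) {xs : List R} (hlen : N.height = xs.length)
    (hmem : ∀ x ∈ xs, x ∈ N) (hrad : N ≤ (Ideal.ofList xs).radical) {i : ℕ} (hi : i < xs.length)
    {g : R} (hg : xs[i] * g ∈ Ideal.ofList (xs.take i)) :
    ∃ s ∉ N, s * g ∈ Ideal.ofList (xs.take i) := by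
  let f := algebraMap R (Localization.AtPrime N)
  have hreg : IsWeaklyRegular (Localization.AtPrime N) (xs.map f) := by
    refine h.isWeaklyRegular_of_maximalIdeal_le_radical ?_ ?_ ?_
    · rw [IsLocalization.AtPrime.ringKrullDim_eq_height N, hlen, List.length_map]
      rfl
    · rw [List.forall_mem_map]
      exact fun x hx ↦ (IsLocalization.AtPrime.to_map_mem_maximal_iff _ N x).mpr (hmem x hx)
    · rw [← IsLocalization.AtPrime.map_eq_maximalIdeal N, ← Ideal.map_ofList]
      exact (Ideal.map_mono hrad).trans (Ideal.map_radical_le f)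
  have hfg := (isWeaklyRegular_self_iff _).mp hreg i (by simpa using hi) (f g)
  rw [List.getElem_map, ← List.map_take, ← Ideal.map_ofList, ← map_mul] at hfg
  obtain ⟨s, hs, hsg⟩ := (IsLocalization.algebraMap_mem_map_algebraMap_iff N.primeCompl _ _ _).mp
    (hfg (Ideal.mem_map_of_mem f hg))
  exact ⟨s, hs, hsg⟩

variable {A : Type u} [CommRing A] {I J : Ideal A} {a a' b b' : A}

lemma mul_mem_comap_of_sub_mem {P : Ideal (biRees I J)} {m n : ℕ} {x y c : A}
    (hx : x ∈ coeffIdeal P m n) (hy : y ∈ I ^ m * J ^ n)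
    (h : biReesMonomial I J m n y hy - algebraMap A (biRees I J) c ∈ P) :
    x * c ∈ P.comap (algebraMap A (biRees I J)) := by
  have hxy : algebraMap A (biRees I J) x * biReesMonomial I J m n y hy ∈ P := by
    rw [← biReesMonomial_zero_zero, biReesMonomial_mul]
    refine (mem_coeffIdeal_iff _).mp ?_
    rw [zero_add, zero_add, mul_comm]
    exact Ideal.mul_mem_left _ y hx
  rw [Ideal.mem_comap, map_mul]
  convert P.sub_mem hxy (P.mul_mem_left (algebraMap A (biRees I J) x) h) using 1
  ring

lemma gradedMaximalIdeal_le [IsLocalRing A] {P : Ideal (biRees I J)} (hI : I ≤ coeffIdeal P 1 0)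
    (hJ : J ≤ coeffIdeal P 0 1) (h : maximalIdeal A ≤ P.comap (algebraMap A (biRees I J))) :
    gradedMaximalIdeal I J ≤ P := by
  have hI' : I ^ 1 * J ^ 0 ≤ coeffIdeal P 1 0 := by simpa using hI
  have hJ' : I ^ 0 * J ^ 1 ≤ coeffIdeal P 0 1 := by simpa using hJ
  intro f hf
  refine mem_of_forall_bicoeff_mem_coeffIdeal fun m n _ ↦ ?_
  have hmem := mem_biRees.mp f.2 m n
  obtain _ | m := m
  · obtain _ | n := n
    · rw [coeffIdeal_zero_zero]
      exact h (mem_gradedMaximalIdeal.mp hf)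
    · exact pow_mul_pow_le_coeffIdeal hJ' le_rfl (by omega) hmem
  · exact pow_mul_pow_le_coeffIdeal hI' (by omega) n.zero_le hmem

lemma isUnit_bicoeff_of_notMem_gradedMaximalIdeal [IsLocalRing A] {s : biRees I J}
    (hs : s ∉ gradedMaximalIdeal I J) : IsUnit (bicoeff s.1 0 0) := by
  rwa [mem_gradedMaximalIdeal, notMem_maximalIdeal] at hs

namespace IsJointReduction

lemma pow_succ_le (h : IsJointReduction I I a a') :
    ∃ n, I ^ (n + 1) ≤ Ideal.span {a, a'} * I ^ n := by
  obtain ⟨n, hn⟩ := h.exists_le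
  refine ⟨n + (n + 1), ?_⟩
  calc I ^ (n + (n + 1) + 1) = I ^ (n + 1) * I ^ (n + 1) := by ring
    _ ≤ _ := hn
    _ = Ideal.span {a, a'} * I ^ (n + (n + 1)) := by
      rw [Ideal.span_insert, Ideal.sup_mul]
      congr 1 <;> ring

lemma exists_maximalIdeal_pow_le [IsLocalRing A] (h : IsJointReduction I J a b)
    (hI : ∃ n, maximalIdeal A ^ n ≤ I) (hJ : ∃ n, maximalIdeal A ^ n ≤ J) :
    ∃ n, maximalIdeal A ^ n ≤ Ideal.span {a, b} := by
  obtain ⟨n, hn⟩ := h.exists_le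
  obtain ⟨p, hp⟩ := hI
  obtain ⟨q, hq⟩ := hJ
  refine ⟨p * (n + 1) + q * (n + 1), ?_⟩
  rw [pow_add, pow_mul, pow_mul, Ideal.span_insert]
  exact (Ideal.mul_mono (Ideal.pow_right_mono hp _) (Ideal.pow_right_mono hq _)).trans
    (hn.trans (sup_le_sup Ideal.mul_le_left Ideal.mul_le_left))

section GradedMaximalIdeal

variable {P : Ideal (biRees I J)} [P.IsPrime]

lemma le_coeffIdeal_one_zero (h : IsJointReduction I I a a') (ha : a ∈ coeffIdeal P 1 0)
    (ha' : a' ∈ coeffIdeal P 1 0) : I ≤ coeffIdeal P 1 0 := by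
  obtain ⟨n, hn⟩ := h.pow_succ_le
  simpa using le_coeffIdeal_of_pow_le_mul (m := 1) (n := 0) (by simpa using hn)
    (Ideal.span_le.mpr (Set.pair_subset ha ha'))

lemma le_coeffIdeal_zero_one (h : IsJointReduction J J b b') (hb : b ∈ coeffIdeal P 0 1)
    (hb' : b' ∈ coeffIdeal P 0 1) : J ≤ coeffIdeal P 0 1 := by
  obtain ⟨n, hn⟩ := h.pow_succ_le
  simpa using le_coeffIdeal_of_pow_le_mul (m := 0) (n := 1) (by simpa using hn)
    (Ideal.span_le.mpr (Set.pair_subset hb hb'))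

lemma gradedMaximalIdeal_le_of_mem [IsLocalRing A] (h : IsJointReduction I J a b)
    (hI : IsJointReduction I I a a') (hJ : IsJointReduction J J b b')
    (haa' : ∃ n, maximalIdeal A ^ n ≤ Ideal.span {a, a'})
    (ha'b : ∃ n, maximalIdeal A ^ n ≤ Ideal.span {a', b}) (ham : a ∈ maximalIdeal A)
    (ha' : a' ∈ I ^ 1 * J ^ 0) (hb' : b' ∈ I ^ 0 * J ^ 1)
    (haP : a ∈ coeffIdeal P 1 0) (hbP : b ∈ coeffIdeal P 0 1)
    (ha'P : a' ∈ P.comap (algebraMap A (biRees I J)))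
    (hP : biReesMonomial I J 1 0 a' ha' + biReesMonomial I J 0 1 b' hb' -
      algebraMap A (biRees I J) a ∈ P) : gradedMaximalIdeal I J ≤ P := by
  set p := P.comap (algebraMap A (biRees I J))
  have hprime : p.IsPrime := inferInstance
  have hmax {x y : A} (hx : x ∈ p) (hy : y ∈ p)
      (hxy : ∃ n, maximalIdeal A ^ n ≤ Ideal.span {x, y}) : maximalIdeal A ≤ p := by
    obtain ⟨n, hn⟩ := hxy
    exact hprime.le_of_pow_le (hn.trans (Ideal.span_le.mpr (Set.pair_subset hx hy)))
  obtain hIP | hJP := h.le_coeffIdeal_or haP hbP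
  · have hsub : biReesMonomial I J 0 1 b' hb' - algebraMap A (biRees I J) a ∈ P := by
      have ha'' := (mem_coeffIdeal_iff ha').mp (hIP hI.right_mem)
      simpa [add_sub_assoc] using (P.add_mem_iff_right ha'').mp (by rwa [← add_sub_assoc])
    have hap : a ∈ p := (hprime.mem_or_mem (mul_mem_comap_of_sub_mem hbP hb' hsub)).elim
      (fun hbp ↦ hmax ha'P hbp ha'b ham) id
    have hb'P : b' ∈ coeffIdeal P 0 1 :=
      (mem_coeffIdeal_iff hb').mpr ((P.sub_mem_iff_left hap).mp hsub)
    exact gradedMaximalIdeal_le hIP (hJ.le_coeffIdeal_zero_one hbP hb'P) (hmax hap ha'P haa')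
  · have hsub : biReesMonomial I J 1 0 a' ha' - algebraMap A (biRees I J) a ∈ P := by
      have hb'' := (mem_coeffIdeal_iff hb').mp (hJP hJ.right_mem)
      exact (P.add_mem_iff_right hb'').mp (by convert hP using 1; ring)
    have hap : a ∈ p :=
      (hprime.mem_or_mem (mul_mem_comap_of_sub_mem haP ha' hsub)).elim id id
    have ha'P' : a' ∈ coeffIdeal P 1 0 :=
      (mem_coeffIdeal_iff ha').mpr ((P.sub_mem_iff_left hap).mp hsub)
    exact gradedMaximalIdeal_le (hI.le_coeffIdeal_one_zero haP ha'P') hJP (hmax hap ha'P haa')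

end GradedMaximalIdeal

end IsJointReduction

lemma isJointReductionZero_of_forall_exists_notMem [IsLocalRing A] (ha : a ∈ I ^ 1 * J ^ 0)
    (hb : b ∈ I ^ 0 * J ^ 1) {c : A} (hc : c ∈ Ideal.span {a, b})
    (h : ∀ g, algebraMap A (biRees I J) c * g ∈
        Ideal.span {biReesMonomial I J 1 0 a ha, biReesMonomial I J 0 1 b hb} →
      ∃ s ∉ gradedMaximalIdeal I J, s * g ∈
        Ideal.span {biReesMonomial I J 1 0 a ha, biReesMonomial I J 0 1 b hb}) :
    IsJointReductionZero I J a b := by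
  refine ⟨by simpa using ha, by simpa using hb, fun x hx ↦ ?_⟩
  have hx' : x ∈ I ^ 1 * J ^ 1 := by simpa using hx
  obtain ⟨u, v, rfl⟩ := Ideal.mem_span_pair.mp hc
  obtain ⟨s, hs, hsx⟩ := h (biReesMonomial I J 1 1 x hx') <| by
    set Q := Ideal.span {biReesMonomial I J 1 0 a ha, biReesMonomial I J 0 1 b hb}
    have haQ : a ∈ coeffIdeal Q 1 0 := (mem_coeffIdeal_iff ha).mpr (Ideal.subset_span (by simp))
    have hbQ : b ∈ coeffIdeal Q 0 1 := (mem_coeffIdeal_iff hb).mpr (Ideal.subset_span (by simp))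
    rw [← biReesMonomial_zero_zero, biReesMonomial_mul]
    refine (mem_coeffIdeal_iff _).mp ?_
    rw [show (u * a + v * b) * x = a * (u * x) + b * (v * x) by ring]
    refine add_mem (span_singleton_mul_le_coeffIdeal haQ 0 1 ?_)
      (span_singleton_mul_le_coeffIdeal hbQ 1 0 ?_)
    · refine Ideal.mul_mem_mul (Ideal.mem_span_singleton_self a) (Ideal.mul_mem_left _ u ?_)
      simpa using Ideal.mul_le_right hx
    · refine Ideal.mul_mem_mul (Ideal.mem_span_singleton_self b) (Ideal.mul_mem_left _ v ?_)
      simpa using Ideal.mul_le_left hx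
  obtain ⟨p, q, hpq⟩ := Ideal.mem_span_pair.mp hsx
  rw [mul_comm p, mul_comm q, mul_comm s] at hpq
  have hcoeff := congrArg (fun g : biRees I J ↦ bicoeff g.1 1 1) hpq
  simp only [AddMemClass.coe_add, bicoeff_add, bicoeff_biReesMonomial_mul, le_refl, zero_le,
    and_self, if_true, Nat.sub_self, Nat.sub_zero] at hcoeff
  refine (Ideal.mul_unit_mem_iff_mem _ (isUnit_bicoeff_of_notMem_gradedMaximalIdeal hs)).mp ?_
  rw [← hcoeff]
  exact mem_span_singleton_mul_sup.mpr
    ⟨_, by simpa using mem_biRees.mp p.2 0 1, _, by simpa using mem_biRees.mp q.2 1 0, rfl⟩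

namespace IsJointReductionZero

variable {F : biRees I J}

lemma algebraMap_mul_biReesMonomial_mem (h : IsJointReductionZero I J a b)
    (ha' : a' ∈ I ^ 1 * J ^ 0) (hb' : b' ∈ I ^ 0 * J ^ 1)
    (hF : F = biReesMonomial I J 1 0 a' ha' + biReesMonomial I J 0 1 b' hb' -
      algebraMap A (biRees I J) a) {x : A} (hx₁ : x ∈ I ^ 1 * J ^ 0) (hx₂ : x ∈ I ^ 2 * J ^ 0) :
    algebraMap A (biRees I J) a' * biReesMonomial I J 2 0 x hx₂ ∈
      Ideal.span {biReesMonomial I J 1 0 a h.left_mem_pow,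
        biReesMonomial I J 0 1 b h.right_mem_pow, F} := by
  set Q := Ideal.span {biReesMonomial I J 1 0 a h.left_mem_pow,
    biReesMonomial I J 0 1 b h.right_mem_pow, F}
  have haQ : a ∈ coeffIdeal Q 1 0 :=
    (mem_coeffIdeal_iff h.left_mem_pow).mpr (Ideal.subset_span (by simp))
  have hbQ : b ∈ coeffIdeal Q 0 1 :=
    (mem_coeffIdeal_iff h.right_mem_pow).mpr (Ideal.subset_span (by simp))
  have hFQ : F ∈ Q := Ideal.subset_span (by simp)
  have hb'x : b' * x ∈ coeffIdeal Q 1 1 := by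
    have hle := sup_le (span_singleton_mul_le_coeffIdeal haQ 0 1)
      (span_singleton_mul_le_coeffIdeal hbQ 1 0)
    have hxb' : x * b' ∈ I * J :=
      Ideal.mul_mem_mul (by simpa using hx₁) (by simpa using hb')
    exact hle (by simpa [mul_comm b'] using h.mul_le hxb')
  have hax : a * x ∈ coeffIdeal Q 1 0 := Ideal.mul_mem_right x _ haQ
  -- `a' x t₁² = F · x t₁ - b' x t₁ t₂ + a x t₁`
  have hsum := add_mem (sub_mem (Q.mul_mem_right (biReesMonomial I J 1 0 x hx₁) hFQ)
    ((mem_coeffIdeal_iff (mul_mem_pow_mul_pow hb' hx₁)).mp hb'x))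
    ((mem_coeffIdeal_iff (mul_mem_pow_mul_pow (m := 0) (n := 0) (by simp) hx₁)).mp hax)
  convert hsum using 1
  simp only [hF, add_mul, sub_mul, ← biReesMonomial_zero_zero, biReesMonomial_mul, zero_add,
    add_zero, one_add_one_eq_two]
  abel

lemma self_of_forall_exists_notMem [IsLocalRing A] (hzero : IsJointReductionZero I J a b)
    (ha' : a' ∈ I ^ 1 * J ^ 0) (hb' : b' ∈ I ^ 0 * J ^ 1)
    (hF : F = biReesMonomial I J 1 0 a' ha' + biReesMonomial I J 0 1 b' hb' -
      algebraMap A (biRees I J) a)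
    (h : ∀ g, algebraMap A (biRees I J) a' * g ∈
        Ideal.span {biReesMonomial I J 1 0 a hzero.left_mem_pow,
          biReesMonomial I J 0 1 b hzero.right_mem_pow, F} →
      ∃ s ∉ gradedMaximalIdeal I J, s * g ∈
        Ideal.span {biReesMonomial I J 1 0 a hzero.left_mem_pow,
          biReesMonomial I J 0 1 b hzero.right_mem_pow, F}) :
    IsJointReductionZero I I a a' := by
  refine ⟨hzero.left_mem, by simpa using ha', fun x hx ↦ ?_⟩
  have hx₁ : x ∈ I ^ 1 * J ^ 0 := by simpa using Ideal.mul_le_left hx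
  have hx₂ : x ∈ I ^ 2 * J ^ 0 := by simpa [pow_two] using hx
  obtain ⟨s, hs, hsx⟩ := h _ (hzero.algebraMap_mul_biReesMonomial_mem ha' hb' hF hx₁ hx₂)
  obtain ⟨p, q, r, hpqr⟩ := Submodule.mem_span_triple.mp hsx
  simp only [hF, smul_eq_mul, mul_comm p, mul_comm q, mul_comm r, mul_comm s, add_mul,
    sub_mul] at hpqr
  have hcoeff := congrArg (fun g : biRees I J ↦ bicoeff g.1 2 0) hpqr
  simp only [AddMemClass.coe_add, AddSubgroupClass.coe_sub, bicoeff_add, bicoeff_sub,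
    bicoeff_biReesMonomial_mul, bicoeff_algebraMap_mul, zero_le, and_true, true_and, one_le_two,
    nonpos_iff_eq_zero, one_ne_zero, if_true, if_false, le_refl, Nat.sub_self, Nat.sub_zero,
    Nat.add_one_sub_one, add_zero] at hcoeff
  have hr : bicoeff r.1 2 0 ∈ I := Ideal.pow_le_self two_ne_zero
    (by simpa using mem_biRees.mp r.2 2 0)
  refine (Ideal.mul_unit_mem_iff_mem _ (isUnit_bicoeff_of_notMem_gradedMaximalIdeal hs)).mp ?_
  refine mem_span_singleton_mul_sup.mpr ⟨bicoeff p.1 1 0 - bicoeff r.1 2 0,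
    sub_mem (by simpa using mem_biRees.mp p.2 1 0) hr, bicoeff r.1 1 0,
    by simpa using mem_biRees.mp r.2 1 0, ?_⟩
  rw [← hcoeff]
  ring

end IsJointReductionZero

lemma generically_ne_zero (hI : I ≠ ⊥) : Generically I (· ≠ 0) :=
  ⟨{⊥}, Set.finite_singleton ⊥, by simpa using hI, by simp⟩

variable [IsLocalRing A]

/-- The ideal `I` has reduction number at most one with respect to a general two-generated
reduction: `I ^ 2 = (a, a') I` for generic `a` and `a'` in `I`. -/
def HasGenericReductionNumberLEOne (I : Ideal A) : Prop :=
  Generically I fun a ↦ Generically I fun a' ↦ IsJointReductionZero I I a a'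

lemma hasGenericReductionNumberLEOne_top : HasGenericReductionNumberLEOne (⊤ : Ideal A) := by
  refine ⟨{maximalIdeal A}, Set.finite_singleton _, by simpa using Ideal.IsPrime.ne_top', ?_⟩
  intro a _ ha
  refine ⟨∅, Set.finite_empty, by simp, fun a' _ _ ↦ ⟨Submodule.mem_top, Submodule.mem_top, ?_⟩⟩
  have hunit : IsUnit a := notMem_maximalIdeal.mp (ha _ rfl)
  simp [Ideal.span_singleton_eq_top.mpr hunit]

variable [IsNoetherianRing A]

lemma ne_bot_of_maximalIdeal_pow_le (hdim : 1 < ringKrullDim A)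
    (hI : ∃ n, maximalIdeal A ^ n ≤ I) : I ≠ ⊥ := by
  obtain ⟨n, hn⟩ := hI
  exact ne_bot_of_le_ne_bot (maximalIdeal_pow_ne_bot hdim n) hn

lemma generically_exists_maximalIdeal_pow_le_span_pair [IsDomain A] (hdim : ringKrullDim A = 2)
    (hI : ∃ n, maximalIdeal A ^ n ≤ I) (hb : b ≠ 0) :
    Generically I fun a ↦ ∃ n, maximalIdeal A ^ n ≤ Ideal.span {a, b} := by
  obtain ⟨m, hm⟩ := hI
  refine (generically_forall_mem_imp_le (I := I)
    (Ideal.finite_minimalPrimes_of_isNoetherianRing A (Ideal.span {b}))).mono fun a _ h ↦ ?_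
  rw [Set.pair_comm]
  refine exists_maximalIdeal_pow_le_span_pair hdim.le hb fun p hp hap ↦ ?_
  have hprime : p.IsPrime := hp.1.1
  exact not_maximalIdeal_le_of_mem_minimalPrimes_span_singleton (hdim ▸ by norm_num) hp
    (hprime.le_of_pow_le (hm.trans (h p hp hap)))

namespace IsJointReduction

variable [IsDomain A]

lemma exists_notMem_mul_mem (h : IsJointReduction I J a b)
    (hI : IsJointReduction I I a a') (hJ : IsJointReduction J J b b') (hdim : ringKrullDim A = 2)
    (hmI : ∃ n, maximalIdeal A ^ n ≤ I) (hmJ : ∃ n, maximalIdeal A ^ n ≤ J)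
    (hIm : I ≤ maximalIdeal A) (ha'b : ∃ n, maximalIdeal A ^ n ≤ Ideal.span {a', b})
    (hcm : IsCohenMacaulayAt (biRees I J) (gradedMaximalIdeal I J))
    (ha : a ∈ I ^ 1 * J ^ 0) (hb : b ∈ I ^ 0 * J ^ 1)
    (ha' : a' ∈ I ^ 1 * J ^ 0) (hb' : b' ∈ I ^ 0 * J ^ 1) {M : ℕ} {xs : List (biRees I J)}
    (hxs : xs.Perm [biReesMonomial I J 1 0 a ha, biReesMonomial I J 0 1 b hb,
      biReesMonomial I J 1 0 a' ha' + biReesMonomial I J 0 1 b' hb' - algebraMap A (biRees I J) a,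
      algebraMap A (biRees I J) a' ^ (M + 1)])
    {i : ℕ} (hi : i < xs.length) {g : biRees I J}
    (hg : xs[i] * g ∈ Ideal.ofList (xs.take i)) :
    ∃ s ∉ gradedMaximalIdeal I J, s * g ∈ Ideal.ofList (xs.take i) := by
  have hdim' : 1 < ringKrullDim A := hdim ▸ by norm_num
  have hheight : (gradedMaximalIdeal I J).height = 4 := by
    have hN := height_gradedMaximalIdeal (ne_bot_of_maximalIdeal_pow_le hdim' hmI)
      (ne_bot_of_maximalIdeal_pow_le hdim' hmJ)
    rw [hdim] at hN
    exact WithBot.coe_injective hN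
  refine hcm.exists_notMem_mul_mem (by rw [hheight, hxs.length_eq]; rfl) (fun x hx ↦ ?_) ?_ hi hg
  · rw [hxs.mem_iff] at hx
    simp only [List.mem_cons, List.not_mem_nil, or_false] at hx
    obtain rfl | rfl | rfl | rfl := hx
    · exact biReesMonomial_mem_gradedMaximalIdeal _ (by simp)
    · exact biReesMonomial_mem_gradedMaximalIdeal _ (by simp)
    · exact sub_mem (add_mem (biReesMonomial_mem_gradedMaximalIdeal _ (by simp))
        (biReesMonomial_mem_gradedMaximalIdeal _ (by simp)))
        (algebraMap_mem_gradedMaximalIdeal.mpr (hIm h.left_mem))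
    · exact Ideal.pow_mem_of_mem _
        (algebraMap_mem_gradedMaximalIdeal.mpr (hIm hI.right_mem)) _ M.succ_pos
  · rw [Ideal.radical_eq_sInf]
    refine le_sInf fun P ⟨hle, hP⟩ ↦ ?_
    have hP' : ∀ x ∈ xs, x ∈ P := fun x hx ↦ hle (Ideal.subset_span hx)
    exact h.gradedMaximalIdeal_le_of_mem hI hJ (hI.exists_maximalIdeal_pow_le hmI hmI) ha'b
      (hIm h.left_mem) ha' hb' ((mem_coeffIdeal_iff ha).mpr (hP' _ (hxs.mem_iff.mpr (by simp))))
      ((mem_coeffIdeal_iff hb).mpr (hP' _ (hxs.mem_iff.mpr (by simp))))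
      (hP.mem_of_pow_mem (M + 1) (hP' _ (hxs.mem_iff.mpr (by simp))))
      (hP' _ (hxs.mem_iff.mpr (by simp)))

lemma isJointReductionZero (h : IsJointReduction I J a b)
    (hI : IsJointReduction I I a a') (hJ : IsJointReduction J J b b') (hdim : ringKrullDim A = 2)
    (hmI : ∃ n, maximalIdeal A ^ n ≤ I) (hmJ : ∃ n, maximalIdeal A ^ n ≤ J)
    (hIm : I ≤ maximalIdeal A) (ha'b : ∃ n, maximalIdeal A ^ n ≤ Ideal.span {a', b})
    (hcm : IsCohenMacaulayAt (biRees I J) (gradedMaximalIdeal I J)) :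
    IsJointReductionZero I J a b := by
  have ha : a ∈ I ^ 1 * J ^ 0 := by simpa using h.left_mem
  have hb : b ∈ I ^ 0 * J ^ 1 := by simpa using h.right_mem
  have ha' : a' ∈ I ^ 1 * J ^ 0 := by simpa using hI.right_mem
  have hb' : b' ∈ I ^ 0 * J ^ 1 := by simpa using hJ.right_mem
  obtain ⟨M, hM⟩ := h.exists_maximalIdeal_pow_le hmI hmJ
  refine isJointReductionZero_of_forall_exists_notMem ha hb (c := a' ^ (M + 1))
    (hM (Ideal.pow_le_pow_right M.le_succ (Ideal.pow_mem_pow (hIm hI.right_mem) _))) fun g hg ↦ ?_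
  have hreg := h.exists_notMem_mul_mem hI hJ hdim hmI hmJ hIm ha'b hcm ha hb ha' hb' (M := M)
    (((List.Perm.swap _ _ []).cons _).cons _) (i := 2) (by simp) (g := g)
  simpa [Ideal.span_insert] using hreg (by simpa [Ideal.span_insert] using hg)

theorem isJointReductionZero_self (h : IsJointReduction I J a b)
    (hI : IsJointReduction I I a a') (hJ : IsJointReduction J J b b') (hdim : ringKrullDim A = 2)
    (hmI : ∃ n, maximalIdeal A ^ n ≤ I) (hmJ : ∃ n, maximalIdeal A ^ n ≤ J)
    (hIm : I ≤ maximalIdeal A) (ha'b : ∃ n, maximalIdeal A ^ n ≤ Ideal.span {a', b})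
    (hcm : IsCohenMacaulayAt (biRees I J) (gradedMaximalIdeal I J)) :
    IsJointReductionZero I I a a' := by
  have ha' : a' ∈ I ^ 1 * J ^ 0 := by simpa using hI.right_mem
  have hb' : b' ∈ I ^ 0 * J ^ 1 := by simpa using hJ.right_mem
  have hzero := h.isJointReductionZero hI hJ hdim hmI hmJ hIm ha'b hcm
  refine hzero.self_of_forall_exists_notMem ha' hb' rfl fun g hg ↦ ?_
  have hreg := h.exists_notMem_mul_mem hI hJ hdim hmI hmJ hIm ha'b hcm hzero.left_mem_pow
    hzero.right_mem_pow ha' hb' (M := 0) (List.Perm.refl _) (i := 3) (by simp) (g := g)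
  simpa [Ideal.span_insert] using hreg (by simpa [Ideal.span_insert] using hg)

end IsJointReduction

theorem hasGenericReductionNumberLEOne_of_isCohenMacaulayAt [IsDomain A] [Infinite (ResidueField A)]
    (hdim : ringKrullDim A = 2) (hmI : ∃ n, maximalIdeal A ^ n ≤ I)
    (hmJ : ∃ n, maximalIdeal A ^ n ≤ J)
    (hcm : IsCohenMacaulayAt (biRees I J) (gradedMaximalIdeal I J)) :
    HasGenericReductionNumberLEOne I := by
  obtain rfl | hI := eq_or_ne I ⊤
  · exact hasGenericReductionNumberLEOne_top
  have hJ : J ≠ ⊥ := ne_bot_of_maximalIdeal_pow_le (hdim ▸ by norm_num) hmJ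
  refine ((generically_isJointReduction hdim I J).and
    (generically_isJointReduction hdim I I)).mono fun a _ ⟨hab, haa'⟩ ↦ ?_
  obtain ⟨b, -, ⟨hab, hbb'⟩, hb⟩ := ((hab.and (generically_isJointReduction hdim J J)).and
    (generically_ne_zero hJ)).exists_mem
  refine (haa'.and (generically_exists_maximalIdeal_pow_le_span_pair hdim hmI hb)).mono
    fun a' _ ⟨haa', ha'b⟩ ↦ ?_
  obtain ⟨b', -, hbb'⟩ := hbb'.exists_mem
  exact hab.isJointReductionZero_self haa' hbb' hdim hmI hmJ (le_maximalIdeal hI) ha'b hcm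

end ReductionNumber

section DeterminantTrick

universe u

variable {A : Type u} [CommRing A] {b t : A} {K L M Q : Ideal A}

lemma pow_sub_det_scalar_sub_mem {r : ℕ} (hKL : K ≤ L) (ht : t ∈ L)
    {C : Matrix (Fin (r + 1)) (Fin (r + 1)) A} (hC : ∀ i j, C i j ∈ K) :
    t ^ (r + 1) - (Matrix.scalar (Fin (r + 1)) t - C).det ∈ K * L ^ r := by
  nontriviality A
  have hlead : C.charpoly.coeff (Fintype.card (Fin (r + 1))) = 1 := by
    rw [← Matrix.charpoly_natDegree_eq_dim C]
    exact C.charpoly_monic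
  rw [← Matrix.eval_charpoly, Polynomial.eval_eq_sum_range, Matrix.charpoly_natDegree_eq_dim,
    Finset.sum_range_succ, hlead, Fintype.card_fin, one_mul, sub_add_cancel_right]
  refine neg_mem (Ideal.sum_mem _ fun i hi ↦ ?_)
  obtain ⟨j, rfl⟩ := Nat.exists_eq_add_of_le (Nat.lt_succ_iff.mp (Finset.mem_range.mp hi))
  have hcoeff := Matrix.coeff_charpoly_mem_ideal_pow hC i
  rw [Fintype.card_fin, show i + j + 1 - i = j + 1 by omega, pow_succ'] at hcoeff
  have hmem := Ideal.mul_mem_mul (Ideal.mul_mono_right (Ideal.pow_right_mono hKL j) hcoeff)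
    (Ideal.pow_mem_pow ht i)
  rwa [mul_assoc, ← pow_add, add_comm j] at hmem

lemma cramer_mem_pow_mul {ι : Type*} [Fintype ι] [DecidableEq ι] {T : Matrix ι ι A}
    (hT : ∀ i j, T i j ∈ L) {e : ι → A} (he : ∀ i, e i ∈ L * Q) (i : ι) :
    T.cramer e i ∈ L ^ Fintype.card ι * Q := by
  rw [Matrix.cramer_apply, Matrix.det_apply]
  refine Ideal.sum_mem _ fun σ _ ↦ Submodule.smul_of_tower_mem _ _ ?_
  have hprod : ∏ j, (T.updateCol i e) (σ j) j ∈ ∏ j, (L * if j = i then Q else 1) := by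
    refine Ideal.prod_mem_prod fun j _ ↦ ?_
    obtain rfl | hj := eq_or_ne j i
    · simpa using he _
    · simpa [hj, Matrix.updateCol_ne] using hT _ _
  rw [Finset.prod_mul_distrib, Finset.prod_const, Finset.card_univ,
    Finset.prod_ite_eq' Finset.univ i fun _ ↦ Q, if_pos (Finset.mem_univ i)] at hprod
  exact hprod

lemma det_mul_mem_of_mulVec_eq_smul {ι : Type*} [Fintype ι] [DecidableEq ι] {T : Matrix ι ι A}
    (hT : ∀ i j, T i j ∈ L) {e g : ι → A} (he : ∀ i, e i ∈ L * Q) (h : T.mulVec g = b • e)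
    {m : A} (hm : m ∈ Ideal.span (Set.range g)) :
    T.det * m ∈ Ideal.span {b} * (L ^ Fintype.card ι * Q) := by
  have hcramer : b • T.cramer e = T.det • g := by
    rw [← map_smul, ← h, Matrix.cramer_eq_adjugate_mulVec, Matrix.mulVec_mulVec,
      Matrix.adjugate_mul, Matrix.smul_mulVec, Matrix.one_mulVec]
  have hle : Ideal.span {T.det} * Ideal.span (Set.range g) ≤
      Ideal.span {b} * (L ^ Fintype.card ι * Q) := by
    rw [Ideal.span_mul_span', Ideal.span_le]
    rintro _ ⟨_, rfl, _, ⟨i, rfl⟩, rfl⟩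
    have hi : b * T.cramer e i = T.det * g i := congrFun hcramer i
    change T.det * g i ∈ _
    rw [← hi]
    exact Ideal.mul_mem_mul (Ideal.mem_span_singleton_self b) (cramer_mem_pow_mul hT he i)
  exact hle (Ideal.mul_mem_mul (Ideal.mem_span_singleton_self _) hm)

/- If `b = 0` this is the Cayley–Hamilton theorem for multiplication by `t` on `M`; the term
`b L Q` contributes the right hand side of the linear system solved by Cramer's rule. -/
lemma exists_pow_sub_mul_mem (hM : M.FG) (hKL : K ≤ L) (ht : t ∈ L)
    (h : ∀ m ∈ M, t * m ∈ K * M ⊔ Ideal.span {b} * (L * Q)) :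
    ∃ r, ∃ c ∈ K * L ^ r, ∀ m ∈ M,
      (t ^ (r + 1) - c) * m ∈ Ideal.span {b} * (L ^ (r + 1) * Q) := by
  obtain ⟨r, g, rfl⟩ := Submodule.fg_iff_exists_fin_generating_family.mp hM
  obtain _ | r := r
  · exact ⟨0, 0, zero_mem _, by simp⟩
  have hsys (i : Fin (r + 1)) : ∃ (c : Fin (r + 1) → A) (e : A), (∀ j, c j ∈ K) ∧ e ∈ L * Q ∧
      t * g i = ∑ j, c j * g j + b * e := by
    obtain ⟨y, hy, z, hz, hyz⟩ := Submodule.mem_sup.mp (h _ (Submodule.subset_span ⟨i, rfl⟩))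
    obtain ⟨e, he, rfl⟩ := Ideal.mem_span_singleton_mul.mp hz
    obtain ⟨c, hc, rfl⟩ := (Submodule.mem_ideal_smul_span_iff_exists_sum K g y).mp hy
    exact ⟨c, e, hc, he, by simpa [Finsupp.sum_fintype] using hyz.symm⟩
  choose C e hC he hCe using hsys
  set T := Matrix.scalar (Fin (r + 1)) t - Matrix.of C
  have hT (i j : Fin (r + 1)) : T i j ∈ L := by
    refine sub_mem ?_ (hKL (hC i j))
    rw [Matrix.scalar_apply, Matrix.diagonal_apply]
    split_ifs
    exacts [ht, zero_mem L]
  have hTg : T.mulVec g = b • e := by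
    ext i
    rw [Matrix.sub_mulVec, Pi.sub_apply, Matrix.scalar_apply, Matrix.mulVec_diagonal, hCe,
      sub_eq_iff_eq_add']
    simp [Matrix.mulVec, dotProduct]
  refine ⟨r, t ^ (r + 1) - T.det, pow_sub_det_scalar_sub_mem hKL ht hC, fun m hm ↦ ?_⟩
  simpa using det_mul_mem_of_mulVec_eq_smul hT he hTg hm

end DeterminantTrick

section IntegralClosureOfProduct

open IsLocalRing

universe u

variable {A : Type u} [CommRing A] {I J L : Ideal A} {a a' b b' x : A}

namespace IsJointReduction

lemma pow_succ (h : IsJointReduction I J a b) (m l : ℕ) :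
    IsJointReduction (I ^ (m + 1)) (J ^ (l + 1)) (a ^ (m + 1)) (b ^ (l + 1)) := by
  have ha : Ideal.span {a} ≤ I := (Ideal.span_singleton_le_iff_mem I).mpr h.left_mem
  have hb : Ideal.span {b} ≤ J := (Ideal.span_singleton_le_iff_mem J).mpr h.right_mem
  obtain ⟨n, hn⟩ := h.exists_le
  have hle := le_span_singleton_pow_mul_sup (a := a) (b := b)
    (F := fun m l ↦ I ^ (n + m) * J ^ (n + l)) (fun m l ↦ ?_) (fun m l ↦ ?_) (fun m l ↦ ?_)
    (m + 1) (l + 1)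
  · refine ⟨Ideal.pow_mem_pow h.left_mem _, Ideal.pow_mem_pow h.right_mem _, n, ?_⟩
    convert Ideal.mul_mono_left (K := I ^ (m * n) * J ^ (l * n)) hle using 1
    · ring
    · rw [Ideal.sup_mul]
      congr 1 <;> ring
  · convert Ideal.mul_mono_left (K := I ^ m * J ^ l) hn using 1
    · ring
    · rw [Ideal.sup_mul]
      congr 1 <;> ring
  · calc Ideal.span {a} * (I ^ (n + m) * J ^ (n + l)) ≤ I * (I ^ (n + m) * J ^ (n + l)) :=
          Ideal.mul_mono_left ha
      _ = I ^ (n + (m + 1)) * J ^ (n + l) := by ring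
  · calc Ideal.span {b} * (I ^ (n + m) * J ^ (n + l)) ≤ J * (I ^ (n + m) * J ^ (n + l)) :=
          Ideal.mul_mono_left hb
      _ = I ^ (n + m) * J ^ (n + (l + 1)) := by ring

variable [IsNoetherianRing A]

lemma exists_pow_sub_mul_span_mul_le (h : IsJointReduction I J a b) (ha' : a' ∈ I) :
    ∃ n N, ∃ g ∈ I ^ N, Ideal.span {a' ^ (N + 1) - a * g} * J ^ (n + 1) ≤
      Ideal.span {b} * (I ^ (N + 1) * J ^ n) := by
  have ha : Ideal.span {a} ≤ I := (Ideal.span_singleton_le_iff_mem I).mpr h.left_mem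
  obtain ⟨n, hn⟩ := h.exists_le
  have hKL : Ideal.span {a} * I ^ n ≤ I ^ (n + 1) := by
    rw [pow_succ']
    exact Ideal.mul_mono_left ha
  obtain ⟨r, c, hc, hcJ⟩ := exists_pow_sub_mul_mem (b := b) (Q := J ^ n)
    (IsNoetherian.noetherian (J ^ (n + 1))) hKL (Ideal.pow_mem_pow ha' (n + 1)) fun y hy ↦ by
      rw [mul_assoc]
      exact hn (Ideal.mul_mem_mul (Ideal.pow_mem_pow ha' (n + 1)) hy)
  rw [mul_assoc] at hc
  obtain ⟨g, hg, rfl⟩ := Ideal.mem_span_singleton_mul.mp hc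
  have hexp : (n + 1) * (r + 1) = n + (n + 1) * r + 1 := by ring
  refine ⟨n, n + (n + 1) * r, g, by rwa [pow_add, pow_mul], ?_⟩
  rw [Ideal.span_singleton_mul_le_iff, ← hexp, pow_mul, pow_mul]
  exact hcJ

variable [IsDomain A] [IsIntegrallyClosed A]

lemma exists_pow_sub_mul_mul_eq (h : IsJointReduction I J a b) (ha' : a' ∈ I) (hb : b ≠ 0)
    (hJ : J ≠ ⊥) (hcl : ∀ n, IdealIsIntegrallyClosed (I ^ n)) (hL : L ≠ ⊥)
    (hx : Ideal.span {x} * L ≤ I * J * L) :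
    ∃ N, ∃ g ∈ I ^ N, ∃ y ∈ I ^ (N + 2), (a' ^ (N + 1) - a * g) * x = b * y := by
  obtain ⟨n, N, g, hg, hle⟩ := h.exists_pow_sub_mul_span_mul_le ha'
  refine ⟨N, g, hg, (hcl (N + 2)).exists_mem_eq_mul (L := L * J ^ n)
    (mul_ne_zero hL (pow_ne_zero n hJ)) (IsNoetherian.noetherian _) hb fun l hl ↦ ?_⟩
  set d := a' ^ (N + 1) - a * g
  have hdx : Ideal.span {d * x} * (L * J ^ n) ≤ Ideal.span {b} * (I ^ (N + 2) * (L * J ^ n)) :=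
    calc Ideal.span {d * x} * (L * J ^ n)
        = Ideal.span {d} * (Ideal.span {x} * L) * J ^ n := by
          rw [← Ideal.span_singleton_mul_span_singleton]
          ring
      _ ≤ Ideal.span {d} * (I * J * L) * J ^ n := Ideal.mul_mono_left (Ideal.mul_mono_right hx)
      _ = Ideal.span {d} * J ^ (n + 1) * (I * L) := by ring
      _ ≤ Ideal.span {b} * (I ^ (N + 1) * J ^ n) * (I * L) := Ideal.mul_mono_left hle
      _ = Ideal.span {b} * (I ^ (N + 2) * (L * J ^ n)) := by ring
  obtain ⟨z, hz, hbz⟩ := Ideal.mem_span_singleton_mul.mp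
    (hdx (Ideal.mul_mem_mul (Ideal.mem_span_singleton_self _) hl))
  exact ⟨z, hz, hbz.symm⟩

end IsJointReduction

variable [IsDomain A] [IsNoetherianRing A]

lemma IdealIsIntegrallyClosed.mem_of_mul_span_le (hJ : IdealIsIntegrallyClosed J)
    (hI : I ≠ ⊥) (hL : L ≠ ⊥) {N : ℕ}
    (hred : I ^ (N + 2) ≤ Ideal.span {a} * I ^ (N + 1) ⊔ Ideal.span {a' ^ (N + 1)} * I)
    (ha : Ideal.span {a * x} * L ≤ I * J * L)
    (ha' : Ideal.span {a' ^ (N + 1) * x} * L ≤ I ^ (N + 1) * J * L) : x ∈ J := by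
  rw [← Ideal.span_singleton_mul_span_singleton] at ha ha'
  refine hJ x (isIntegralOverIdeal_of_forall_mul_mem (L := I ^ (N + 2) * L)
    (mul_ne_zero (pow_ne_zero _ hI) hL) (IsNoetherian.noetherian _) ?_)
  rw [← Ideal.span_singleton_mul_le_iff]
  calc Ideal.span {x} * (I ^ (N + 2) * L)
      ≤ Ideal.span {x} * ((Ideal.span {a} * I ^ (N + 1) ⊔ Ideal.span {a' ^ (N + 1)} * I) * L) :=
        Ideal.mul_mono_right (Ideal.mul_mono_left hred)
    _ = I ^ (N + 1) * (Ideal.span {a} * Ideal.span {x} * L) ⊔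
        I * (Ideal.span {a' ^ (N + 1)} * Ideal.span {x} * L) := by
      rw [Ideal.sup_mul, Ideal.mul_sup]
      congr 1 <;> ring
    _ ≤ I ^ (N + 1) * (I * J * L) ⊔ I * (I ^ (N + 1) * J * L) :=
        sup_le_sup (Ideal.mul_mono_right ha) (Ideal.mul_mono_right ha')
    _ = J * (I ^ (N + 2) * L) := by
      rw [show I ^ (N + 1) * (I * J * L) = I * (I ^ (N + 1) * J * L) by ring, sup_idem]
      ring

variable [IsIntegrallyClosed A] [IsLocalRing A]

namespace IsJointReduction

lemma mem_of_span_mul_le (h : IsJointReduction I J a b) (hI : IsJointReductionZero I I a a')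
    (hdim : 1 < ringKrullDim A) (hmI : ∃ n, maximalIdeal A ^ n ≤ I) (hJ : J ≠ ⊥) (hb : b ≠ 0)
    (hIcl : ∀ n, IdealIsIntegrallyClosed (I ^ n)) (hJcl : IdealIsIntegrallyClosed J) (hL : L ≠ ⊥)
    (hx : Ideal.span {x} * L ≤ I * J * L) : x ∈ Ideal.span {a} * J ⊔ Ideal.span {b} * I := by
  have hxL := Ideal.span_singleton_mul_le_iff.mp hx
  obtain ⟨N, g, hg, y, hy, hxy⟩ :=
    h.exists_pow_sub_mul_mul_eq hI.right_mem hb hJ hIcl hL hx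
  obtain ⟨s, hs, i, hi, rfl⟩ := mem_span_singleton_mul_sup.mp (hI.pow_succ_le (N + 1) hy)
  obtain ⟨n, hn⟩ := hI.exists_maximalIdeal_pow_le_span_pow hmI (N + 1)
  obtain ⟨w, hgw, hxw⟩ := exists_eq_mul_of_mul_eq_mul hdim hn (u := g * x + b * s)
    (v := x - b * i) (by linear_combination -hxy)
  have ha : Ideal.span {a * w} * L ≤ I * J * L := by
    refine Ideal.span_singleton_mul_le_iff.mpr fun l hl ↦ ?_
    rw [← hxw, sub_mul, mul_comm b]
    exact sub_mem (hxL l hl) (Ideal.mul_mem_mul (Ideal.mul_mem_mul hi h.right_mem) hl)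
  have ha' : Ideal.span {a' ^ (N + 1) * w} * L ≤ I ^ (N + 1) * J * L := by
    refine Ideal.span_singleton_mul_le_iff.mpr fun l hl ↦ ?_
    rw [← hgw, add_mul, mul_comm b]
    refine add_mem ?_ (Ideal.mul_mem_mul (Ideal.mul_mem_mul hs h.right_mem) hl)
    rw [show I ^ (N + 1) * J * L = I ^ N * (I * J * L) by ring, mul_assoc g]
    exact Ideal.mul_mem_mul hg (hxL l hl)
  have hw : w ∈ J := hJcl.mem_of_mul_span_le
    (ne_bot_of_maximalIdeal_pow_le hdim hmI) hL (hI.pow_succ_le (N + 1)) ha ha'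
  exact mem_span_singleton_mul_sup.mpr ⟨w, hw, i, hi, by linear_combination -hxw⟩

/- As `aJ + bI ⊆ IJ`, applying this to integral elements shows that `IJ` is integrally closed,
and applying it to elements of `IJ` that the joint reduction number is zero. -/
lemma mem_of_isIntegralOverIdeal_mul (h : IsJointReduction I J a b)
    (hI : IsJointReductionZero I I a a') (hdim : 1 < ringKrullDim A)
    (hmI : ∃ n, maximalIdeal A ^ n ≤ I) (hJ : J ≠ ⊥) (hb : b ≠ 0)
    (hIcl : ∀ n, IdealIsIntegrallyClosed (I ^ n)) (hJcl : IdealIsIntegrallyClosed J)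
    (hx : IsIntegralOverIdeal (I * J) x) : x ∈ Ideal.span {a} * J ⊔ Ideal.span {b} * I := by
  have hIJ : I * J ≠ ⊥ := mul_ne_zero (ne_bot_of_maximalIdeal_pow_le hdim hmI) hJ
  obtain ⟨L, hL, hxL⟩ := hx.exists_forall_mul_mem hIJ
  exact h.mem_of_span_mul_le hI hdim hmI hJ hb hIcl hJcl hL
    (Ideal.span_singleton_mul_le_iff.mpr hxL)

lemma isJointReductionZero_of_idealIsIntegrallyClosed (h : IsJointReduction I J a b)
    (hI : IsJointReductionZero I I a a') (hdim : 1 < ringKrullDim A)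
    (hmI : ∃ n, maximalIdeal A ^ n ≤ I) (hJ : J ≠ ⊥) (hb : b ≠ 0)
    (hIcl : ∀ n, IdealIsIntegrallyClosed (I ^ n)) (hJcl : IdealIsIntegrallyClosed J) :
    IsJointReductionZero I J a b :=
  ⟨h.left_mem, h.right_mem, fun x hx ↦
    h.mem_of_span_mul_le hI hdim hmI hJ hb hIcl hJcl top_ne_bot (by simpa using hx)⟩

lemma idealIsIntegrallyClosed_pow_mul_pow (h : IsJointReduction I J a b)
    (hI : IsJointReductionZero I I a a') (hdim : 1 < ringKrullDim A)
    (hmI : ∃ n, maximalIdeal A ^ n ≤ I) (hJ : J ≠ ⊥) (hb : b ≠ 0)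
    (hIcl : ∀ n, IdealIsIntegrallyClosed (I ^ n)) (hJcl : ∀ n, IdealIsIntegrallyClosed (J ^ n))
    (m n : ℕ) : IdealIsIntegrallyClosed (I ^ m * J ^ n) := by
  obtain _ | m := m
  · simpa using hJcl n
  obtain _ | n := n
  · simpa using hIcl (m + 1)
  have h' := h.pow_succ m n
  have hmI' : ∃ k, maximalIdeal A ^ k ≤ I ^ (m + 1) := by
    obtain ⟨k, hk⟩ := hmI
    exact ⟨k * (m + 1), by simpa only [pow_mul] using Ideal.pow_right_mono hk (m + 1)⟩
  intro x hx
  have hmem := h'.mem_of_isIntegralOverIdeal_mul (hI.pow (m + 1) (m + 1)) hdim hmI'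
    (pow_ne_zero _ hJ) (pow_ne_zero _ hb) (fun k ↦ by simpa only [← pow_mul] using hIcl _)
    (hJcl _) hx
  refine (sup_le ?_ ?_ : Ideal.span {a ^ (m + 1)} * J ^ (n + 1) ⊔
    Ideal.span {b ^ (n + 1)} * I ^ (m + 1) ≤ _) hmem
  · exact Ideal.mul_mono_left ((Ideal.span_singleton_le_iff_mem _).mpr h'.left_mem)
  · rw [mul_comm]
    exact Ideal.mul_mono_right ((Ideal.span_singleton_le_iff_mem _).mpr h'.right_mem)

end IsJointReduction

theorem isCMNormalDomain_biRees_of_hasGenericReductionNumberLEOne [Infinite (ResidueField A)]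
    (hdim : ringKrullDim A = 2) (hmI : ∃ n, maximalIdeal A ^ n ≤ I)
    (hmJ : ∃ n, maximalIdeal A ^ n ≤ J) (hIcl : ∀ n, IdealIsIntegrallyClosed (I ^ n))
    (hJcl : ∀ n, IdealIsIntegrallyClosed (J ^ n)) (hI : HasGenericReductionNumberLEOne I)
    (hJ : HasGenericReductionNumberLEOne J) : IsCMNormalDomain (biRees I J) := by
  have hdim' : 1 < ringKrullDim A := hdim ▸ by norm_num
  have hI0 : I ≠ ⊥ := ne_bot_of_maximalIdeal_pow_le hdim' hmI
  have hJ0 : J ≠ ⊥ := ne_bot_of_maximalIdeal_pow_le hdim' hmJ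
  obtain ⟨a, -, ⟨hab, haa'⟩, ha⟩ := (((generically_isJointReduction hdim I J).and hI).and
    (generically_ne_zero hI0)).exists_mem
  obtain ⟨b, -, ⟨hab, hbb'⟩, hb⟩ := ((hab.and hJ).and (generically_ne_zero hJ0)).exists_mem
  obtain ⟨a', -, haa'⟩ := haa'.exists_mem
  obtain ⟨b', -, hbb'⟩ := hbb'.exists_mem
  have hzero := hab.isJointReductionZero_of_idealIsIntegrallyClosed haa' hdim' hmI hJ0 hb hIcl
    (by simpa using hJcl 1)
  exact hzero.isCMNormalDomain_biRees haa' hbb'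
    (hab.idealIsIntegrallyClosed_pow_mul_pow haa' hdim' hmI hJ0 hb hIcl hJcl) hdim hmI hmJ ha hb

end IntegralClosureOfProduct

section CMNormalDomain

open Polynomial

variable {R : Type*} [CommRing R]

lemma isIntegrallyClosed_of_polynomial [IsDomain R] [IsIntegrallyClosed R[X]] :
    IsIntegrallyClosed R := by
  have : IsIntegrallyClosedIn R R[X] := by
    refine isIntegrallyClosedIn_iff.mpr ⟨C_injective, fun {f} hf ↦ ⟨f.coeff 0, ?_⟩⟩
    refine (eq_C_of_natDegree_eq_zero (by_contra fun hdeg ↦ ?_)).symm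
    have hlead : f.leadingCoeff ≠ 0 := by
      rintro h
      exact hdeg (by simp [leadingCoeff_eq_zero.mp h])
    exact f.transcendental hdeg (mem_nonZeroDivisors_of_ne_zero hlead) hf.isAlgebraic
  exact .of_isIntegrallyClosed_of_isIntegrallyClosedIn R R[X]

lemma isCMNormalDomain_polynomial_iff : IsCMNormalDomain R[X] ↔ IsCMNormalDomain R := by
  refine ⟨fun ⟨⟨_, hcm⟩, _, _⟩ ↦ ?_, fun ⟨⟨_, hcm⟩, _, _⟩ ↦
    ⟨⟨inferInstance, fun P _ ↦ IsCohenMacaulayAt.polynomial (hcm (P.comap C) inferInstance) P rfl⟩,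
      inferInstance, inferInstance⟩⟩
  have hnoeth : IsNoetherianRing R :=
    isNoetherianRing_of_surjective R[X] R constantCoeff fun r ↦ ⟨C r, by simp⟩
  have : IsDomain R := C_injective.isDomain C
  exact ⟨⟨hnoeth, fun p _ ↦ IsCohenMacaulayAt.of_map_C (hcm (p.map C) inferInstance)⟩,
    inferInstance, isIntegrallyClosed_of_polynomial⟩

lemma IsCMNormalDomain.of_equiv {S : Type*} [CommRing S] (h : IsCMNormalDomain R) (e : R ≃+* S) :
    IsCMNormalDomain S := by
  obtain ⟨⟨_, hcm⟩, _, _⟩ := h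
  refine ⟨⟨isNoetherianRing_of_ringEquiv R e, fun P _ ↦ ?_⟩, e.symm.toMulEquiv.isDomain,
    .of_equiv e⟩
  refine (isCohenMacaulayAt_comap_iff (φ := (e : R →+* S)) (u := 1) e.injective
    (fun s ↦ ⟨0, e.symm s, by simp⟩) ?_ rfl).mp (hcm (P.comap (e : R →+* S)) inferInstance)
  rw [map_one]
  exact P.one_notMem

end CMNormalDomain

section Comparison

open MvPolynomial

universe u

variable {A : Type u} [CommRing A] (I J : Ideal A)

lemma map_renameEquiv_swap_biRees :
    (biRees I J).map (renameEquiv A (Equiv.swap (0 : Fin 2) 1)).toAlgHom = biRees J I := by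
  unfold biRees multiReesAlgebra
  rw [AlgHom.map_adjoin]
  congr 1
  ext f
  simp [Set.image_iUnion, Fin.exists_fin_two, or_comm]

/-- The isomorphism `A[It₁, Jt₂] ≃ A[Jt₁, It₂]` exchanging the two variables. -/
noncomputable def biReesComm : biRees I J ≃ₐ[A] biRees J I :=
  ((renameEquiv A (Equiv.swap (0 : Fin 2) 1)).subalgebraMap (biRees I J)).trans
    (Subalgebra.equivOfEq _ _ (map_renameEquiv_swap_biRees I J))

/-- The map `A[It][X] → A[t₁, t₂]` given by `t ↦ t₁` and `X ↦ t₂`. -/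
noncomputable def reesPolynomialHom : Polynomial (reesAlgebra I) →ₐ[A] MvPolynomial (Fin 2) A :=
  Polynomial.aevalTower ((Polynomial.aeval (X 0)).comp (reesAlgebra I).val) (X 1)

variable {I} in
lemma reesPolynomialHom_monomial (n : ℕ) (f : reesAlgebra I) :
    reesPolynomialHom I (Polynomial.monomial n f) =
      Polynomial.aeval (X 0) (f : Polynomial A) * X 1 ^ n := by
  simp [reesPolynomialHom, ← Polynomial.C_mul_X_pow_eq_monomial]

lemma bicoeff_aeval_X_mul_X_pow (f : Polynomial A) (i m n : ℕ) :
    bicoeff (Polynomial.aeval (X 0) f * X 1 ^ i) m n = if i = n then f.coeff m else 0 := by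
  induction f using Polynomial.induction_on' with
  | add f g hf hg =>
    rw [map_add, add_mul, bicoeff_add, hf, hg, Polynomial.coeff_add]
    split_ifs <;> simp
  | monomial j a =>
    have hja : Polynomial.aeval (X 0) (Polynomial.monomial j a) * X 1 ^ i = bimonomial j i a := by
      rw [Polynomial.aeval_monomial, bimonomial, monomial_eq, Finsupp.prod_fintype _ _ (by simp)]
      simp [mul_assoc]
    rw [hja, bicoeff_bimonomial, Polynomial.coeff_monomial]
    split_ifs <;> simp_all

variable {I} in
lemma bicoeff_reesPolynomialHom (p : Polynomial (reesAlgebra I)) (m n : ℕ) :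
    bicoeff (reesPolynomialHom I p) m n = (p.coeff n : Polynomial A).coeff m := by
  induction p using Polynomial.induction_on' with
  | add p q hp hq => rw [map_add, bicoeff_add, hp, hq, Polynomial.coeff_add]; simp
  | monomial i f =>
    rw [reesPolynomialHom_monomial, bicoeff_aeval_X_mul_X_pow, Polynomial.coeff_monomial]
    split_ifs <;> simp

lemma reesPolynomialHom_injective : Function.Injective (reesPolynomialHom I) := by
  intro p q h
  ext n m
  rw [← bicoeff_reesPolynomialHom, ← bicoeff_reesPolynomialHom, h]

lemma range_reesPolynomialHom : (reesPolynomialHom I).range = biRees I ⊤ := by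
  refine le_antisymm ?_ (Algebra.adjoin_le (Set.iUnion_subset ?_))
  · rintro _ ⟨p, rfl⟩
    refine mem_biRees.mpr fun m n ↦ ?_
    rw [Ideal.top_pow, Ideal.mul_top]
    exact (bicoeff_reesPolynomialHom p m n).symm ▸ (mem_reesAlgebra_iff I _).mp (p.coeff n).2 m
  · simp only [Fin.forall_fin_two, Set.image_subset_iff]
    refine ⟨fun a ha ↦ ?_, fun a _ ↦ ?_⟩
    · let s : reesAlgebra I :=
        ⟨Polynomial.monomial 1 a, by simpa [reesAlgebra.monomial_mem] using ha⟩
      exact ⟨Polynomial.C s, by simp [reesPolynomialHom, s, Polynomial.aeval_monomial]⟩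
    · exact ⟨Polynomial.C (algebraMap A _ a) * Polynomial.X, by simp [reesPolynomialHom]⟩

/-- The isomorphism between `A[It][X]` and `A[It₁, At₂]`. -/
noncomputable def reesPolynomialEquiv : Polynomial (reesAlgebra I) ≃ₐ[A] biRees I ⊤ :=
  (AlgEquiv.ofInjective _ (reesPolynomialHom_injective I)).trans
    (Subalgebra.equivOfEq _ _ (range_reesPolynomialHom I))

lemma isCMNormalDomain_reesAlgebra_iff_biRees_top :
    IsCMNormalDomain (reesAlgebra I) ↔ IsCMNormalDomain (biRees I ⊤) := by
  rw [← isCMNormalDomain_polynomial_iff]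
  exact ⟨fun h ↦ h.of_equiv (reesPolynomialEquiv I).toRingEquiv,
    fun h ↦ h.of_equiv (reesPolynomialEquiv I).symm.toRingEquiv⟩

end Comparison

section Main

open IsLocalRing

universe u

variable {A : Type u} [CommRing A] [IsDomain A] [IsNoetherianRing A] [IsLocalRing A]
  [Infinite (ResidueField A)] {I J : Ideal A}

lemma IsCMNormalDomain.idealIsIntegrallyClosed_pow_and_hasGenericReductionNumberLEOne
    (h : IsCMNormalDomain (biRees I J)) (hdim : ringKrullDim A = 2)
    (hI : ∃ n, maximalIdeal A ^ n ≤ I) (hJ : ∃ n, maximalIdeal A ^ n ≤ J) :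
    (∀ n, IdealIsIntegrallyClosed (I ^ n)) ∧ HasGenericReductionNumberLEOne I := by
  obtain ⟨⟨_, hcm⟩, _, _⟩ := h
  have hdim' : 1 < ringKrullDim A := hdim ▸ by norm_num
  refine ⟨fun n ↦ ?_, hasGenericReductionNumberLEOne_of_isCohenMacaulayAt hdim hI hJ
    (hcm (gradedMaximalIdeal I J) inferInstance)⟩
  simpa using idealIsIntegrallyClosed_pow_mul_pow (ne_bot_of_maximalIdeal_pow_le hdim' hI)
    (ne_bot_of_maximalIdeal_pow_le hdim' hJ) n 0

variable [IsIntegrallyClosed A]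

theorem isCMNormalDomain_biRees_iff (hdim : ringKrullDim A = 2)
    (hI : ∃ n, maximalIdeal A ^ n ≤ I) (hJ : ∃ n, maximalIdeal A ^ n ≤ J) :
    IsCMNormalDomain (biRees I J) ↔
      ((∀ n, IdealIsIntegrallyClosed (I ^ n)) ∧ HasGenericReductionNumberLEOne I) ∧
        ((∀ n, IdealIsIntegrallyClosed (J ^ n)) ∧ HasGenericReductionNumberLEOne J) := by
  refine ⟨fun h ↦ ⟨?_, ?_⟩, fun ⟨hI', hJ'⟩ ↦
    isCMNormalDomain_biRees_of_hasGenericReductionNumberLEOne hdim hI hJ hI'.1 hJ'.1 hI'.2 hJ'.2⟩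
  · exact h.idealIsIntegrallyClosed_pow_and_hasGenericReductionNumberLEOne hdim hI hJ
  · exact (h.of_equiv (biReesComm I J).toRingEquiv
      ).idealIsIntegrallyClosed_pow_and_hasGenericReductionNumberLEOne hdim hJ hI

theorem isCMNormalDomain_reesAlgebra_iff (hdim : ringKrullDim A = 2)
    (hI : ∃ n, maximalIdeal A ^ n ≤ I) :
    IsCMNormalDomain (reesAlgebra I) ↔
      (∀ n, IdealIsIntegrallyClosed (I ^ n)) ∧ HasGenericReductionNumberLEOne I := by
  rw [isCMNormalDomain_reesAlgebra_iff_biRees_top,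
    isCMNormalDomain_biRees_iff hdim hI ⟨0, le_top⟩]
  refine and_iff_left ⟨fun n ↦ ?_, hasGenericReductionNumberLEOne_top⟩
  rw [Ideal.top_pow]
  exact idealIsIntegrallyClosed_top

end Main

theorem stmt7_general (A : Type*) [CommRing A] [IsDomain A] [IsNoetherianRing A] [IsLocalRing A]
    [Infinite (IsLocalRing.ResidueField A)] [IsIntegrallyClosed A]
    (hdim : ringKrullDim A = 2)
    (I : Ideal A) (hIprim : ∃ n : ℕ, IsLocalRing.maximalIdeal A ^ n ≤ I)
    (J : Ideal A) (hJprim : ∃ n : ℕ, IsLocalRing.maximalIdeal A ^ n ≤ J) :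
    IsCMNormalDomain (multiReesAlgebra ![I, J]) ↔
      IsCMNormalDomain (reesAlgebra I) ∧ IsCMNormalDomain (reesAlgebra J) := by
  rw [isCMNormalDomain_reesAlgebra_iff hdim hIprim, isCMNormalDomain_reesAlgebra_iff hdim hJprim]
  exact isCMNormalDomain_biRees_iff hdim hIprim hJprim

/-- For `𝔪`-primary ideals `I`, `J` of a two-dimensional excellent
normal local domain over an algebraically closed field, the multi-Rees algebra
`A[It₁, Jt₂]` is a Cohen–Macaulay normal domain iff both `A[It]` and `A[Jt]` are. -/
theorem stmt7 (k : Type*) [Field k] [IsAlgClosed k]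
    (A : Type*) [CommRing A] [IsDomain A] [IsNoetherianRing A] [IsLocalRing A]
    [Algebra k A] [IsIntegrallyClosed A]
    (hdim : ringKrullDim A = 2)
    (I : Ideal A) (hIprim : ∃ n : ℕ, IsLocalRing.maximalIdeal A ^ n ≤ I)
    (J : Ideal A) (hJprim : ∃ n : ℕ, IsLocalRing.maximalIdeal A ^ n ≤ J) :
    IsCMNormalDomain (multiReesAlgebra ![I, J]) ↔
      IsCMNormalDomain (reesAlgebra I) ∧ IsCMNormalDomain (reesAlgebra J) := by
  have : Infinite (IsLocalRing.ResidueField A) :=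
    .of_injective _ (algebraMap k (IsLocalRing.ResidueField A)).injective
  exact stmt7_general A hdim I hIprim J hJprim
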